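/- arXiv:1403.5673 — 6 statements merged into one kernel-verified Lean document; each statement's English description precedes it below -/
import Mathlib

section
/- For every n ≥ 1, every commutative ring A, and every choice of 2n matrices x_1, …, x_{2n} ∈ M_n(A), the standard polynomial evaluates to zero: S_{2n}(x_1, …, x_{2n}) = Σ_{σ ∈ S_{2n}} sgn(σ) · x_{σ(1)} x_{σ(2)} ⋯ x_{σ(2n)} = 0. (Theorem of Amitsur–Levitzki.) -/
open Polynomial in
theorem al_derivative_det {n : ℕ} {R : Type*} [CommRing R] (M : Matrix (Fin n) (Fin n) R[X]) :
    derivative M.det = ∑ i, (M.updateCol i (fun j => derivative (M j i))).det := by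
  simp only [Matrix.det_apply, map_sum]
  rw [Finset.sum_comm]
  refine Finset.sum_congr rfl fun σ _ => ?_
  rw [Units.smul_def, derivative_smul, derivative_prod_finset, Finset.smul_sum]
  refine Finset.sum_congr rfl fun i _ => ?_
  rw [Units.smul_def]
  congr 1
  rw [← Finset.prod_erase_mul _ _ (Finset.mem_univ i)]
  congr 1
  · refine Finset.prod_congr rfl fun j hj => ?_
    rw [Matrix.updateCol_ne (Finset.ne_of_mem_erase hj)]
  · simp

open Polynomial in
theorem al_derivative_charpoly {n : ℕ} {R : Type*} [CommRing R] (M : Matrix (Fin n) (Fin n) R) :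
    derivative M.charpoly = M.charmatrix.adjugate.trace := by
  rw [Matrix.charpoly, al_derivative_det, Matrix.trace]
  refine Finset.sum_congr rfl fun i _ => ?_
  have h1 : M.charmatrix.adjugate i i = M.charmatrix.transpose.adjugate i i := by
    rw [← Matrix.adjugate_transpose, Matrix.transpose_apply]
  rw [Matrix.diag_apply, h1, Matrix.adjugate_apply, Matrix.updateRow_transpose,
    Matrix.det_transpose]
  congr 2
  ext1 j
  by_cases hj : j = i
  · subst hj
    simp [Matrix.charmatrix_apply_eq]
  · simp [hj]

open Polynomial in
/-- A matrix whose powers have zero traces is nilpotent of index at most its size. -/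
theorem al_pow_eq_zero {n : ℕ} (hn : 1 ≤ n) {R : Type*} [CommRing R]
    (htf : ∀ (k : ℕ) (a : R), k ≠ 0 → (k : R) * a = 0 → a = 0)
    (M : Matrix (Fin n) (Fin n) R) (h : ∀ k, (M ^ (k + 1)).trace = 0) : M ^ n = 0 := by
  nontriviality R
  set p := M.charpoly with hp
  set B := matPolyEquiv M.charmatrix.adjugate with hB
  have hmul : (X - C M) * B = p.map (algebraMap R (Matrix (Fin n) (Fin n) R)) := by
    rw [← Matrix.matPolyEquiv_charmatrix, hB, ← map_mul, Matrix.mul_adjugate]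
    rw [← matPolyEquiv_smul_one]
    rfl
  have htr : ∀ k, (B.coeff k).trace = ((k + 1 : ℕ) : R) * p.coeff (k + 1) := by
    intro k
    have := congrArg (fun q => q.coeff k) (al_derivative_charpoly M)
    simp only [coeff_derivative, Matrix.trace, finsetSum_coeff, Matrix.diag_apply] at this
    simp only [Matrix.trace, Matrix.diag_apply, hB, matPolyEquiv_coeff_apply]
    rw [← this]
    push_cast
    ring
  have hrec : ∀ k, B.coeff k = M * B.coeff (k + 1) + algebraMap R _ (p.coeff (k + 1)) := by
    intro k
    have := congrArg (fun q => q.coeff (k + 1)) hmul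
    simp only [sub_mul, coeff_sub, coeff_X_mul, coeff_C_mul, coeff_map] at this
    rw [← this]; abel
  have h0 : M * B.coeff 0 = - algebraMap R _ (p.coeff 0) := by
    have := congrArg (fun q => q.coeff 0) hmul
    simp only [sub_mul, coeff_sub, coeff_C_mul, coeff_map, mul_coeff_zero, coeff_X_zero,
      zero_mul, zero_sub] at this
    rw [← this]; simp
  have hdeg : p.natDegree = n := by simp [hp]
  have htra : ∀ a : R, (algebraMap R (Matrix (Fin n) (Fin n) R) a).trace = (n : R) * a := by
    intro a
    simp [Matrix.algebraMap_eq_diagonal, Matrix.trace]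
  have hbig : ∀ m k, n ≤ k → B.coeff k = M ^ m * B.coeff (k + m) := by
    intro m
    induction m with
    | zero => intro k _; simp
    | succ m ih =>
      intro k hk
      rw [ih k hk, hrec (k + m), coeff_eq_zero_of_natDegree_lt (p := p) (by omega), map_zero, add_zero,
        ← mul_assoc, ← pow_succ]
      rfl
  have hBn : B.coeff n = 0 := by
    rw [hbig (B.natDegree + 1) n le_rfl, coeff_eq_zero_of_natDegree_lt (by omega), mul_zero]
  have key : ∀ j, j + 1 ≤ n → B.coeff (n - 1 - j) = M ^ j := by
    intro j
    induction j with
    | zero =>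
      intro _
      have hm : p.coeff n = 1 := by
        have := (Matrix.charpoly_monic M).coeff_natDegree
        rwa [← hp, hdeg] at this
      rw [hrec, show n - 1 - 0 + 1 = n by omega, hBn, hm]; simp
    | succ j ih =>
      intro hj
      have h1 := hrec (n - 1 - (j + 1))
      have h2 := htr (n - 1 - (j + 1))
      rw [show n - 1 - (j + 1) + 1 = n - 1 - j by omega, ih (by omega), ← pow_succ'] at h1
      rw [h1, Matrix.trace_add, h, zero_add, htra,
        show n - 1 - (j + 1) + 1 = n - 1 - j by omega] at h2
      have h3 : p.coeff (n - 1 - j) = 0 := by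
        apply htf (j + 1) _ (by omega)
        have : (n : R) = ((n - 1 - j : ℕ) : R) + ((j + 1 : ℕ) : R) := by
          rw [← Nat.cast_add]; congr 1; omega
        rw [this] at h2
        linear_combination h2
      rw [h1, h3, map_zero, add_zero]
  have h1 := key (n - 1) (by omega)
  rw [Nat.sub_self] at h1
  rw [h1, ← pow_succ', Nat.sub_add_cancel hn] at h0
  have h2 := congrArg Matrix.trace h0
  have h3 := h (n - 1)
  rw [Nat.sub_add_cancel hn] at h3
  rw [h3, Matrix.trace_neg, htra] at h2
  have h4 : p.coeff 0 = 0 := htf n _ (by omega) (neg_eq_zero.mp h2.symm)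
  rw [h0, h4]; simp

section
variable {K : Type*} [Field K] {V : Type*} [AddCommGroup V] [Module K V]

open ExteriorAlgebra in
theorem al_even_central (u v : V) :
    ι K u * ι K v ∈ Subalgebra.center K (ExteriorAlgebra K V) := by
  have sw : ∀ a b : V, ι K a * ι K b = - (ι K b * ι K a) := fun a b =>
    eq_neg_of_add_eq_zero_left (ι_add_mul_swap a b)
  rw [Subalgebra.mem_center_iff]
  intro b
  induction b using ExteriorAlgebra.induction with
  | algebraMap r => exact Algebra.commutes r _
  | ι w =>
    rw [← mul_assoc, sw w u, neg_mul, mul_assoc, sw w v, mul_neg, neg_neg, mul_assoc]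
  | mul a b ha hb => rw [mul_assoc, hb, ← mul_assoc, ha, mul_assoc]
  | add a b ha hb => rw [add_mul, mul_add, ha, hb]

/-- Rosset's argument: an `n × n` matrix of degree one elements of an exterior algebra satisfies
`X ^ (2 * n) = 0`. -/
theorem al_odd_pow [CharZero K] {n : ℕ} (hn : 1 ≤ n) (m : Matrix (Fin n) (Fin n) V) :
    (m.map (ExteriorAlgebra.ι K)) ^ (2 * n) = 0 := by
  set X : Matrix (Fin n) (Fin n) (ExteriorAlgebra K V) := m.map (ExteriorAlgebra.ι K) with hX
  let Z := Subalgebra.center K (ExteriorAlgebra K V)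
  have tf : ∀ (k : ℕ) (a : ExteriorAlgebra K V), k ≠ 0 → (k : ExteriorAlgebra K V) * a = 0 →
      a = 0 := by
    intro k a hk h
    have h' : (k : K) • a = 0 := by
      rw [Algebra.smul_def, map_natCast, h]
    exact (smul_eq_zero.mp h').resolve_left (by exact_mod_cast hk)
  have hmem : ∀ a b, (X ^ 2) a b ∈ Z := by
    intro a b
    rw [pow_two, Matrix.mul_apply]
    exact Subalgebra.sum_mem _ fun c _ => al_even_central _ _
  let Y : Matrix (Fin n) (Fin n) Z := Matrix.of fun a b => ⟨(X ^ 2) a b, hmem a b⟩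
  have hY : Z.val.mapMatrix Y = X ^ 2 := by
    ext a b; rfl
  have hYk : ∀ k, Z.val.mapMatrix (Y ^ k) = X ^ (2 * k) := by
    intro k; rw [map_pow, hY, pow_mul]
  have hYn : Y ^ n = 0 := by
    apply al_pow_eq_zero hn
    · intro k a hk h
      apply Subtype.ext
      apply tf k _ hk
      have := congrArg Z.val h
      simpa using this
    · intro k
      apply Subtype.ext
      apply tf 2 _ two_ne_zero
      have e1 : ((Y ^ (k + 1)).trace : ExteriorAlgebra K V) = (X ^ (2 * (k + 1))).trace := by
        rw [← hYk]
        simp [Matrix.trace]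
      have e2 : X ^ (2 * (k + 1)) = X * (X * X ^ (2 * k)) := by
        rw [← pow_succ', ← pow_succ']; rfl
      have e3 : X ^ (2 * (k + 1)) = (X * X ^ (2 * k)) * X := by
        rw [← pow_succ', ← pow_succ]; rfl
      have hc : ∀ a b (w : ExteriorAlgebra K V),
          (X ^ (2 * k)) a b * w = w * (X ^ (2 * k)) a b := by
        intro a b w
        rw [← hYk]
        exact ((Subalgebra.mem_center_iff.mp ((Y ^ k) a b).2) w).symm
      have t1 : (X ^ (2 * (k + 1))).trace =
          ∑ a, ∑ b, ∑ c, X a b * X b c * (X ^ (2 * k)) c a := by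
        rw [e2]
        simp only [Matrix.trace, Matrix.diag_apply, Matrix.mul_apply, Finset.mul_sum, mul_assoc]
      have t2 : (X ^ (2 * (k + 1))).trace =
          ∑ a, ∑ b, ∑ c, X b c * X a b * (X ^ (2 * k)) c a := by
        rw [e3, Finset.sum_comm]
        simp only [Matrix.trace, Matrix.diag_apply, Matrix.mul_apply, Finset.sum_mul]
        refine Finset.sum_congr rfl fun b _ => Finset.sum_congr rfl fun a _ =>
          Finset.sum_congr rfl fun c _ => ?_
        rw [mul_assoc, hc, mul_assoc]
      have : (X ^ (2 * (k + 1))).trace + (X ^ (2 * (k + 1))).trace = 0 := by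
        nth_rewrite 1 [t1]
        rw [t2]
        simp only [← Finset.sum_add_distrib, ← add_mul]
        refine Finset.sum_eq_zero fun a _ => Finset.sum_eq_zero fun b _ =>
          Finset.sum_eq_zero fun c _ => ?_
        rw [hX, Matrix.map_apply, Matrix.map_apply, ExteriorAlgebra.ι_add_mul_swap, zero_mul]
      rw [e1, Nat.cast_ofNat, two_mul]
      exact this
  rw [← hYk, hYn, map_zero]

end

theorem al_sum_pow {ι R : Type*} [Fintype ι] [Ring R] (y : ι → R) (m : ℕ) :
    (∑ i, y i) ^ m = ∑ f : Fin m → ι, (List.ofFn fun i => y (f i)).prod := by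
  induction m with
  | zero => simp
  | succ m ih =>
    rw [pow_succ', ih, ← (Fin.consEquiv fun _ => ι).sum_comp, Fintype.sum_prod_type,
      Finset.sum_mul_sum]
    simp [Fin.consEquiv, List.ofFn_succ]

theorem al_list_prod {n m : ℕ} {K L : Type*} [Field K] [Ring L] [Algebra K L]
    (e : Fin m → L) (x : Fin m → Matrix (Fin n) (Fin n) K) (a b : Fin n) :
    (List.ofFn fun i => (Matrix.of fun a b => x i a b • e i : Matrix (Fin n) (Fin n) L)).prod a b
      = (List.ofFn x).prod a b • (List.ofFn e).prod := by
  induction m generalizing a b with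
  | zero => simp [Matrix.one_apply]
  | succ m ih =>
    simp only [List.ofFn_succ, List.prod_cons, Matrix.mul_apply, Finset.sum_smul]
    refine Finset.sum_congr rfl fun c _ => ?_
    rw [ih (fun i => e i.succ) (fun i => x i.succ)]
    simp [smul_smul, mul_comm]

theorem al_field (n : ℕ) (hn : 1 ≤ n) (K : Type*) [Field K] [CharZero K]
    (x : Fin (2 * n) → Matrix (Fin n) (Fin n) K) :
    ∑ σ : Equiv.Perm (Fin (2 * n)),
      ((Equiv.Perm.sign σ : ℤˣ) : ℤ) • (List.ofFn fun i : Fin (2 * n) => x (σ i)).prod = 0 := by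
  let V := Fin (2 * n) → K
  let e : Fin (2 * n) → V := fun i => Pi.single i 1
  let m : Matrix (Fin n) (Fin n) V := Matrix.of fun a b => ∑ i, x i a b • e i
  have h := al_odd_pow (K := K) hn m
  have hX : m.map (ExteriorAlgebra.ι K) = ∑ i, (Matrix.of fun a b =>
      x i a b • ExteriorAlgebra.ι K (e i) : Matrix (Fin n) (Fin n) (ExteriorAlgebra K V)) := by
    ext a b
    simp [m, Matrix.sum_apply]
  rw [hX, al_sum_pow] at h
  let F : ∀ i, V [⋀^Fin i]→ₗ[K] K := fun i =>
    if hi : i = 2 * n then (Matrix.detRowAlternating (n := Fin (2 * n)) (R := K)).domDomCongr (finCongr hi.symm)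
    else 0
  let φ := ExteriorAlgebra.liftAlternating F
  have hφ : ∀ f : Fin (2 * n) → Fin (2 * n),
      φ (List.ofFn fun i => ExteriorAlgebra.ι K (e (f i))).prod
        = Matrix.det (Matrix.of fun i => e (f i)) := by
    intro f
    have := ExteriorAlgebra.liftAlternating_apply_ιMulti F (fun i => e (f i))
    rw [ExteriorAlgebra.ιMulti_apply] at this
    rw [this]
    simp only [F, dif_pos]
    rfl
  ext a b
  have h1 := congrArg φ (congrFun (congrFun h a) b)
  rw [Matrix.sum_apply, map_sum] at h1
  have h2 : ∀ f : Fin (2 * n) → Fin (2 * n),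
      φ ((List.ofFn fun i => (Matrix.of fun a b => x (f i) a b • ExteriorAlgebra.ι K (e (f i)) :
        Matrix (Fin n) (Fin n) (ExteriorAlgebra K V))).prod a b)
      = (List.ofFn fun i => x (f i)).prod a b * Matrix.det (Matrix.of fun i => e (f i)) := by
    intro f
    rw [al_list_prod (fun i => ExteriorAlgebra.ι K (e (f i))) (fun i => x (f i)), map_smul, hφ,
      smul_eq_mul]
  simp only [h2] at h1
  rw [Matrix.zero_apply, map_zero] at h1
  rw [Matrix.sum_apply, Matrix.zero_apply, ← h1]
  refine Finset.sum_of_injOn (fun σ : Equiv.Perm (Fin (2 * n)) => (σ : Fin (2 * n) → Fin (2 * n)))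
    (fun σ _ τ _ hst => DFunLike.coe_injective hst) (fun _ _ => Finset.mem_coe.mpr (Finset.mem_univ _)) ?_ ?_
  · intro f _ hf
    have : ¬ Function.Injective f := by
      intro hi
      apply hf
      exact ⟨Equiv.ofBijective f (Finite.injective_iff_bijective.mp hi), by simp, rfl⟩
    simp only [Function.Injective, not_forall] at this
    obtain ⟨i, j, hij, hne⟩ := this
    rw [Matrix.det_zero_of_row_eq hne (show e (f i) = e (f j) by rw [hij]), mul_zero]
  · intro σ _
    have : (Matrix.of fun i => e (σ i)) = (1 : Matrix (Fin (2 * n)) (Fin (2 * n)) K).submatrix σ id := by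
      ext i j
      simp [e, Matrix.one_apply, Pi.single_apply, eq_comm]
    rw [this, Matrix.det_permute]
    simp [mul_comm]

theorem al_map (n : ℕ) {A B : Type*} [CommRing A] [CommRing B] (g : A →+* B)
    (x : Fin (2 * n) → Matrix (Fin n) (Fin n) A) :
    g.mapMatrix (∑ σ : Equiv.Perm (Fin (2 * n)),
      ((Equiv.Perm.sign σ : ℤˣ) : ℤ) • (List.ofFn fun i : Fin (2 * n) => x (σ i)).prod) =
    ∑ σ : Equiv.Perm (Fin (2 * n)),
      ((Equiv.Perm.sign σ : ℤˣ) : ℤ) •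
        (List.ofFn fun i : Fin (2 * n) => g.mapMatrix (x (σ i))).prod := by
  rw [map_sum]
  refine Finset.sum_congr rfl fun σ _ => ?_
  rw [map_zsmul, map_list_prod, List.map_ofFn]
  rfl

/-- **Amitsur–Levitzki theorem.** For every `n ≥ 1`, every commutative ring `A`, and every
choice of `2n` matrices `x 1, …, x (2n)` in `Mₙ(A)`, the standard polynomial of degree `2n`
evaluates to zero: `∑ σ ∈ S_{2n}, sgn σ • x_{σ 1} ⋯ x_{σ (2n)} = 0`. -/
theorem amitsur_levitzki (n : ℕ) (hn : 1 ≤ n) (A : Type*) [CommRing A]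
    (x : Fin (2 * n) → Matrix (Fin n) (Fin n) A) :
    ∑ σ : Equiv.Perm (Fin (2 * n)),
      ((Equiv.Perm.sign σ : ℤˣ) : ℤ) • (List.ofFn fun i : Fin (2 * n) => x (σ i)).prod = 0 := by
  let P := MvPolynomial (Fin (2 * n) × Fin n × Fin n) ℤ
  let y : Fin (2 * n) → Matrix (Fin n) (Fin n) P := fun i => Matrix.of fun a b =>
    MvPolynomial.X (i, a, b)
  let g : P →+* A := (MvPolynomial.aeval fun t : Fin (2 * n) × Fin n × Fin n =>
    x t.1 t.2.1 t.2.2 : P →ₐ[ℤ] A).toRingHom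
  have hg : ∀ i, g.mapMatrix (y i) = x i := by
    intro i
    ext a b
    exact MvPolynomial.aeval_X _ _
  have hinj : Function.Injective (algebraMap P (FractionRing P)) := IsFractionRing.injective _ _
  have : CharZero (FractionRing P) := charZero_of_injective_algebraMap hinj
  have hy : ∑ σ : Equiv.Perm (Fin (2 * n)),
      ((Equiv.Perm.sign σ : ℤˣ) : ℤ) • (List.ofFn fun i : Fin (2 * n) => y (σ i)).prod = 0 := by
    apply Matrix.map_injective hinj
    have := al_map n (algebraMap P (FractionRing P)) y
    rw [al_field n hn (FractionRing P) (fun i => (algebraMap P (FractionRing P)).mapMatrix (y i))]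
      at this
    refine Eq.trans this ?_
    ext a b
    simp
  have := al_map n g y
  rw [hy, map_zero] at this
  simp only [hg] at this
  exact this.symm
end

section
/- For every field F and every n ≥ 1, there exist m ≥ 1 and an element f of the free associative algebra F⟨x_1, …, x_m⟩ with zero constant term such that: (1) for every m-tuple of matrices a_1, …, a_m ∈ M_n(F), the evaluation f(a_1, …, a_m) is a scalar matrix (a scalar multiple of the identity matrix), and (2) f is not a polynomial identity of M_n(F), i.e. there exist a_1, …, a_m ∈ M_n(F) with f(a_1, …, a_m) ≠ 0. (Existence of central polynomials for matrices, Formanek–Razmyslov.) -/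
open Polynomial in
theorem finite_case (F : Type*) [Field F] [Finite F] (n : ℕ) (hn : 2 ≤ n) :
    ∃ f : F[X], f.coeff 0 = 0 ∧ (∀ a : Matrix (Fin n) (Fin n) F, ∃ c : F, aeval a f = c • 1) ∧
      ∃ a : Matrix (Fin n) (Fin n) F, aeval a f ≠ 0 := by
  classical
  have : NeZero n := ⟨by omega⟩
  have := Fintype.ofFinite F
  obtain ⟨p, hp⟩ := CharP.exists F
  have : Fact p.Prime := ⟨CharP.char_is_prime F p⟩
  let E := FiniteField.Extension F p n
  let pb := Field.powerBasisOfFiniteOfSeparable F E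
  have hdim : pb.dim = n := by
    rw [← pb.finrank, FiniteField.finrank_extension]
  obtain ⟨a0, ha0⟩ : ∃ a : Matrix (Fin n) (Fin n) F, Irreducible a.charpoly := by
    refine ⟨Matrix.reindex (finCongr hdim) (finCongr hdim)
      (Algebra.leftMulMatrix pb.basis pb.gen), ?_⟩
    rw [Matrix.charpoly_reindex, charpoly_leftMulMatrix]
    exact minpoly.irreducible (Algebra.IsIntegral.isIntegral _)
  set q := a0.charpoly with hq
  let h : F[X] := ∏ a : Matrix (Fin n) (Fin n) F with a.charpoly ≠ q, a.charpoly
  have hcop : IsCoprime q h := by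
    apply IsCoprime.prod_right
    intro a ha
    have ha : a.charpoly ≠ q := by simpa using ha
    refine (ha0.coprime_iff_not_dvd).2 fun hd => ha ?_
    refine (eq_of_monic_of_dvd_of_natDegree_le a0.charpoly_monic a.charpoly_monic hd ?_)
    rw [Matrix.charpoly_natDegree_eq_dim, Matrix.charpoly_natDegree_eq_dim]
  obtain ⟨u, v, huv⟩ := hcop
  have hzero : ∀ a : Matrix (Fin n) (Fin n) F, a.charpoly ≠ q → aeval a h = 0 := by
    intro a ha
    have hd : a.charpoly ∣ h := Finset.dvd_prod_of_mem _ (by simpa using ha)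
    obtain ⟨w, hw⟩ := hd
    rw [hw, map_mul, Matrix.aeval_self_charpoly, zero_mul]
  have hone : ∀ a : Matrix (Fin n) (Fin n) F, a.charpoly = q → aeval a (v * h) = 1 := by
    intro a ha
    have := congrArg (aeval a) huv
    rw [map_add, map_mul, ← ha, Matrix.aeval_self_charpoly, mul_zero, zero_add, map_one] at this
    exact this
  refine ⟨v * h, ?_, fun a => ?_, a0, ?_⟩
  · have h0 : (0 : Matrix (Fin n) (Fin n) F).charpoly ≠ q := by
      intro hh
      rw [Matrix.charpoly_zero] at hh
      rw [← hh] at ha0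
      have := ha0.isUnit_or_isUnit (a := X) (b := X^(n-1)) (by rw [← pow_succ']; congr 1; simp; omega)
      rcases this with h1 | h1
      · exact not_isUnit_X h1
      · exact not_isUnit_X ((isUnit_pow_iff (by omega)).1 h1)
    have := hzero 0 h0
    rw [← map_zero (algebraMap F (Matrix (Fin n) (Fin n) F)), aeval_algebraMap_apply] at this
    have h2 : aeval (0:F) h = 0 := by
      have := congrFun (congrFun this 0) 0
      simpa [Matrix.algebraMap_matrix_apply] using this
    rw [coeff_zero_eq_eval_zero, eval_mul, ← coe_aeval_eq_eval, h2, mul_zero]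
  · by_cases ha : a.charpoly = q
    · exact ⟨1, by rw [hone a ha, one_smul]⟩
    · exact ⟨0, by rw [map_mul, hzero a ha, mul_zero, zero_smul]⟩
  · rw [hone a0 rfl]; exact one_ne_zero

section diag
open Polynomial Matrix
theorem diag_of_sep {K : Type*} [Field K] [IsAlgClosed K] {n : ℕ} (x : Matrix (Fin n) (Fin n) K)
    (hs : x.charpoly.Separable) : ∃ (P : (Matrix (Fin n) (Fin n) K)ˣ) (l : Fin n → K),
      x = P * diagonal l * (P⁻¹ : (Matrix (Fin n) (Fin n) K)ˣ) := by
  classical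
  have hsp : x.charpoly.Splits := IsAlgClosed.splits _
  have hcard : x.charpoly.roots.toFinset.card = n := by
    rw [Multiset.toFinset_card_of_nodup (nodup_roots hs), ← hsp.natDegree_eq_card_roots,
      Matrix.charpoly_natDegree_eq_dim, Fintype.card_fin]
  let e := x.charpoly.roots.toFinset.equivFinOfCardEq hcard
  let l : Fin n → K := fun i => (e.symm i : K)
  have hl : Function.Injective l := Subtype.val_injective.comp e.symm.injective
  have hroot : ∀ i, x.charpoly.IsRoot (l i) := fun i => by
    have := (e.symm i).2
    rw [Multiset.mem_toFinset] at this
    exact isRoot_of_mem_roots this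
  have hv : ∀ i, ∃ v, Module.End.HasEigenvector (Matrix.toLin' x) (l i) v := fun i => by
    apply Module.End.HasEigenvalue.exists_hasEigenvector
    rw [Module.End.hasEigenvalue_iff_isRoot_charpoly, Matrix.charpoly_toLin']
    exact hroot i
  choose v hv using hv
  have hli := Module.End.eigenvectors_linearIndependent' _ l hl v hv
  let Q : Matrix (Fin n) (Fin n) K := (Matrix.of v)ᵀ
  have hQ : IsUnit Q := by
    rw [Matrix.isUnit_transpose]
    exact (Matrix.linearIndependent_rows_iff_isUnit).1 hli
  obtain ⟨P, hP⟩ := hQ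
  refine ⟨P, l, ?_⟩
  rw [Units.eq_mul_inv_iff_mul_eq, hP]
  ext i j
  have := congrFun ((hv j).apply_eq_smul) i
  simp only [Matrix.toLin'_apply, Pi.smul_apply, smul_eq_mul] at this
  rw [Matrix.mul_diagonal]
  show (x *ᵥ v j) i = v j i * l j
  rw [this, mul_comm]

theorem density {K : Type*} [Field K] [IsAlgClosed K] {n : ℕ} (hn : n ≠ 0)
    (x : Matrix (Fin n) (Fin n) K) :
    ∃ (X : Matrix (Fin n) (Fin n) K[X]), X.map (Polynomial.eval 0) = x ∧ ∃ δ : K[X], δ ≠ 0 ∧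
      ∀ s, δ.eval s ≠ 0 → (X.map (Polynomial.eval s)).charpoly.Separable := by
  have : Infinite K := inferInstance
  let d : Fin n ↪ K := Fin.valEmbedding.trans (Infinite.natEmbedding K)
  let Y : Matrix (Fin n) (Fin n) K[X] := Matrix.of fun i j => C (x i j) + X * C (diagonal d i j - x i j)
  have hnd : Y.charpoly.natDegree = n := by simp [Matrix.charpoly_natDegree_eq_dim]
  have key : ∀ s, (Y.map (Polynomial.eval s)).charpoly = Y.charpoly.map (evalRingHom s) := by
    intro s
    rw [← Matrix.charpoly_map]; rfl
  let δ := resultant Y.charpoly (derivative Y.charpoly) n n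
  have hδ : ∀ s, δ.eval s = resultant (Y.map (Polynomial.eval s)).charpoly
      (derivative (Y.map (Polynomial.eval s)).charpoly) n n := by
    intro s
    rw [key, derivative_map, resultant_map_map]; rfl
  refine ⟨Y, ?_, δ, ?_, ?_⟩
  · ext i j; simp [Y, Matrix.map_apply]
  · intro h0
    have h1 := hδ 1
    have hY : Y.map (Polynomial.eval 1) = diagonal d := by ext i j; simp [Y, Matrix.map_apply]
    rw [h0, eval_zero, hY] at h1
    have hsep : (diagonal (d : Fin n → K)).charpoly.Separable := by
      rw [charpoly_diagonal, separable_prod_X_sub_C_iff]; exact d.injective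
    have h2 := resultant_eq_prod_eval (diagonal (d : Fin n → K)).charpoly
      (derivative (diagonal (d : Fin n → K)).charpoly) n
      ((natDegree_derivative_le _).trans (by simp [Matrix.charpoly_natDegree_eq_dim]))
      (IsAlgClosed.splits _)
    rw [Matrix.charpoly_natDegree_eq_dim, Fintype.card_fin, ← h1] at h2
    symm at h2
    rw [(Matrix.charpoly_monic _).leadingCoeff, one_pow, one_mul, Multiset.prod_eq_zero_iff,
      Multiset.mem_map] at h2
    obtain ⟨a, ha, ha'⟩ := h2
    have := hsep.aeval_derivative_ne_zero (x := a)
      (by simpa using isRoot_of_mem_roots ha)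
    exact this (by simpa using ha')
  · intro s hs
    rw [hδ] at hs
    set f := (Y.map (Polynomial.eval s)).charpoly
    have hf : f.natDegree ≤ n := by simp [f, Matrix.charpoly_natDegree_eq_dim]
    obtain ⟨a, b, -, -, hab⟩ := exists_mul_add_mul_eq_C_resultant (m := n) (n := n) f
      (derivative f) hf ((natDegree_derivative_le _).trans (by omega)) (Or.inl hn)
    set r := resultant f (derivative f) n n
    refine ⟨C r⁻¹ * a, C r⁻¹ * b, ?_⟩
    have : C r⁻¹ * (f * a + derivative f * b) = 1 := by
      rw [hab, ← C_mul, inv_mul_cancel₀ hs, C_1]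
    rw [← this]; ring
end diag

section comb
open Matrix

/-- the word x^{α 0} y_0 x^{α 1} y_1 ... y_{n-1} x^{α n} -/
def fWord {A : Type*} [Ring A] {n : ℕ} (x : A) (y : Fin n → A) (α : Fin (n+1) →₀ ℕ) : A :=
  (List.ofFn fun i : Fin n => x ^ α i.castSucc * y i).prod * x ^ α (Fin.last n)

noncomputable def fPhi {A : Type*} [Ring A] {n : ℕ} (x : A) (y : Fin n → A)
    (g : MvPolynomial (Fin (n+1)) ℤ) : A :=
  ∑ α ∈ g.support, g.coeff α • fWord x y α

noncomputable def fG (n : ℕ) [NeZero n] : MvPolynomial (Fin (n+1)) ℤ :=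
  ∏ i : Fin n with i ≠ 0, ((MvPolynomial.X (Fin.last n) - MvPolynomial.X i.castSucc) *
    ∏ j : Fin n with j ≠ i, (MvPolynomial.X i.castSucc - MvPolynomial.X j.castSucc))

noncomputable def fCentral {A : Type*} [Ring A] {n : ℕ} [NeZero n] (x : A) (y : Fin n → A) : A :=
  ∑ k : Fin n, fPhi x (fun i => y (i + k)) (fG n)

theorem fWord_map {A B : Type*} [Ring A] [Ring B] (φ : A →+* B) {n : ℕ} (x : A) (y : Fin n → A)
    (α : Fin (n+1) →₀ ℕ) : φ (fWord x y α) = fWord (φ x) (fun i => φ (y i)) α := by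
  simp only [fWord, map_mul, map_pow, map_list_prod, List.map_ofFn, Function.comp_def]

theorem fPhi_map {A B : Type*} [Ring A] [Ring B] (φ : A →+* B) {n : ℕ} (x : A) (y : Fin n → A)
    (g : MvPolynomial (Fin (n+1)) ℤ) : φ (fPhi x y g) = fPhi (φ x) (fun i => φ (y i)) g := by
  simp only [fPhi, map_sum, map_zsmul, fWord_map]

theorem fCentral_map {A B : Type*} [Ring A] [Ring B] (φ : A →+* B) {n : ℕ} [NeZero n]
    (x : A) (y : Fin n → A) : φ (fCentral x y) = fCentral (φ x) (fun i => φ (y i)) := by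
  simp only [fCentral, map_sum, fPhi_map]

theorem path_prod {R ι : Type*} [CommRing R] [Fintype ι] [DecidableEq ι] {n : ℕ}
    (M : Fin n → Matrix ι ι R) (p q : ι) :
    (List.ofFn M).prod p q = ∑ c : Fin (n+1) → ι,
      if c 0 = p ∧ c (Fin.last n) = q then ∏ i : Fin n, M i (c i.castSucc) (c i.succ) else 0 := by
  induction n generalizing p with
  | zero =>
    rw [← (Equiv.funUnique (Fin 1) ι).symm.sum_comp]
    simp only [List.ofFn_zero, List.prod_nil, Matrix.one_apply, Finset.univ_eq_empty,
      Finset.prod_empty]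
    by_cases h : p = q
    · subst h; simp
    · rw [if_neg h, eq_comm]
      apply Finset.sum_eq_zero
      intro c _
      rw [if_neg]
      rintro ⟨h1, h2⟩
      exact h (h1.symm.trans h2)
  | succ n ih =>
    rw [List.ofFn_succ, List.prod_cons, Matrix.mul_apply]
    rw [← (Fin.consEquiv (fun _ => ι)).sum_comp, Fintype.sum_prod_type]
    symm
    rw [Finset.sum_eq_single p]
    · symm
      simp_rw [ih, Finset.mul_sum]
      rw [Finset.sum_comm]
      apply Finset.sum_congr rfl
      intro c _
      rw [Finset.sum_eq_single (c 0)]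
      · rw [Fin.prod_univ_succ]
        simp [Fin.consEquiv, ← Fin.succ_last]
      · intro b _ hb
        rw [if_neg, mul_zero]
        rintro ⟨h, -⟩; exact hb h.symm
      · simp
    · intro b _ hb
      apply Finset.sum_eq_zero
      intro c _
      rw [if_neg]
      rintro ⟨h, -⟩; exact hb (by simpa [Fin.consEquiv] using h)
    · simp

theorem fWord_diag {R : Type*} [CommRing R] {n : ℕ} {ι : Type*} [Fintype ι] [DecidableEq ι]
    (l : ι → R) (y : Fin n → Matrix ι ι R)
    (α : Fin (n+1) →₀ ℕ) (p q : ι) :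
    fWord (diagonal l) y α p q = ∑ c : Fin (n+1) → ι,
      if c 0 = p ∧ c (Fin.last n) = q then
        (∏ i, l (c i) ^ α i) * ∏ i : Fin n, y i (c i.castSucc) (c i.succ) else 0 := by
  rw [fWord, diagonal_pow, Matrix.mul_diagonal, path_prod, Finset.sum_mul]
  apply Finset.sum_congr rfl
  intro c _
  split_ifs with h
  · simp only [diagonal_pow, Matrix.diagonal_mul, Finset.prod_mul_distrib, Pi.pow_apply]
    rw [Fin.prod_univ_castSucc, h.2]; ring
  · rw [zero_mul]

theorem fPhi_diag {R : Type*} [CommRing R] {n : ℕ} {ι : Type*} [Fintype ι] [DecidableEq ι]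
    (l : ι → R) (y : Fin n → Matrix ι ι R)
    (g : MvPolynomial (Fin (n+1)) ℤ) (p q : ι) :
    fPhi (diagonal l) y g p q = ∑ c : Fin (n+1) → ι,
      if c 0 = p ∧ c (Fin.last n) = q then
        MvPolynomial.aeval (fun i => l (c i)) g *
          ∏ i : Fin n, y i (c i.castSucc) (c i.succ) else 0 := by
  simp only [fPhi, Matrix.sum_apply, Matrix.smul_apply, fWord_diag, Finset.smul_sum]
  rw [Finset.sum_comm]
  apply Finset.sum_congr rfl
  intro c _
  split_ifs with h
  · rw [MvPolynomial.aeval_def, MvPolynomial.eval₂_eq', Finset.sum_mul]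
    apply Finset.sum_congr rfl
    intro α _
    simp [mul_assoc]
  · simp

def fD {R : Type*} [CommRing R] {n : ℕ} (l : Fin n → R) : R :=
  ∏ i, ∏ j with j ≠ i, (l i - l j)

theorem fG_perm {R : Type*} [CommRing R] {n : ℕ} [NeZero n] (l : Fin n → R)
    (σ : Equiv.Perm (Fin n)) :
    MvPolynomial.aeval (fun i => l (Fin.snoc (α := fun _ => Fin n) σ (σ 0) i)) (fG n) = fD l := by
  simp only [fG, map_prod, map_mul, map_sub, MvPolynomial.aeval_X, Fin.snoc_last,
    Fin.snoc_castSucc, Finset.prod_mul_distrib]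
  have h1 : fD l = fD (l ∘ σ) := by
    simp only [fD, Finset.prod_filter]
    rw [← Equiv.prod_comp σ]
    apply Finset.prod_congr rfl
    intro i _
    rw [← Equiv.prod_comp σ]
    simp
  rw [h1, fD, Finset.prod_eq_mul_prod_sdiff_singleton_of_mem (Finset.mem_univ (0 : Fin n))]
  congr 1
  apply Finset.prod_congr
  · ext; simp
  · intros; rfl

theorem fG_zero {R : Type*} [CommRing R] {n : ℕ} [NeZero n] (l : Fin n → R)
    (c : Fin (n+1) → Fin n)
    (h : MvPolynomial.aeval (fun i => l (c i)) (fG n) ≠ 0) :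
    ∃ σ : Equiv.Perm (Fin n), c = Fin.snoc (α := fun _ => Fin n) σ (σ 0) := by
  simp only [fG, map_prod, map_mul, map_sub, MvPolynomial.aeval_X] at h
  have h0 : ∀ i : Fin n, i ≠ 0 → c (Fin.last n) ≠ c i.castSucc := by
    intro i hi he
    apply h
    apply Finset.prod_eq_zero (i := i) (by simpa using hi)
    rw [he, sub_self, zero_mul]
  have h1 : ∀ i j : Fin n, i ≠ 0 → j ≠ i → c i.castSucc ≠ c j.castSucc := by
    intro i j hi hj he
    apply h
    apply Finset.prod_eq_zero (i := i) (by simpa using hi)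
    rw [Finset.prod_eq_zero (i := j) (by simpa using hj), mul_zero]
    rw [he, sub_self]
  have hinj : Function.Injective (fun i : Fin n => c i.castSucc) := by
    intro i j hij
    by_contra hne
    by_cases hi : i = 0
    · subst hi
      exact h1 j 0 (Ne.symm hne) hne hij.symm
    · exact h1 i j hi (Ne.symm hne) hij
  let σ := Equiv.ofBijective _ (Finite.injective_iff_bijective.1 hinj)
  refine ⟨σ, ?_⟩
  funext i
  refine Fin.lastCases ?_ (fun i => ?_) i
  · rw [Fin.snoc_last]
    obtain ⟨i, hi⟩ := σ.surjective (c (Fin.last n))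
    by_cases hi0 : i = 0
    · rw [← hi, hi0]
    · exact absurd hi.symm (h0 i hi0)
  · rw [Fin.snoc_castSucc]; rfl

theorem snoc_succ_cyc {n : ℕ} [NeZero n] (σ : Equiv.Perm (Fin n)) (i : Fin n) :
    Fin.snoc (α := fun _ => Fin n) σ (σ 0) i.succ = σ (i + 1) := by
  obtain ⟨m, rfl⟩ : ∃ m, n = m + 1 := ⟨n - 1, by have := NeZero.ne n; omega⟩
  refine Fin.lastCases ?_ (fun i => ?_) i
  · rw [Fin.succ_last, Fin.snoc_last, Fin.last_add_one]
  · rw [Fin.succ_castSucc, Fin.snoc_castSucc, Fin.coeSucc_eq_succ]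

theorem fPhi_G {R : Type*} [CommRing R] {n : ℕ} [NeZero n]
    (l : Fin n → R) (y : Fin n → Matrix (Fin n) (Fin n) R) (p q : Fin n) :
    fPhi (diagonal l) y (fG n) p q = fD l * if p = q then ∑ σ : Equiv.Perm (Fin n),
      if σ 0 = p then ∏ i : Fin n, y i (σ i) (σ (i + 1)) else 0 else 0 := by
  classical
  rw [fPhi_diag]
  let Φ : Equiv.Perm (Fin n) → (Fin (n+1) → Fin n) := fun σ => Fin.snoc (α := fun _ => Fin n) σ (σ 0)
  have hΦ : Function.Injective Φ := by
    intro σ τ h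
    ext i
    have := congrFun h i.castSucc
    simp only [Φ, Fin.snoc_castSucc] at this
    rw [this]
  have h00 : ∀ σ, Φ σ 0 = σ 0 := by
    intro σ
    have : (0 : Fin (n+1)) = (0 : Fin n).castSucc := by simp
    rw [this]; simp only [Φ, Fin.snoc_castSucc]
  rw [← Finset.sum_subset (Finset.subset_univ (Finset.univ.image Φ)), Finset.sum_image hΦ.injOn]
  · simp only [h00]
    split_ifs with hpq
    · subst hpq
      rw [Finset.mul_sum]
      apply Finset.sum_congr rfl
      intro σ _
      simp only [Φ, Fin.snoc_last, and_self, fG_perm, Fin.snoc_castSucc, snoc_succ_cyc, mul_ite,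
        mul_zero]
    · rw [mul_zero]
      apply Finset.sum_eq_zero
      intro σ _
      rw [if_neg]
      simp only [Φ, Fin.snoc_last]
      rintro ⟨h1, h2⟩
      exact hpq (h1.symm.trans h2)
  · intro c _ hc
    have : MvPolynomial.aeval (fun i => l (c i)) (fG n) = 0 := by
      by_contra hne
      obtain ⟨σ, hσ⟩ := fG_zero l c hne
      exact hc (Finset.mem_image.2 ⟨σ, Finset.mem_univ _, hσ.symm⟩)
    rw [this]; simp

def fS {R : Type*} [CommRing R] {n : ℕ} [NeZero n] (y : Fin n → Matrix (Fin n) (Fin n) R) : R :=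
  ∑ σ : Equiv.Perm (Fin n), ∏ i : Fin n, y i (σ i) (σ (i + 1))

theorem fCentral_diag {R : Type*} [CommRing R] {n : ℕ} [NeZero n]
    (l : Fin n → R) (y : Fin n → Matrix (Fin n) (Fin n) R) :
    fCentral (diagonal l) y = (fD l * fS y) • (1 : Matrix (Fin n) (Fin n) R) := by
  ext p q
  simp only [fCentral, Matrix.sum_apply, fPhi_G, Matrix.smul_apply, Matrix.one_apply]
  by_cases hpq : p = q
  · simp only [hpq, if_true, smul_eq_mul, mul_one, ← Finset.mul_sum]
    congr 1
    rw [fS]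
    have : ∀ k : Fin n, (∑ σ : Equiv.Perm (Fin n),
        if σ 0 = q then ∏ i : Fin n, y (i + k) (σ i) (σ (i + 1)) else 0) =
        ∑ σ : Equiv.Perm (Fin n), if σ k = q then ∏ i : Fin n, y i (σ i) (σ (i + 1)) else 0 := by
      intro k
      rw [← Equiv.sum_comp (Equiv.mulRight (Equiv.addRight k))]
      apply Finset.sum_congr rfl
      intro σ _
      simp only [Equiv.coe_mulRight, Equiv.Perm.mul_apply, Equiv.coe_addRight, zero_add]
      congr 1
      rw [← Equiv.prod_comp (Equiv.addRight k) (fun i => y i (σ i) (σ (i+1)))]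
      apply Finset.prod_congr rfl
      intro i _
      simp only [Equiv.coe_addRight, add_right_comm]
    simp only [this]
    rw [Finset.sum_comm]
    apply Finset.sum_congr rfl
    intro σ _
    rw [Finset.sum_eq_single (σ.symm q)]
    · simp
    · intro b _ hb
      rw [if_neg]
      rintro rfl; simp at hb
    · simp
  · simp [hpq]

theorem fS_single {R : Type*} [CommRing R] {n : ℕ} [NeZero n] :
    fS (fun i : Fin n => Matrix.single i (i+1) (1 : R)) = 1 := by
  rw [fS, Finset.sum_eq_single 1]
  · simp
  · intro σ _ hσ
    obtain ⟨i, hi⟩ : ∃ i, σ i ≠ i := by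
      by_contra! h
      exact hσ (Equiv.ext h)
    apply Finset.prod_eq_zero (Finset.mem_univ i)
    rw [Matrix.single_apply_of_ne]
    rintro ⟨h, -⟩; exact hi h.symm
  · simp

theorem fD_ne {R : Type*} [CommRing R] [IsDomain R] {n : ℕ} (l : Fin n → R)
    (hl : Function.Injective l) : fD l ≠ 0 := by
  refine Finset.prod_ne_zero_iff.2 fun i _ => Finset.prod_ne_zero_iff.2 fun j hj => ?_
  rw [sub_ne_zero]
  intro h
  simp at hj
  exact hj (hl h).symm
end comb

section final
open Matrix

theorem central_conj {K : Type*} [Field K] {n : ℕ} [NeZero n]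
    (P : (Matrix (Fin n) (Fin n) K)ˣ) (l : Fin n → K) (y : Fin n → Matrix (Fin n) (Fin n) K) :
    ∃ c : K, fCentral ((P : Matrix (Fin n) (Fin n) K) * diagonal l *
      ((P⁻¹ : (Matrix (Fin n) (Fin n) K)ˣ) : Matrix (Fin n) (Fin n) K)) y = c • 1 := by
  let φ : Matrix (Fin n) (Fin n) K →+* Matrix (Fin n) (Fin n) K :=
    { toFun := fun z => (P : Matrix (Fin n) (Fin n) K) * z *
        ((P⁻¹ : (Matrix (Fin n) (Fin n) K)ˣ) : Matrix (Fin n) (Fin n) K)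
      map_one' := by simp
      map_zero' := by simp
      map_add' := fun a b => by rw [mul_add, add_mul]
      map_mul' := fun a b => by
        simp only [mul_assoc, Units.inv_mul_cancel_left] }
  let y' := fun i => ((P⁻¹ : (Matrix (Fin n) (Fin n) K)ˣ) : Matrix (Fin n) (Fin n) K) * y i * P
  have hy : y = fun i => φ (y' i) := by
    funext i
    show y i = (P : Matrix (Fin n) (Fin n) K) * (((P⁻¹ : (Matrix (Fin n) (Fin n) K)ˣ) :
      Matrix (Fin n) (Fin n) K) * y i * P) * ((P⁻¹ : (Matrix (Fin n) (Fin n) K)ˣ) : Matrix (Fin n) (Fin n) K)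
    simp only [mul_assoc, Units.mul_inv_cancel_left, Units.mul_inv, mul_one]
  refine ⟨fD l * fS y', ?_⟩
  rw [hy]
  change fCentral (φ (diagonal l)) _ = _
  rw [← fCentral_map, fCentral_diag]
  show (P : Matrix (Fin n) (Fin n) K) * _ * ((P⁻¹ : (Matrix (Fin n) (Fin n) K)ˣ) : Matrix (Fin n) (Fin n) K) = _
  rw [mul_smul_comm, smul_mul_assoc, mul_one, Units.mul_inv]

theorem central_closed {K : Type*} [Field K] [IsAlgClosed K] {n : ℕ} [NeZero n]
    (x : Matrix (Fin n) (Fin n) K) (y : Fin n → Matrix (Fin n) (Fin n) K) (p q : Fin n) :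
    fCentral x y p q = if p = q then fCentral x y 0 0 else 0 := by
  obtain ⟨X, hX, δ, hδ, hsep⟩ := density (NeZero.ne n) x
  let Z := fCentral X (fun i => (y i).map Polynomial.C)
  have hZ : ∀ s : K, Z.map (Polynomial.eval s) = fCentral (X.map (Polynomial.eval s)) y := by
    intro s
    have := fCentral_map (Polynomial.evalRingHom s).mapMatrix X (fun i => (y i).map Polynomial.C)
    have h2 : (fun i => (Polynomial.evalRingHom s).mapMatrix ((y i).map Polynomial.C)) = y := by
      funext i; ext a b; simp
    rw [h2] at this
    exact this
  let e : Polynomial K := Z p q - if p = q then Z 0 0 else 0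
  have he : ∀ s, e.eval s = fCentral (X.map (Polynomial.eval s)) y p q -
      if p = q then fCentral (X.map (Polynomial.eval s)) y 0 0 else 0 := by
    intro s
    rw [← hZ]
    simp only [e, Polynomial.eval_sub, Matrix.map_apply]
    split_ifs <;> simp
  have h0 : δ * e = 0 := by
    have : Infinite K := inferInstance
    apply Polynomial.funext
    intro s
    rw [Polynomial.eval_mul, Polynomial.eval_zero]
    by_cases hs : δ.eval s = 0
    · rw [hs, zero_mul]
    · obtain ⟨P, l, hP⟩ := diag_of_sep _ (hsep s hs)
      obtain ⟨c, hc⟩ := central_conj P l y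
      rw [← hP] at hc
      rw [he, hc]
      by_cases hpq : p = q <;> simp [hpq]
  have h1 : e = 0 := (mul_eq_zero.1 h0).resolve_left hδ
  have h2 := he 0
  rw [h1, Polynomial.eval_zero, hX] at h2
  exact (sub_eq_zero.1 h2.symm)

theorem central_scalar {F : Type*} [Field F] {n : ℕ} [NeZero n]
    (x : Matrix (Fin n) (Fin n) F) (y : Fin n → Matrix (Fin n) (Fin n) F) :
    fCentral x y = (fCentral x y 0 0) • 1 := by
  let ψ := (algebraMap F (AlgebraicClosure F))
  have hm := fCentral_map ψ.mapMatrix x y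
  have hent : ∀ p q, ψ (fCentral x y p q) =
      fCentral (ψ.mapMatrix x) (fun i => ψ.mapMatrix (y i)) p q := fun p q => by rw [← hm]; rfl
  ext p q
  apply ψ.injective
  rw [hent, central_closed, ← hent]
  by_cases hpq : p = q <;> simp [hpq]

theorem central_zero {R : Type*} [CommRing R] {n : ℕ} [NeZero n] :
    fCentral (0 : R) (fun _ : Fin n => (0 : R)) = 0 := by
  apply Finset.sum_eq_zero
  intro k _
  apply Finset.sum_eq_zero
  intro α _
  have : (0 : R) ∈ List.ofFn (fun i : Fin n => (0 : R) ^ α i.castSucc * 0) := by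
    rw [List.mem_ofFn]; exact ⟨0, by simp⟩
  rw [fWord, List.prod_eq_zero this, zero_mul, smul_zero]
end final


/-- **Formanek–Razmyslov: existence of central polynomials for matrices.**
For every field `F` and every `n ≥ 1` there exist `m ≥ 1` and an element `f` of the free
associative algebra `F⟨x₁, …, x_m⟩` with zero constant term (i.e. killed by the algebra map
to `F` sending all variables to `0`) such that every evaluation of `f` on `m`-tuples of
`n × n` matrices over `F` is a scalar matrix, while `f` is not a polynomial identity of
`Mₙ(F)`. -/
theorem exists_central_polynomial (F : Type*) [Field F] (n : ℕ) (hn : 1 ≤ n) :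
    ∃ (m : ℕ) (_ : 1 ≤ m) (f : FreeAlgebra F (Fin m)),
      (FreeAlgebra.lift F (fun _ : Fin m => (0 : F))) f = 0 ∧
      (∀ a : Fin m → Matrix (Fin n) (Fin n) F,
        ∃ c : F, (FreeAlgebra.lift F a) f = c • (1 : Matrix (Fin n) (Fin n) F)) ∧
      (∃ a : Fin m → Matrix (Fin n) (Fin n) F, (FreeAlgebra.lift F a) f ≠ 0) := by
  have : NeZero n := ⟨by omega⟩
  by_cases h1 : n = 1
  · subst h1
    refine ⟨1, le_rfl, FreeAlgebra.ι F 0, by simp, fun a => ⟨a 0 0 0, ?_⟩, fun _ => 1, by simp⟩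
    ext i j
    have hi := Subsingleton.elim i 0
    have hj := Subsingleton.elim j 0
    subst hi hj
    simp
  rcases finite_or_infinite F with hF | hF
  · obtain ⟨f, hf0, hf1, a, ha⟩ := finite_case F n (by omega)
    have key : ∀ {A : Type _} [Ring A] [Algebra F A] (b : Fin 1 → A),
        FreeAlgebra.lift F b (Polynomial.aeval (FreeAlgebra.ι F 0) f) =
          Polynomial.aeval (b 0) f := by
      intro A _ _ b
      rw [← Polynomial.aeval_algHom_apply, FreeAlgebra.lift_ι_apply]
    refine ⟨1, le_rfl, Polynomial.aeval (FreeAlgebra.ι F 0) f, ?_, fun b => ?_, fun _ => a, ?_⟩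
    · rw [key, Polynomial.coe_aeval_eq_eval, ← Polynomial.coeff_zero_eq_eval_zero, hf0]
    · rw [key]; exact hf1 _
    · rw [key]; exact ha
  · have key : ∀ {A : Type _} [Ring A] [Algebra F A] (b : Fin (n + 1) → A),
        FreeAlgebra.lift F b (fCentral (FreeAlgebra.ι F 0)
          (fun i : Fin n => FreeAlgebra.ι F i.succ)) = fCentral (b 0) (fun i => b i.succ) := by
      intro A _ _ b
      have := fCentral_map (FreeAlgebra.lift F b : FreeAlgebra F (Fin (n+1)) →+* A)
        (FreeAlgebra.ι F 0) (fun i : Fin n => FreeAlgebra.ι F i.succ)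
      simpa only [RingHom.coe_coe, FreeAlgebra.lift_ι_apply] using this
    refine ⟨n + 1, by omega, fCentral (FreeAlgebra.ι F 0)
      (fun i : Fin n => FreeAlgebra.ι F i.succ), ?_, fun b => ?_, ?_⟩
    · rw [key]; exact central_zero
    · rw [key]; exact ⟨_, central_scalar _ _⟩
    · let d : Fin n ↪ F := Fin.valEmbedding.trans (Infinite.natEmbedding F)
      refine ⟨Fin.cons (Matrix.diagonal d) (fun i : Fin n => Matrix.single i (i + 1) (1 : F)), ?_⟩
      rw [key]
      simp only [Fin.cons_zero, Fin.cons_succ]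
      rw [fCentral_diag, fS_single, mul_one]
      exact smul_ne_zero (fD_ne _ d.injective) one_ne_zero
end

section
/- Let F be a field and let R be an F-algebra that is primitive, i.e. R admits a faithful simple left R-module, and suppose R satisfies a nonzero polynomial identity of degree d. Then R is a simple algebra, its center Z is a field, R is finite-dimensional as a Z-vector space, and dim_Z R ≤ ⌊d/2⌋². (Kaplansky's theorem.) -/
universe u


/-- inclusion-exclusion sign sum -/
theorem kap_incl_excl {F : Type*} [Field F] {n m : ℕ} (φ : Fin m → Fin n) :
    ∑ S : Finset (Fin n), (-1 : F) ^ (Sᶜ).card * (∏ t, if φ t ∈ S then (1 : F) else 0) =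
      if Function.Surjective φ then 1 else 0 := by
  classical
  have h := Finset.prod_add (fun _ : Fin n => (1 : F))
    (fun j => if j ∈ Set.range φ then (0 : F) else -1) Finset.univ
  have hl : ∏ j : Fin n, ((1 : F) + (if j ∈ Set.range φ then (0 : F) else -1)) =
      if Function.Surjective φ then 1 else 0 := by
    split_ifs with hs
    · apply Finset.prod_eq_one
      intro j _
      rw [if_pos (show j ∈ Set.range φ from hs j)]; simp
    · have : ∃ j, j ∉ Set.range φ := by
        by_contra hc
        push Not at hc
        exact hs hc
      obtain ⟨j, hj⟩ := this
      apply Finset.prod_eq_zero (Finset.mem_univ j)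
      rw [if_neg hj]; simp
  rw [← hl, h, Finset.powerset_univ]
  apply Finset.sum_congr rfl
  intro S _
  rw [Finset.prod_const_one, one_mul, ← Finset.compl_eq_univ_sdiff]
  by_cases hS : ∀ t, φ t ∈ S
  · rw [Finset.prod_eq_one (fun t _ => if_pos (hS t)), mul_one, ← Finset.prod_const]
    apply Finset.prod_congr rfl
    intro j hj
    rw [if_neg]
    rintro ⟨t, rfl⟩
    exact (Finset.mem_compl.1 hj) (hS t)
  · push Not at hS
    obtain ⟨t, ht⟩ := hS
    rw [Finset.prod_eq_zero (Finset.mem_univ t) (if_neg ht), mul_zero]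
    symm
    exact Finset.prod_eq_zero (Finset.mem_compl.2 ht) (if_pos ⟨t, rfl⟩)

/-- polarisation of one word -/
theorem kap_word {F : Type*} [Field F] {R : Type*} [Ring R] [Algebra F R] {n m : ℕ}
    (w : Fin n → ℕ) (a : Fin n → R) (u : Fin m → ℕ) :
    ∑ S : Finset (Fin n), (-1 : F) ^ (Sᶜ).card • (List.ofFn (fun t =>
      ∑ j, ((if j ∈ S then (1 : F) else 0) * (if w j = u t then 1 else 0)) • a j)).prod =
    ∑ φ : Fin m → Fin n, if Function.Surjective φ ∧ (fun t => w (φ t)) = u then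
      (List.ofFn (fun t => a (φ t))).prod else 0 := by
  classical
  have key : ∀ S : Finset (Fin n), (List.ofFn (fun t =>
      ∑ j, ((if j ∈ S then (1 : F) else 0) * (if w j = u t then 1 else 0)) • a j)).prod =
      ∑ φ : Fin m → Fin n, ((∏ t, if φ t ∈ S then (1 : F) else 0) *
        (∏ t, if w (φ t) = u t then (1 : F) else 0)) • (List.ofFn (fun t => a (φ t))).prod := by
    intro S
    have := (MultilinearMap.mkPiAlgebraFin F m R).map_sum
      (fun t j => ((if j ∈ S then (1 : F) else 0) * (if w j = u t then 1 else 0)) • a j)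
    rw [MultilinearMap.mkPiAlgebraFin_apply] at this
    rw [this]
    apply Finset.sum_congr rfl
    intro φ _
    rw [MultilinearMap.map_smul_univ, MultilinearMap.mkPiAlgebraFin_apply, Finset.prod_mul_distrib]
  simp_rw [key, Finset.smul_sum]
  rw [Finset.sum_comm]
  apply Finset.sum_congr rfl
  intro φ _
  simp_rw [smul_smul, ← mul_assoc]
  rw [← Finset.sum_smul, ← Finset.sum_mul, kap_incl_excl]
  by_cases h1 : Function.Surjective φ
  · by_cases h2 : (fun t => w (φ t)) = u
    · rw [if_pos h1, if_pos ⟨h1, h2⟩, Finset.prod_eq_one (fun t _ => if_pos (congrFun h2 t))]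
      simp
    · rw [if_neg (fun h : Function.Surjective φ ∧ (fun t => w (φ t)) = u => h2 h.2)]
      have : ∃ t, w (φ t) ≠ u t := by
        by_contra hc
        push Not at hc
        exact h2 (funext hc)
      obtain ⟨t, ht⟩ := this
      rw [Finset.prod_eq_zero (Finset.mem_univ t) (if_neg ht)]
      simp
  · rw [if_neg h1, if_neg (fun h : Function.Surjective φ ∧ (fun t => w (φ t)) = u => h1 h.1)]
    simp

theorem kap_multilinear {F : Type*} [Field F] {R : Type*} [Ring R] [Algebra F R]
    (d : ℕ) (f : FreeAlgebra F ℕ) (hf0 : f ≠ 0)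
    (hdeg : f ∈ Submodule.span F
      {x : FreeAlgebra F ℕ | ∃ w : List ℕ, w.length ≤ d ∧ x = (w.map (FreeAlgebra.ι F)).prod})
    (hid : ∀ a : ℕ → R, (FreeAlgebra.lift F a) f = 0) :
    ∃ n ≤ d, ∃ c : Equiv.Perm (Fin n) → F, c 1 ≠ 0 ∧
      ∀ a : Fin n → R, ∑ σ, c σ • (List.ofFn (fun t => a (σ t))).prod = 0 := by
  classical
  have hset : {x : FreeAlgebra F ℕ | ∃ w : List ℕ, w.length ≤ d ∧
      x = (w.map (FreeAlgebra.ι F)).prod} =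
      (fun w : List ℕ => (w.map (FreeAlgebra.ι F)).prod) '' {w | w.length ≤ d} := by
    ext x
    constructor
    · rintro ⟨w, h, rfl⟩; exact ⟨w, h, rfl⟩
    · rintro ⟨w, h, rfl⟩; exact ⟨w, h, rfl⟩
  rw [hset, Finsupp.mem_span_image_iff_linearCombination] at hdeg
  obtain ⟨l, hl, rfl⟩ := hdeg
  have hl0 : l ≠ 0 := by rintro rfl; simp at hf0
  obtain ⟨w, hw, hmax⟩ := Finset.exists_max_image l.support List.length
    (Finsupp.support_nonempty_iff.2 hl0)
  have hev : ∀ a : ℕ → R, ∑ u ∈ l.support, l u • (u.map a).prod = 0 := by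
    intro a
    have := hid a
    rw [Finsupp.linearCombination_apply, Finsupp.sum, map_sum] at this
    rw [← this]
    apply Finset.sum_congr rfl
    intro u _
    rw [map_smul, map_list_prod, List.map_map]
    congr 3
    funext i
    simp
  refine ⟨w.length, hl hw, fun σ => l (List.ofFn (fun t => w.get (σ t))), ?_, ?_⟩
  · simpa using hw
  intro a
  have hP : ∀ u ∈ l.support, ∑ S : Finset (Fin w.length), (-1 : F) ^ (Sᶜ).card •
      (u.map (fun i => ∑ j, ((if j ∈ S then (1 : F) else 0) *
        (if w.get j = i then 1 else 0)) • a j)).prod =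
      ∑ σ : Equiv.Perm (Fin w.length), if List.ofFn (fun t => w.get (σ t)) = u then
        (List.ofFn (fun t => a (σ t))).prod else 0 := by
    intro u hu
    have h1 : ∀ S : Finset (Fin w.length), u.map (fun i => ∑ j, ((if j ∈ S then (1 : F) else 0) *
        (if w.get j = i then 1 else 0)) • a j) = List.ofFn (fun t : Fin u.length =>
      ∑ j, ((if j ∈ S then (1 : F) else 0) * (if w.get j = u.get t then 1 else 0)) • a j) := by
      intro S
      conv_lhs => rw [← List.ofFn_get u, List.map_ofFn]
      rfl
    simp_rw [h1]
    rw [kap_word (F := F) w.get a u.get]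
    have hle := hmax u hu
    rcases hle.lt_or_eq with hlt | heq
    · rw [Finset.sum_eq_zero, Finset.sum_eq_zero]
      · intro σ _
        rw [if_neg]
        intro h
        rw [← h] at hlt
        simp at hlt
      · intro φ _
        rw [if_neg]
        rintro ⟨h, -⟩
        have := Fintype.card_le_of_surjective φ h
        simp at this
        omega
    · clear h1 hle hmax
      generalize w.get = wg
      revert a wg
      generalize w.length = k at *
      intro a wg
      subst heq
      rw [← Finset.sum_filter, ← Finset.sum_filter]
      symm
      refine Finset.sum_bij (fun σ _ => (σ : Fin u.length → Fin u.length)) ?_ ?_ ?_ ?_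
      · intro σ hσ
        simp only [Finset.mem_filter, Finset.mem_univ, true_and] at hσ ⊢
        refine ⟨σ.surjective, ?_⟩
        apply List.ofFn_injective
        rw [hσ, List.ofFn_get]
      · intro σ _ τ _ h
        exact DFunLike.coe_injective h
      · intro φ hφ
        simp only [Finset.mem_filter, Finset.mem_univ, true_and] at hφ
        refine ⟨Equiv.ofBijective φ (Finite.injective_iff_bijective.1
          (Finite.injective_iff_surjective.2 hφ.1)), ?_, rfl⟩
        simp only [Finset.mem_filter, Finset.mem_univ, true_and, Equiv.ofBijective_apply]
        rw [hφ.2, List.ofFn_get]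
      · intro σ _
        rfl
  have h0 : ∑ S : Finset (Fin w.length), (-1 : F) ^ (Sᶜ).card • ∑ u ∈ l.support, l u •
      (u.map (fun i => ∑ j, ((if j ∈ S then (1 : F) else 0) *
        (if w.get j = i then 1 else 0)) • a j)).prod = 0 := by
    apply Finset.sum_eq_zero
    intro S _
    rw [hev, smul_zero]
  simp_rw [Finset.smul_sum] at h0
  rw [Finset.sum_comm] at h0
  simp_rw [smul_comm _ (l _), ← Finset.smul_sum] at h0
  rw [Finset.sum_congr rfl (fun u hu => by rw [hP u hu])] at h0
  simp_rw [Finset.smul_sum] at h0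
  rw [Finset.sum_comm] at h0
  rw [← h0]
  apply Finset.sum_congr rfl
  intro σ _
  simp_rw [smul_ite, smul_zero]
  rw [Finset.sum_ite_eq]
  split_ifs with h
  · rfl
  · rw [Finsupp.notMem_support_iff.1 h, zero_smul]

/-- maximal subfield of the endomorphism ring -/
theorem kap_maxfield (R : Type*) [Ring R] (M : Type u) [AddCommGroup M] [Module R M]
    [IsSimpleModule R M] : ∃ (L : Type u) (_ : Field L) (_ : Module L M) (_ : SMulCommClass R L M),
      ∀ g : Module.End R M, (∀ (l : L) (m : M), g (l • m) = l • g m) → ∃ l : L, ∀ m, g m = l • m := by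
  classical
  obtain ⟨S, hS⟩ := zorn_subset {S : Set (Module.End R M) | S ⊆ S.centralizer} (by
    intro c hc hchain
    refine ⟨⋃₀ c, ?_, fun s hs => Set.subset_sUnion_of_mem hs⟩
    rintro x ⟨s, hs, hx⟩ y ⟨t, ht, hy⟩
    rcases hchain.total hs ht with h | h
    · exact hc ht (h hx) y hy
    · exact hc hs hx y (h hy))
  have hSS : S ⊆ S.centralizer := hS.prop
  have hcent : ∀ x, x ∈ S.centralizer → x ∈ S := by
    intro x hx
    have : insert x S ∈ {S : Set (Module.End R M) | S ⊆ S.centralizer} := by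
      intro y hy z hz
      rcases hy with rfl | hy <;> rcases hz with rfl | hz
      · rfl
      · exact hx z hz
      · exact (hx y hy).symm
      · exact hSS hy z hz
    exact hS.le_of_ge this (Set.subset_insert x S) (Set.mem_insert x S)
  let L := Subring.centralizer S
  have hF : IsField L := 
    { exists_pair_ne := ⟨0, 1, zero_ne_one⟩
      mul_comm := fun x y => Subtype.ext ((y.2 x (hcent x x.2)))
      mul_inv_cancel := by
        intro a ha
        have ha' : (a : Module.End R M) ≠ 0 := fun h => ha (Subtype.ext h)
        exact ⟨⟨(a : Module.End R M)⁻¹, Set.inv_mem_centralizer₀ a.2⟩,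
          Subtype.ext (mul_inv_cancel₀ ha')⟩ }
  refine ⟨L, hF.toField, inferInstanceAs (Module L M), ⟨?_⟩, ?_⟩
  · intro r l m
    exact ((l : Module.End R M).map_smul r m).symm
  · intro g hg
    refine ⟨⟨g, ?_⟩, fun m => rfl⟩
    intro s hs
    ext m
    exact (hg ⟨s, hSS hs⟩ m).symm

theorem kap_extend {K V W ι : Type*} [Field K] [AddCommGroup V] [Module K V] [AddCommGroup W]
    [Module K W] (v : ι → V) (hv : LinearIndependent K v) (g : ι → W) :
    ∃ f : V →ₗ[K] W, ∀ i, f (v i) = g i := by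
  obtain ⟨h, hh⟩ := LinearMap.exists_leftInverse_of_injective (Finsupp.linearCombination K v)
    (LinearMap.ker_eq_bot.2 hv)
  refine ⟨(Finsupp.linearCombination K g) ∘ₗ h, fun i => ?_⟩
  have := congrArg (fun F => F (Finsupp.single i 1)) hh
  simp only [LinearMap.comp_apply, Finsupp.linearCombination_single, one_smul,
    LinearMap.id_apply] at this
  simp [this]

/-- central independence -/
theorem kap_indep (R : Type*) [Ring R] [IsSimpleRing R] (M : Type*) [AddCommGroup M] [Module R M]
    [FaithfulSMul R M] (L : Type*) [Field L] [Module L M] [SMulCommClass R L M]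
    (k : ℕ) [Module.Finite L M] (hk : Module.finrank L M ≤ k) :
    Module.Finite (Subring.center R) R ∧ Module.finrank (Subring.center R) R ≤ k ^ 2 := by
  classical
  let _ : Field (Subring.center R) := (IsSimpleRing.isField_center R).toField
  have : SMulCommClass L R M := SMulCommClass.symm _ _ _
  suffices h : Module.rank (Subring.center R) R ≤ ((k ^ 2 : ℕ) : Cardinal) by
    refine ⟨Module.rank_lt_aleph0_iff.1 (h.trans_lt (Cardinal.natCast_lt_aleph0)),
      Module.finrank_le_of_rank_le h⟩
  apply rank_le
  intro s hs
  let _ : Module (TensorProduct ℤ R Rᵐᵒᵖ) R := TensorProduct.Algebra.module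
  have hsm : ∀ (a : R) (b : Rᵐᵒᵖ) (x : R),
      (TensorProduct.tmul ℤ a b : TensorProduct ℤ R Rᵐᵒᵖ) • x = a * (x * b.unop) := fun a b x =>
    TensorProduct.Algebra.smul_def a b x
  have hsimple : IsSimpleModule (TensorProduct ℤ R Rᵐᵒᵖ) R := by
    rw [isSimpleModule_iff]
    refine { toNontrivial := inferInstance, eq_bot_or_eq_top := ?_ }
    intro N
    let I : TwoSidedIdeal R := TwoSidedIdeal.mk' (N : Set R) N.zero_mem N.add_mem N.neg_mem
      (fun {x y} hy => by
        have := N.smul_mem (TensorProduct.tmul ℤ x (1 : Rᵐᵒᵖ)) hy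
        rw [hsm] at this
        simpa using this)
      (fun {x y} hx => by
        have := N.smul_mem (TensorProduct.tmul ℤ (1 : R) (MulOpposite.op y)) hx
        rw [hsm] at this
        simpa using this)
    have hI : ∀ x, x ∈ I ↔ x ∈ N := fun x => TwoSidedIdeal.mem_mk' _ _ _ _ _ _ x
    rcases eq_bot_or_eq_top I with h | h
    · left
      rw [eq_bot_iff]
      intro x hx
      rw [← hI, h, TwoSidedIdeal.mem_bot] at hx
      simpa using hx
    · right
      rw [eq_top_iff]
      intro x _
      rw [← hI, h]
      trivial
  -- endomorphisms are central multiplications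
  have hend : ∀ g : Module.End (TensorProduct ℤ R Rᵐᵒᵖ) R, ∃ z : Subring.center R,
      ∀ x, g x = z • x := by
    intro g
    have h1 : ∀ x, g x = x * g 1 := by
      intro x
      have := g.map_smul (TensorProduct.tmul ℤ x (1 : Rᵐᵒᵖ)) 1
      rw [hsm, hsm] at this
      simpa using this
    have h2 : ∀ x, g x = g 1 * x := by
      intro x
      have := g.map_smul (TensorProduct.tmul ℤ (1 : R) (MulOpposite.op x)) 1
      rw [hsm, hsm] at this
      simpa using this
    exact ⟨⟨g 1, Subring.mem_center_iff.2 fun x => by rw [← h1, ← h2]⟩, h2⟩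
  have hdens : ∀ f : R →ₗ[Subring.center R] R, ∃ t : TensorProduct ℤ R Rᵐᵒᵖ,
      ∀ x ∈ s, f x = t • x := by
    intro f
    let f' : Module.End (Module.End (TensorProduct ℤ R Rᵐᵒᵖ) R) R :=
      { toFun := f
        map_add' := f.map_add
        map_smul' := by
          intro g x
          obtain ⟨z, hz⟩ := hend g
          change f (g x) = g (f x)
          rw [hz, hz, f.map_smul] }
    exact jacobson_density f' s
  let toE : R → Module.End L M := fun r => Module.toModuleEnd L (S := R) M r
  have hli : LinearIndependent L (fun i : s => toE (i : R)) := by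
    rw [Fintype.linearIndependent_iff]
    intro c hc i
    obtain ⟨f, hf⟩ := kap_extend _ hs (fun j => if j = i then (1 : R) else 0)
    obtain ⟨t, ht⟩ := hdens f
    have h0 : ∀ m : M, ∑ j : s, c j • ((j : R) • m) = 0 := by
      intro m
      have := congrArg (fun e : Module.End L M => e m) hc
      simpa [toE] using this
    have h1 : ∀ (t : TensorProduct ℤ R Rᵐᵒᵖ) (m : M), ∑ j : s, c j • ((t • (j : R)) • m) = 0 := by
      intro t
      induction t using TensorProduct.induction_on with
      | zero =>
        intro m
        apply Finset.sum_eq_zero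
        intro j _
        have hz : (0 : TensorProduct ℤ R Rᵐᵒᵖ) • (j : R) = 0 := by
          have h := hsm 0 0 (j : R)
          rw [TensorProduct.zero_tmul, zero_mul] at h
          exact h
        have hz' : ((0 : TensorProduct ℤ R Rᵐᵒᵖ) • (j : R)) • m = 0 := by
          rw [hz]; exact zero_smul _ _
        exact (congrArg (fun y => c j • y) hz').trans (smul_zero _)
      | add x y hx hy => intro m; simp only [add_smul, smul_add, Finset.sum_add_distrib, hx m, hy m, add_zero]
      | tmul a b =>
        intro m
        have := congrArg (fun y => a • y) (h0 (b.unop • m))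
        simp only [Finset.smul_sum, smul_zero] at this
        rw [← this]
        apply Finset.sum_congr rfl
        intro j _
        rw [hsm, smul_comm a, smul_smul, smul_smul, mul_assoc]
    have h2 : ∀ m : M, c i • m = 0 := by
      intro m
      rw [← h1 t m, Finset.sum_eq_single i]
      · rw [← ht i i.2, hf, if_pos rfl, one_smul]
      · intro j _ hj
        rw [← ht j j.2, hf, if_neg hj, zero_smul, smul_zero]
      · simp
    by_contra hne
    have h3 : ∀ m : M, m = 0 := fun m => (smul_eq_zero_iff_right hne).1 (h2 m)
    have : (1 : R) = 0 := FaithfulSMul.eq_of_smul_eq_smul (α := M) fun m => by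
      rw [h3 m, smul_zero, smul_zero]
    exact one_ne_zero this
  have h1 := hli.fintype_card_le_finrank
  rw [Module.finrank_linearMap, Fintype.card_coe] at h1
  calc _ ≤ _ := h1
    _ ≤ k * k := Nat.mul_le_mul hk hk
    _ = k ^ 2 := (sq k).symm

/-- multilinear maps vanishing on a set vanish on its span -/
theorem kap_span {L E n : Type*} [Field L] [AddCommGroup E] [Module L E] [Fintype n] [DecidableEq n]
    (G : MultilinearMap L (fun _ : n => E) E) (T : Set E) (h : ∀ a, (∀ i, a i ∈ T) → G a = 0)
    (a : n → E) (ha : ∀ i, a i ∈ Submodule.span L T) : G a = 0 := by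
  have key : ∀ s : Finset n, ∀ a : n → E, (∀ i ∈ s, a i ∈ Submodule.span L T) →
      (∀ i, i ∉ s → a i ∈ T) → G a = 0 := by
    intro s
    induction s using Finset.induction_on with
    | empty => intro a _ h2; exact h a fun i => h2 i (Finset.notMem_empty i)
    | insert i s hi ih =>
      intro a h1 h2
      have : ∀ x ∈ Submodule.span L T, G (Function.update a i x) = 0 := by
        intro x hx
        induction hx using Submodule.span_induction with
        | mem x hx =>
          apply ih
          · intro j hj
            rw [Function.update_of_ne (by rintro rfl; exact hi hj)]
            exact h1 j (Finset.mem_insert_of_mem hj)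
          · intro j hj
            by_cases hji : j = i
            · subst hji; simpa using hx
            · rw [Function.update_of_ne hji]
              exact h2 j (by simp [hji, hj])
        | zero => exact G.map_update_zero a i
        | add x y _ _ hx hy => rw [G.map_update_add, hx, hy, add_zero]
        | smul c x _ hx => rw [G.map_update_smul, hx, smul_zero]
      have h3 := this (a i) (h1 i (Finset.mem_insert_self i s))
      rwa [Function.update_eq_self] at h3
  exact key Finset.univ a (fun i _ => ha i) (fun i hi => absurd (Finset.mem_univ i) hi)

theorem kap_chain {L M : Type*} [Field L] [AddCommGroup M] [Module L M] (v : ℕ → M)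
    (e : ℕ → Module.End L M) (p q : ℕ → ℕ)
    (he : ∀ i j, e i (v j) = 0 ∨ (q i = j ∧ e i (v j) = v (p i))) (x : ℕ) (l : List ℕ) :
    (l.map e).prod (v x) = 0 ∨ (l.IsChain (fun s t => q s = p t) ∧
      (l.map e).prod (v x) = v ((l.head?.map p).getD x)) := by
  induction l with
  | nil => right; simp
  | cons s l ih =>
    rw [List.map_cons, List.prod_cons, Module.End.mul_apply]
    rcases ih with h | ⟨h1, h2⟩
    · left; rw [h, map_zero]
    · rw [h2]
      rcases he s ((l.head?.map p).getD x) with h | ⟨h3, h4⟩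
      · left; exact h
      · right
        refine ⟨?_, by simpa using h4⟩
        cases l with
        | nil => simp
        | cons t l => 
          rw [List.isChain_cons_cons]
          exact ⟨by simpa using h3, h1⟩

theorem kap_stair {L M : Type*} [Field L] [AddCommGroup M] [Module L M] (v : ℕ → M)
    (e : ℕ → Module.End L M) (n : ℕ)
    (he : ∀ i < n, e i (v ((i + 1) / 2)) = v (i / 2)) :
    (List.ofFn (fun t : Fin n => e t)).prod (v (n / 2)) = v 0 := by
  induction n with
  | zero => simp
  | succ n ih =>
    rw [List.ofFn_succ', List.concat_eq_append, List.prod_append, Module.End.mul_apply]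
    simp only [List.prod_singleton, Fin.val_last]
    rw [he n (Nat.lt_succ_self n)]
    exact ih fun i hi => he i (by omega)

theorem kap_perm {n : ℕ} (σ : Equiv.Perm (Fin n))
    (h : (List.ofFn (fun t => (σ t : ℕ))).IsChain (fun s t => (s + 1) / 2 = t / 2)) : σ = 1 := by
  have hm : StrictMono σ := by
    cases n with
    | zero => intro i; exact i.elim0
    | succ n =>
      rw [Fin.strictMono_iff_lt_succ]
      intro i
      rw [List.isChain_iff_getElem] at h
      have h1 := h i (by simp)
      simp only [List.getElem_ofFn] at h1
      have h2 : σ i.castSucc ≠ σ i.succ := fun hc => by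
        have := σ.injective hc
        exact absurd this (Fin.castSucc_lt_succ).ne
      have h3 : ((σ i.castSucc : ℕ) + 1) / 2 = (σ i.succ : ℕ) / 2 := h1
      have h4 : (σ i.castSucc : ℕ) ≠ σ i.succ := fun hc => h2 (Fin.ext hc)
      rw [Fin.lt_def]
      omega
  ext t
  have : hm.orderIsoOfSurjective σ σ.surjective = OrderIso.refl _ := Subsingleton.elim _ _
  have := congrArg (fun f => f t) this
  simpa using congrArg Fin.val this

theorem kap_bound {F R M L : Type*} [Field F] [Ring R] [Algebra F R] [AddCommGroup M] [Module R M]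
    [Field L] [Module L M] [SMulCommClass R L M] [SMulCommClass L R M]
    (hD : ∀ (f : Module.End L M) (s : Finset M), ∃ a ∈ Submodule.span L
      (Set.range (Module.toModuleEnd L (S := R) M)), ∀ m ∈ s, f m = a m)
    (n : ℕ) (c : Equiv.Perm (Fin n) → F) (hc : c 1 ≠ 0)
    (hid : ∀ a : Fin n → R, ∑ σ, c σ • (List.ofFn (fun t => a (σ t))).prod = 0)
    (k : ℕ) (v : Fin k → M) (hv : LinearIndependent L v) : k ≤ n / 2 := by
  classical
  by_contra hk
  push Not at hk
  let toE := Module.toModuleEnd L (S := R) M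
  let G : MultilinearMap L (fun _ : Fin n => Module.End L M) (Module.End L M) :=
    ∑ σ : Equiv.Perm (Fin n), (LinearMap.mulLeft L (toE (algebraMap F R (c σ)))).compMultilinearMap
      ((MultilinearMap.mkPiAlgebraFin L n (Module.End L M)).domDomCongr σ)
  have hG : ∀ a, G a = ∑ σ : Equiv.Perm (Fin n), toE (algebraMap F R (c σ)) *
      (List.ofFn (fun t => a (σ t))).prod := by
    intro a
    simp [G]
  have hG0 : ∀ a : Fin n → Module.End L M, (∀ i, a i ∈ Submodule.span L (Set.range toE)) →
      G a = 0 := by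
    apply kap_span
    intro a ha
    choose r hr using ha
    have := congrArg toE (hid r)
    rw [map_sum, map_zero] at this
    rw [hG, ← this]
    apply Finset.sum_congr rfl
    intro σ _
    rw [Algebra.smul_def, map_mul, map_list_prod, List.map_ofFn]
    congr 3
    funext t
    exact (hr (σ t)).symm
  let w : ℕ → M := fun j => if h : j < k then v ⟨j, h⟩ else 0
  have hex : ∀ i : ℕ, ∃ a ∈ Submodule.span L (Set.range toE), ∀ j : Fin k,
      a (v j) = if (i + 1) / 2 = (j : ℕ) then w (i / 2) else 0 := by
    intro i
    obtain ⟨f, hf⟩ := kap_extend v hv (fun j => if (i + 1) / 2 = (j : ℕ) then w (i / 2) else 0)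
    obtain ⟨a, ha, h⟩ := hD f (Finset.univ.image v)
    refine ⟨a, ha, fun j => ?_⟩
    rw [← h (v j) (by simp), hf]
  choose e he1 he2 using hex
  have he3 : ∀ i j, e i (w j) = 0 ∨ ((i + 1) / 2 = j ∧ e i (w j) = w (i / 2)) := by
    intro i j
    by_cases hj : j < k
    · have hw : w j = v ⟨j, hj⟩ := dif_pos hj
      rw [hw, he2]
      by_cases h : (i + 1) / 2 = j
      · right; exact ⟨h, if_pos h⟩
      · left; exact if_neg h
    · left
      have hw : w j = 0 := dif_neg hj
      rw [hw, map_zero]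
  have he4 : ∀ i < n, e i (w ((i + 1) / 2)) = w (i / 2) := by
    intro i hi
    have hj : (i + 1) / 2 < k := by omega
    have hw : w ((i + 1) / 2) = v ⟨_, hj⟩ := dif_pos hj
    rw [hw, he2, if_pos rfl]
  have h0 := hG0 (fun t => e t) (fun t => he1 t)
  rw [hG] at h0
  have h1 := congrArg (fun g : Module.End L M => g (w (n / 2))) h0
  simp only [LinearMap.sum_apply, Module.End.mul_apply, LinearMap.zero_apply] at h1
  rw [Finset.sum_eq_single 1] at h1
  · simp only [Equiv.Perm.one_apply] at h1
    rw [kap_stair w e n he4] at h1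
    have h2 : algebraMap F R (c 1) • w 0 = 0 := h1
    have h3 : w 0 = 0 := by
      have h4 := congrArg (fun m => algebraMap F R (c 1)⁻¹ • m) h2
      simp only [smul_smul, ← map_mul, inv_mul_cancel₀ hc, map_one, one_smul, smul_zero] at h4
      exact h4
    have hw : w 0 = v ⟨0, by omega⟩ := dif_pos (by omega)
    exact hv.ne_zero _ (hw.symm.trans h3)
  · intro σ _ hσ
    have := kap_chain w e (fun i => i / 2) (fun i => (i + 1) / 2) he3 (n / 2)
      (List.ofFn (fun t => (σ t : ℕ)))
    rw [List.map_ofFn] at this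
    rcases this with h | ⟨h, -⟩
    · have h' : (List.ofFn (fun t => e (σ t))).prod (w (n / 2)) = 0 := h
      rw [h', map_zero]
    · exact absurd (kap_perm σ h) hσ
  · simp

theorem kap_density {R M L : Type*} [Ring R] [AddCommGroup M] [Module R M] [IsSimpleModule R M]
    [Field L] [Module L M] [SMulCommClass R L M] [SMulCommClass L R M]
    (hL : ∀ g : Module.End R M, (∀ (l : L) (m : M), g (l • m) = l • g m) →
      ∃ l : L, ∀ m, g m = l • m)
    (f : Module.End L M) (s : Finset M) : ∃ a ∈ Submodule.span L
      (Set.range (Module.toModuleEnd L (S := R) M)), ∀ m ∈ s, f m = a m := by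
  let toE := Module.toModuleEnd L (S := R) M
  let A := Algebra.adjoin L (Set.range toE)
  have hA : Subalgebra.toSubmodule A = Submodule.span L (Set.range toE) := by
    rw [Algebra.adjoin_eq_span]
    congr 1
    exact congrArg _ (Submonoid.closure_eq (MonoidHom.mrange (toE : R →* Module.End L M)))
  have hsA : ∀ (a : A) (m : M), a • m = (a : Module.End L M) m := fun a m => rfl
  let ρ : R → A := fun r => ⟨toE r, Algebra.subset_adjoin ⟨r, rfl⟩⟩
  have hρ : ∀ (r : R) (m : M), ρ r • m = r • m := fun r m => rfl
  have hsimple : IsSimpleModule A M := by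
    have := IsSimpleModule.nontrivial R M
    rw [isSimpleModule_iff]
    refine { toNontrivial := inferInstance, eq_bot_or_eq_top := ?_ }
    intro N
    let N' : Submodule R M :=
      { carrier := N
        add_mem' := N.add_mem
        zero_mem' := N.zero_mem
        smul_mem' := fun r m hm => N.smul_mem (ρ r) hm }
    have hN : ∀ x, x ∈ N' ↔ x ∈ N := fun x => Iff.rfl
    rcases eq_bot_or_eq_top N' with h | h
    · left
      rw [eq_bot_iff]
      intro x hx
      rw [← hN, h] at hx
      simpa using hx
    · right
      rw [eq_top_iff]
      intro x _
      rw [← hN, h]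
      trivial
  let f' : Module.End (Module.End A M) M :=
    { toFun := f
      map_add' := f.map_add
      map_smul' := by
        intro g x
        let g' : Module.End R M :=
          { toFun := g
            map_add' := g.map_add
            map_smul' := fun r m => g.map_smul (ρ r) m }
        obtain ⟨l, hl⟩ := hL g' (fun l m => by
          have := g.map_smul (algebraMap L A l) m
          exact this)
        change f (g x) = g (f x)
        have hl' : ∀ m, g m = l • m := hl
        rw [hl', hl', f.map_smul] }
  obtain ⟨a, ha⟩ := jacobson_density f' s
  refine ⟨a, ?_, ha⟩
  rw [← hA]
  exact a.2

theorem kap_simple {R M L : Type*} [Ring R] [AddCommGroup M] [Module R M] [IsSimpleModule R M]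
    [FaithfulSMul R M] [Field L] [Module L M] [SMulCommClass R L M] [Module.Finite L M] :
    IsSimpleRing R := by
  classical
  obtain ⟨s, hs⟩ := Module.Finite.fg_top (R := L) (M := M)
  have : SMulCommClass L R M := SMulCommClass.symm _ _ _
  let T : R →ₗ[R] (s →₀ M) := 
    (Finsupp.linearEquivFunOnFinite R M s).symm.toLinearMap ∘ₗ
      LinearMap.pi (fun m : s => LinearMap.toSpanSingleton R M (m : M))
  have hT : Function.Injective T := by
    rw [← LinearMap.ker_eq_bot, LinearMap.ker_eq_bot']
    intro r hr
    have h1 : ∀ m ∈ s, r • m = 0 := by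
      intro m hm
      have := DFunLike.congr_fun hr ⟨m, hm⟩
      simpa [T] using this
    apply FaithfulSMul.eq_of_smul_eq_smul (α := M)
    intro m
    rw [zero_smul]
    induction hs.ge (trivial : m ∈ ⊤) using Submodule.span_induction with
    | mem m hm => exact h1 m hm
    | zero => simp
    | add x y _ _ hx hy => rw [smul_add, hx, hy, add_zero]
    | smul l x _ hx => rw [smul_comm, hx, smul_zero]
  have := IsSimpleModule.nontrivial R M
  have hnt : Nontrivial R := Module.nontrivial R M
  have hss : IsSemisimpleRing R := IsSemisimpleModule.of_injective T hT
  have hiso : IsIsotypic R (s →₀ M) := by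
    refine IsIsotypicOfType.isIsotypic (S := M) ?_
    intro N hN
    have := IsSimpleModule.nontrivial R N
    obtain ⟨x, hx⟩ := exists_ne (0 : N)
    have hx' : (x : s →₀ M) ≠ 0 := fun h => hx (Subtype.ext h)
    obtain ⟨j, hj⟩ := DFunLike.ne_iff.1 hx'
    let g : N →ₗ[R] M := Finsupp.lapply j ∘ₗ N.subtype
    have hg : g ≠ 0 := fun h => hj (by
      have := congrArg (fun g => g x) h
      simpa [g] using this)
    exact ⟨LinearEquiv.ofBijective g (LinearMap.bijective_of_ne_zero hg)⟩
  exact (isSimpleRing_isArtinianRing_iff.2 ⟨hss, hiso.of_injective T hT, hnt⟩).1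

/-- **Kaplansky's theorem.** Let `R` be an `F`-algebra admitting a faithful simple left
module (i.e. `R` is primitive) and satisfying a nonzero polynomial identity of degree at
most `d` (an element of the free algebra lying in the span of the words of length `≤ d`).
Then `R` is a simple ring, its center is a field, and `R` is a finite-dimensional module
over its center of dimension at most `⌊d/2⌋²`. -/
theorem kaplansky_primitive_pi (F : Type*) [Field F] (R : Type*) [Ring R] [Algebra F R]
    (M : Type*) [AddCommGroup M] [Module R M] [IsSimpleModule R M] [FaithfulSMul R M]
    (d : ℕ) (f : FreeAlgebra F ℕ) (hf0 : f ≠ 0)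
    (hdeg : f ∈ Submodule.span F
      {x : FreeAlgebra F ℕ | ∃ w : List ℕ, w.length ≤ d ∧ x = (w.map (FreeAlgebra.ι F)).prod})
    (hid : ∀ a : ℕ → R, (FreeAlgebra.lift F a) f = 0) :
    IsSimpleRing R ∧ IsField (Subring.center R) ∧
      Module.Finite (Subring.center R) R ∧
      Module.finrank (Subring.center R) R ≤ (d / 2) ^ 2 := by
  obtain ⟨n, hn, c, hc, hmul⟩ := kap_multilinear d f hf0 hdeg hid
  obtain ⟨L, _, _, _, hL⟩ := kap_maxfield R M
  have : SMulCommClass L R M := SMulCommClass.symm _ _ _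
  have hrank : Module.rank L M ≤ ((n / 2 : ℕ) : Cardinal) := by
    apply rank_le
    intro s hs
    exact kap_bound (kap_density hL) n c hc hmul s.card _ (hs.comp _ s.equivFin.symm.injective)
  have hfin : Module.Finite L M := Module.rank_lt_aleph0_iff.1
    (hrank.trans_lt Cardinal.natCast_lt_aleph0)
  have hS : IsSimpleRing R := kap_simple (M := M) (L := L)
  have h := kap_indep R M L (d / 2)
    ((Module.finrank_le_of_rank_le hrank).trans (Nat.div_le_div_right hn))
  exact ⟨hS, IsSimpleRing.isField_center R, h.1, h.2⟩
end

section
/- Let F be a field and let R be a finitely generated associative unital F-algebra. Suppose there is an integer n such that every element r ∈ R is algebraic of degree at most n over F, i.e. satisfies a nonzero polynomial of degree ≤ n with coefficients in F. Then R is finite-dimensional as an F-vector space. (Solution of the bounded Kurosh problem, Jacobson–Kaplansky–Levitzki.) -/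
namespace Kurosh
universe u

/-- blocks: words over `α`, ordered by comparing after appending the maximal letter `a`. -/
structure Blk (α : Type u) (a : α) where
  val : List α

noncomputable instance {α : Type u} [LinearOrder α] (a : α) : LinearOrder (Blk α a) :=
  LinearOrder.lift' (fun B => B.val ++ [a]) (by
    rintro ⟨x⟩ ⟨y⟩ h
    simpa using h)

theorem Blk.lt_def {α : Type u} [LinearOrder α] {a : α} (B C : Blk α a) :
    B < C ↔ B.val ++ [a] < C.val ++ [a] := Iff.rfl

theorem Blk.le_def {α : Type u} [LinearOrder α] {a : α} (B C : Blk α a) :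
    B ≤ C ↔ B.val ++ [a] ≤ C.val ++ [a] := Iff.rfl

def flat {α : Type u} {a : α} (X : List (Blk α a)) : List α := (X.map Blk.val).flatten

@[simp] theorem flat_nil {α : Type u} {a : α} : flat ([] : List (Blk α a)) = [] := rfl
@[simp] theorem flat_cons {α : Type u} {a : α} (B : Blk α a) (X : List (Blk α a)) :
    flat (B :: X) = B.val ++ flat X := by simp [flat]
@[simp] theorem flat_append {α : Type u} {a : α} (X Y : List (Blk α a)) :
    flat (X ++ Y) = flat X ++ flat Y := by simp [flat]

def Good {α : Type u} [LinearOrder α] {a : α} (B : Blk α a) : Prop :=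
  ∃ (i : ℕ) (v : List α), B.val = a :: (List.replicate i a ++ v) ∧ v ≠ [] ∧ ∀ x ∈ v, x < a

def Divided {α : Type u} [LinearOrder α] (l : List (List α)) : Prop :=
  l.Nodup ∧ (∀ x ∈ l, x ≠ []) ∧ ∀ l' : List (List α), l'.Perm l → l' ≠ l → l'.flatten < l.flatten

def Red {α : Type u} [LinearOrder α] (n d : ℕ) (w : List α) : Prop :=
  (∃ v : List α, v ≠ [] ∧ (List.replicate n v).flatten <:+: w) ∨
  ∃ l : List (List α), l.length = d ∧ Divided l ∧ l.flatten <:+: w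

theorem Red.mono {α : Type u} [LinearOrder α] {n d : ℕ} {v w : List α} (h : Red n d v)
    (hvw : v <:+: w) : Red n d w := by
  rcases h with ⟨x, hx, h⟩ | ⟨l, h1, h2, h3⟩
  · exact Or.inl ⟨x, hx, h.trans hvw⟩
  · exact Or.inr ⟨l, h1, h2, h3.trans hvw⟩

theorem ext_lt {α : Type u} [LinearOrder α] : ∀ (p q s t : List α), p < q → ¬ p <+: q →
    p ++ s < q ++ t
  | [], q, s, t, _, h => absurd (List.nil_prefix) h
  | x :: p, [], s, t, h, _ => by simp at h
  | x :: p, y :: q, s, t, h, h' => by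
    rw [List.cons_lt_cons_iff] at h
    simp only [List.cons_append, List.cons_lt_cons_iff]
    rcases h with h | ⟨rfl, h⟩
    · exact Or.inl h
    · refine Or.inr ⟨rfl, ext_lt p q s t h ?_⟩
      intro h2
      exact h' (by simpa using h2)

theorem not_pre {α : Type u} [LinearOrder α] {a : α} : ∀ (i j : ℕ) (u v : List α),
    (∀ x ∈ u, x < a) → (∀ x ∈ v, x < a) → v ≠ [] →
    ¬ (List.replicate j a ++ v ++ [a]) <+: (List.replicate i a ++ u)
  | 0, 0, u, v, hu, hv, hne => by
    intro h
    have := h.subset (a := a) (by simp)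
    exact lt_irrefl _ (hu a (by simpa using this))
  | i + 1, 0, u, [], hu, hv, hne => absurd rfl hne
  | i + 1, 0, u, y :: v, hu, hv, hne => by
    intro h
    simp [List.replicate_succ] at h
    exact lt_irrefl _ (h.1 ▸ hv y (by simp))
  | 0, j + 1, [], v, hu, hv, hne => by
    simp [List.replicate_succ]
  | 0, j + 1, y :: u, v, hu, hv, hne => by
    intro h
    simp [List.replicate_succ] at h
    exact lt_irrefl _ (h.1 ▸ hu y (by simp))
  | i + 1, j + 1, u, v, hu, hv, hne => by
    intro h
    refine not_pre i j u v hu hv hne ?_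
    simpa [List.replicate_succ] using h

theorem Good.not_prefix {α : Type u} [LinearOrder α] {a : α} {B C : Blk α a} (hB : Good B)
    (hC : Good C) (h : C < B) : ¬ (C.val ++ [a]) <+: (B.val ++ [a]) := by
  intro hp
  rw [List.prefix_concat_iff] at hp
  rcases hp with hp | hp
  · rw [Blk.lt_def, hp] at h
    exact lt_irrefl _ h
  · obtain ⟨i, u, h1, h2, h3⟩ := hB
    obtain ⟨j, v, h4, h5, h6⟩ := hC
    rw [h1, h4] at hp
    refine not_pre i j u v h3 h6 h5 ?_
    simpa using hp

theorem flat_head {α : Type u} [LinearOrder α] {a : α} (X : List (Blk α a))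
    (hX : ∀ B ∈ X, Good B) (t : List α) : ∃ s, flat X ++ a :: t = a :: s := by
  cases X with
  | nil => exact ⟨t, rfl⟩
  | cons B X =>
    obtain ⟨i, v, h, -⟩ := hX B (by simp)
    exact ⟨_, by rw [flat_cons, h]; simp; rfl⟩

theorem flat_tail {α : Type u} [LinearOrder α] {a : α} (X : List (Blk α a))
    (hX : ∀ B ∈ X, Good B) (hne : X ≠ []) : flat X = a :: (flat X).tail := by
  cases X with
  | nil => exact absurd rfl hne
  | cons B X =>
    obtain ⟨i, v, h, -⟩ := hX B (by simp)
    rw [flat_cons, h]; simp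

theorem cmp {α : Type u} [LinearOrder α] {a : α} : ∀ (X Y : List (Blk α a)),
    (∀ B ∈ X, Good B) → (∀ B ∈ Y, Good B) → X < Y → flat X ++ [a] < flat Y ++ [a]
  | _, [], _, _, h => by simp at h
  | [], C :: Y, _, hY, _ => by
    obtain ⟨i, v, h, -⟩ := hY C (by simp)
    rw [flat_cons, h]
    simp only [flat_nil, List.nil_append, List.cons_append, List.cons_lt_cons_iff]
    refine Or.inr ⟨trivial, ?_⟩
    generalize hz : (List.replicate i a ++ v ++ flat Y ++ [a]) = z
    cases z with
    | nil => simp at hz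
    | cons => simp
  | B :: X, C :: Y, hX, hY, h => by
    rw [List.cons_lt_cons_iff] at h
    rcases h with h | ⟨rfl, h⟩
    · obtain ⟨s, hs⟩ := flat_head X (fun B hB => hX B (by simp [hB])) []
      obtain ⟨t, ht⟩ := flat_head Y (fun B hB => hY B (by simp [hB])) []
      have := ext_lt (B.val ++ [a]) (C.val ++ [a]) s t h
        ((hY C (by simp)).not_prefix (hX B (by simp)) h)
      simpa [hs, ht] using this
    · have := cmp X Y (fun B hB => hX B (by simp [hB])) (fun B hB => hY B (by simp [hB])) h
      simp only [flat_cons, List.append_assoc]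
      exact List.append_left_lt this

theorem flat_inj {α : Type u} [LinearOrder α] {a : α} (X Y : List (Blk α a))
    (hX : ∀ B ∈ X, Good B) (hY : ∀ B ∈ Y, Good B) (h : flat X = flat Y) : X = Y := by
  rcases lt_trichotomy X Y with h' | h' | h'
  · exact absurd (cmp X Y hX hY h') (by rw [h]; exact lt_irrefl _)
  · exact h'
  · exact absurd (cmp Y X hY hX h') (by rw [h]; exact lt_irrefl _)

def shift {α : Type u} {a : α} (Y : List (Blk α a)) : List α := (flat Y).tail ++ [a]

theorem shift_flatten {α : Type u} [LinearOrder α] {a : α} : ∀ (L : List (List (Blk α a))),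
    (∀ Y ∈ L, Y ≠ []) → (∀ Y ∈ L, ∀ B ∈ Y, Good B) →
    ([a] :: L.map shift).flatten = flat L.flatten ++ [a]
  | [], _, _ => by simp
  | Y :: L, h1, h2 => by
    have ih := shift_flatten L (fun Y hY => h1 Y (by simp [hY])) (fun Y hY => h2 Y (by simp [hY]))
    have := flat_tail Y (h2 Y (by simp)) (h1 Y (by simp))
    simp only [List.flatten_cons, List.map_cons, flat_append, shift, List.append_assoc] at ih ⊢
    rw [← ih]
    conv_rhs => rw [this]
    simp

theorem tail_lt {α : Type u} [LinearOrder α] {a : α} (v : List α) (hne : v ≠ [])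
    (hv : ∀ x ∈ v, x < a) (s t : List α) : ∀ i : ℕ,
    List.replicate i a ++ v ++ s < a :: (List.replicate i a ++ v) ++ t
  | 0 => by
    cases v with
    | nil => exact absurd rfl hne
    | cons x v => simp [List.cons_lt_cons_iff, hv x (by simp)]
  | i + 1 => by
    have := tail_lt v hne hv s t i
    simp only [List.replicate_succ, List.cons_append, List.cons_lt_cons_iff] at this ⊢
    exact Or.inr ⟨trivial, this⟩

theorem Divided.shift {α : Type u} [LinearOrder α] {a : α} (L : List (List (Blk α a)))
    (hL : Divided L) (hg : ∀ Y ∈ L, ∀ B ∈ Y, Good B) : Divided ([a] :: L.map shift) := by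
  obtain ⟨hnd, hne, hdiv⟩ := hL
  have hlen : ∀ Y ∈ L, ∃ s, flat Y = a :: s ∧ s ≠ [] := by
    intro Y hY
    cases Y with
    | nil => exact absurd rfl (hne _ hY)
    | cons B X =>
      obtain ⟨i, v, h, h2, -⟩ := hg _ hY B (by simp)
      exact ⟨_, by rw [flat_cons, h]; simp only [List.cons_append]; rfl, by simp [h2]⟩
  have hinj : ∀ Y ∈ L, ∀ Z ∈ L, Kurosh.shift Y = Kurosh.shift Z → Y = Z := by
    intro Y hY Z hZ h
    refine flat_inj Y Z (hg Y hY) (hg Z hZ) ?_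
    rw [flat_tail Y (hg Y hY) (hne Y hY), flat_tail Z (hg Z hZ) (hne Z hZ)]
    simpa [Kurosh.shift] using h
  have hnot : [a] ∉ L.map Kurosh.shift := by
    intro h
    obtain ⟨Y, hY, h⟩ := List.mem_map.1 h
    obtain ⟨s, hs, hs'⟩ := hlen Y hY
    simp [Kurosh.shift, hs, hs'] at h
  refine ⟨?_, ?_, ?_⟩
  · rw [List.nodup_cons]
    exact ⟨hnot, List.Nodup.map_on hinj hnd⟩
  · simp [Kurosh.shift]
  · intro l' hp hne'
    cases l' with
    | nil => simp at hp
    | cons p t =>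
    by_cases hpa : p = [a]
    · subst hpa
      have hp' := (List.perm_cons _).1 hp
      have : ∃ L' : List (List (Blk α a)), L'.Perm L ∧ t = L'.map Kurosh.shift := by
        have h1 : Relation.Comp (· = List.map Kurosh.shift ·) (fun x y : List (List (Blk α a)) => x.Perm y) t L := by
          rw [List.eq_map_comp_perm]; exact hp'
        obtain ⟨b, h1, h2⟩ := h1
        exact ⟨b, h2, h1⟩
      obtain ⟨L', hL', rfl⟩ := this
      have hlt := hdiv L' hL' (by rintro rfl; exact hne' rfl)
      have hne2 : ∀ Y ∈ L', Y ≠ [] := fun Y hY => hne Y (hL'.mem_iff.1 hY)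
      have hg2 : ∀ Y ∈ L', ∀ B ∈ Y, Good B := fun Y hY => hg Y (hL'.mem_iff.1 hY)
      rw [shift_flatten L hne hg, shift_flatten L' hne2 hg2]
      refine cmp _ _ ?_ ?_ hlt
      · intro B hB
        obtain ⟨Y, hY, hB⟩ := List.mem_flatten.1 hB
        exact hg2 Y hY B hB
      · intro B hB
        obtain ⟨Y, hY, hB⟩ := List.mem_flatten.1 hB
        exact hg Y hY B hB
    · have hpm : p ∈ L.map Kurosh.shift := by
        have := hp.mem_iff.1 (List.mem_cons_self : p ∈ p :: t)
        simpa [hpa] using this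
      obtain ⟨Y, hY, rfl⟩ := List.mem_map.1 hpm
      rw [shift_flatten L hne hg]
      obtain ⟨Z, L1, rfl⟩ : ∃ Z L1, L = Z :: L1 := by
        cases L with
        | nil => simp at hY
        | cons Z L1 => exact ⟨Z, L1, rfl⟩
      obtain ⟨y, Y1, rfl⟩ : ∃ y Y1, Y = y :: Y1 := by
        cases Y with
        | nil => exact absurd rfl (hne _ hY)
        | cons Z L1 => exact ⟨Z, L1, rfl⟩
      obtain ⟨z, Z1, rfl⟩ : ∃ z Z1, Z = z :: Z1 := by
        cases Z with
        | nil => exact absurd rfl (hne [] (by simp))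
        | cons Z L1 => exact ⟨Z, L1, rfl⟩
      have hyz : y ≤ z := by
        by_cases he : (y :: Y1) = (z :: Z1)
        · simp at he; exact he.1.le
        · have hperm := (List.perm_cons_erase hY).symm
          have := hdiv _ hperm (by intro h; exact he (List.cons.inj h).1)
          simp only [List.flatten_cons, List.cons_append, List.cons_lt_cons_iff] at this
          rcases this with h | h
          · exact h.le
          · exact h.1.le
      rw [Blk.le_def] at hyz
      obtain ⟨i, v, h1, h2, h3⟩ := hg _ hY y (by simp)
      obtain ⟨s, hs⟩ := flat_head (Z1 ++ L1.flatten) (by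
        intro B hB
        rcases List.mem_append.1 hB with hB | hB
        · exact hg (z :: Z1) (by simp) B (by simp [hB])
        · obtain ⟨Y, hY, hB⟩ := List.mem_flatten.1 hB
          exact hg Y (by simp [hY]) B hB) []
      have e1 : flat (((z :: Z1) :: L1).flatten) ++ [a] = (z.val ++ [a]) ++ s := by
        simpa using hs
      have e2 : (Kurosh.shift (y :: Y1) :: t).flatten
          = List.replicate i a ++ v ++ (flat Y1 ++ [a] ++ t.flatten) := by
        simp [Kurosh.shift, h1]
      rw [e1, e2]
      calc _ < a :: (List.replicate i a ++ v) ++ [a] := tail_lt v h2 h3 _ _ i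
        _ = y.val ++ [a] := by rw [h1]
        _ ≤ z.val ++ [a] := hyz
        _ ≤ _ := not_lt.1 (fun hlt => List.le_append_left (l₁ := z.val ++ [a]) (l₂ := s) hlt)

theorem decomp {α : Type u} [LinearOrder α] {a : α} : ∀ (w : List α), (∀ x ∈ w, x ≤ a) →
    ∃ (v : List α) (X : List (Blk α a)) (j : ℕ), w = v ++ flat X ++ List.replicate j a ∧
      (∀ x ∈ v, x < a) ∧ ∀ B ∈ X, Good B
  | [], _ => ⟨[], [], 0, by simp, by simp, by simp⟩
  | x :: w, h => by
    obtain ⟨v, X, j, h1, h2, h3⟩ := decomp w (fun x hx => h x (by simp [hx]))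
    rcases (h x (by simp)).lt_or_eq with hx | rfl
    · exact ⟨x :: v, X, j, by simp [h1], by simpa using ⟨hx, h2⟩, h3⟩
    · by_cases hv : v = []
      · subst hv
        cases X with
        | nil => exact ⟨[], [], j + 1, by simp [h1, List.replicate_succ], by simp, by simp⟩
        | cons B X =>
          refine ⟨[], ⟨x :: B.val⟩ :: X, j, by simp [h1], by simp, ?_⟩
          intro C hC
          rcases List.mem_cons.1 hC with rfl | hC
          · obtain ⟨i, u, h4, h5⟩ := h3 B (by simp)
            exact ⟨i + 1, u, by simp [h4, List.replicate_succ], h5⟩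
          · exact h3 C (by simp [hC])
      · refine ⟨[], ⟨x :: v⟩ :: X, j, by simp [h1], by simp, ?_⟩
        intro C hC
        rcases List.mem_cons.1 hC with rfl | hC
        · exact ⟨0, v, by simp, hv, h2⟩
        · exact h3 C (by simp [hC])

theorem finite_words {α : Type u} (S : Finset α) (k : ℕ) :
    {l : List α | (∀ x ∈ l, x ∈ S) ∧ l.length ≤ k}.Finite := by
  refine ((List.finite_length_le S k).image (List.map Subtype.val)).subset ?_
  rintro l ⟨h1, h2⟩
  exact ⟨l.attach.map (fun x => ⟨x.1, h1 x.1 x.2⟩), by simpa using h2, by simp⟩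

theorem flat_infix {α : Type u} {a : α} {X Y : List (Blk α a)} (h : X <:+: Y) :
    flat X <:+: flat Y := by
  obtain ⟨s, t, rfl⟩ := h
  exact ⟨flat s, flat t, by simp⟩

theorem flat_flatten {α : Type u} {a : α} (L : List (List (Blk α a))) :
    flat L.flatten = (L.map flat).flatten := by
  induction L with
  | nil => rfl
  | cons Y L ih => simp [ih]

theorem length_flat_le {α : Type u} {a : α} (X : List (Blk α a)) (k : ℕ)
    (h : ∀ B ∈ X, B.val.length ≤ k) : (flat X).length ≤ X.length * k := by
  induction X with
  | nil => simp
  | cons B X ih =>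
    have h1 := h B (by simp)
    have h2 := ih (fun B hB => h B (by simp [hB]))
    simp only [flat_cons, List.length_append, List.length_cons, add_mul]
    omega

theorem shirshov (n d : ℕ) : ∀ (α : Type u) [LinearOrder α] (S : Finset α),
    ∃ N : ℕ, ∀ w : List α, (∀ x ∈ w, x ∈ S) → N ≤ w.length → Red n d w := by
  induction d with
  | zero =>
    intro α _ S
    exact ⟨0, fun w _ _ => Or.inr ⟨[], rfl, ⟨by simp, by simp, by simp⟩, by simp⟩⟩
  | succ d ih =>
    intro α _ S
    induction S using Finset.induction_on_max with
    | empty =>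
      refine ⟨1, fun w hw hl => ?_⟩
      cases w with
      | nil => simp at hl
      | cons x w => exact absurd (hw x (by simp)) (by simp)
    | insert a S hS ihS =>
      obtain ⟨M, hM⟩ := ihS
      have hfin : {B : Blk α a | (∀ x ∈ B.val, x ∈ insert a S) ∧ B.val.length ≤ n + M}.Finite := by
        refine ((finite_words (insert a S) (n + M)).image Blk.mk).subset ?_
        intro B hB
        exact ⟨B.val, hB, rfl⟩
      obtain ⟨Q, hQ⟩ := ih (Blk α a) hfin.toFinset
      refine ⟨M + (Q + 1) * (n + M) + n, fun w hw hl => ?_⟩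
      by_cases hpow : List.replicate n a <:+: w
      · exact Or.inl ⟨[a], by simp, by simpa using hpow⟩
      by_cases hfree : ∃ v, v <:+: w ∧ (∀ x ∈ v, x ∈ S) ∧ M ≤ v.length
      · obtain ⟨v, h1, h2, h3⟩ := hfree
        exact (hM v h2 h3).mono h1
      push Not at hfree
      have hpow' : ∀ k, List.replicate k a <:+: w → k < n := by
        intro k hk
        by_contra hkn
        push Not at hkn
        refine hpow (List.IsInfix.trans ?_ hk)
        refine ⟨[], List.replicate (k - n) a, ?_⟩
        simp only [List.nil_append, List.replicate_append_replicate]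
        congr 1
        omega
      have hfree' : ∀ v, v <:+: w → (∀ x ∈ v, x < a) → v.length < M := by
        intro v hv h
        refine hfree v hv ?_
        intro x hx
        have := hw x (hv.subset hx)
        rcases Finset.mem_insert.1 this with rfl | h'
        · exact absurd (h x hx) (lt_irrefl _)
        · exact h'
      have hle : ∀ x ∈ w, x ≤ a := by
        intro x hx
        rcases Finset.mem_insert.1 (hw x hx) with rfl | h'
        · exact le_rfl
        · exact (hS x h').le
      obtain ⟨v, X, j, h1, h2, h3⟩ := decomp w hle
      have hv : v.length < M := hfree' v ⟨[], flat X ++ List.replicate j a, by simp [h1]⟩ h2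
      have hj : j < n := hpow' j ⟨v ++ flat X, [], by simp [h1]⟩
      have hXw : flat X <:+: w := ⟨v, List.replicate j a, by simp [h1]⟩
      have hBw : ∀ B ∈ X, B.val <:+: w := by
        intro B hB
        obtain ⟨s, t, rfl⟩ := List.append_of_mem hB
        refine List.IsInfix.trans ?_ hXw
        exact ⟨flat s, flat t, by simp⟩
      have hBl : ∀ B ∈ X, B.val.length ≤ n + M := by
        intro B hB
        obtain ⟨i, u, h4, h5, h6⟩ := h3 B hB
        have hw' := hBw B hB
        have hi : i + 1 < n := hpow' _ (List.IsInfix.trans ⟨[], u, by simp [h4, List.replicate_succ]⟩ hw')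
        have hu : u.length < M := hfree' u (List.IsInfix.trans
          ⟨List.replicate (i+1) a, [], by simp [h4, List.replicate_succ]⟩ hw') h6
        rw [h4]
        simp
        omega
      have hlX := length_flat_le X (n + M) hBl
      have hXQ : Q + 1 ≤ X.length := by
        by_contra hcon
        have : X.length * (n + M) ≤ (Q + 1) * (n + M) := Nat.mul_le_mul_right _ (by omega)
        have e : w.length = v.length + (flat X).length + j := by rw [h1]; simp [add_assoc]
        omega
      obtain ⟨X1, c, rfl⟩ : ∃ X1 c, X = X1 ++ [c] := by
        rcases List.eq_nil_or_concat X with h | ⟨X1, c, h⟩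
        · subst h; simp at hXQ
        · exact ⟨X1, c, by simpa using h⟩
      obtain ⟨i, u, h4, h5, h6⟩ := h3 c (by simp)
      have hX1w : flat X1 ++ [a] <:+: w := by
        refine List.IsInfix.trans ?_ hXw
        exact ⟨[], List.replicate i a ++ u, by simp [h4]⟩
      have hred := hQ X1 (by
        intro B hB
        have hBX : B ∈ X1 ++ [c] := by simp [hB]
        simp only [Set.Finite.mem_toFinset, Set.mem_ofPred_eq]
        exact ⟨fun x hx => hw x ((hBw B hBX).subset hx), hBl B hBX⟩) (by simpa using hXQ)
      rcases hred with ⟨V, hV, hin⟩ | ⟨L, hLl, hLd, hin⟩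
      · left
        refine ⟨flat V, ?_, ?_⟩
        · obtain ⟨B, hB⟩ := List.exists_mem_of_ne_nil _ hV
          have : n ≠ 0 := by omega
          have hBX : B ∈ X1 := hin.subset (by simp [this, hB])
          rw [flat_tail V ?_ hV]
          · simp
          · intro C hC
            exact h3 C (by simp [hin.subset (by simp [this, hC] : C ∈ (List.replicate n V).flatten)])
        · have := flat_infix hin
          rw [flat_flatten, List.map_replicate] at this
          exact this.trans (List.IsInfix.trans ⟨[], [a], by simp⟩ hX1w)
      · right
        have hg : ∀ Y ∈ L, ∀ B ∈ Y, Good B := by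
          intro Y hY B hB
          refine h3 B ?_
          have : B ∈ X1 := hin.subset (List.mem_flatten.2 ⟨Y, hY, hB⟩)
          simp [this]
        refine ⟨[a] :: L.map shift, by simp [hLl], hLd.shift L hg, ?_⟩
        rw [shift_flatten L hLd.2.1 hg]
        refine List.IsInfix.trans ?_ hX1w
        obtain ⟨s, t, rfl⟩ := hin
        obtain ⟨s', hs'⟩ := flat_head t (fun B hB => h3 B (by simp [hB])) []
        refine ⟨flat s, s', ?_⟩
        simp [hs']

end Kurosh
namespace Kurosh
open Finset

theorem sign_sum {D : ℕ} (F : Type*) [Field F] (U : Finset (Fin D)) :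
    (∑ T : Finset (Fin D), (-1 : F) ^ #T * (if U ⊆ T then 1 else 0)) =
      if U = univ then (-1) ^ D else 0 := by
  have h1 : (∑ T : Finset (Fin D), (-1 : F) ^ #T * (if U ⊆ T then 1 else 0)) =
      ∑ V ∈ (Uᶜ).powerset, (-1 : F) ^ (#U + #V) := by
    simp only [mul_ite, mul_one, mul_zero]
    rw [← Finset.sum_filter]
    symm
    refine Finset.sum_bij (fun V _ => U ∪ V) ?_ ?_ ?_ ?_
    · intro V hV; simp
    · intro V hV W hW h
      simp only [mem_powerset, subset_compl_comm] at hV hW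
      ext x
      have := congrArg (x ∈ ·) h
      simp only [mem_union, eq_iff_iff] at this
      have a1 := @hV x
      have a2 := @hW x
      simp only [mem_compl] at a1 a2
      tauto
    · intro T hT
      refine ⟨T \ U, ?_, ?_⟩
      · simp [mem_powerset, subset_iff]
      · simpa using hT
    · intro V hV
      rw [Finset.card_union_of_disjoint]
      rw [mem_powerset] at hV
      exact (disjoint_left.2 fun x hx hx' => by simpa [hx] using hV hx')
  rw [h1]
  simp only [pow_add, ← Finset.mul_sum]
  have h2 := congrArg (Int.cast : ℤ → F) (Finset.sum_powerset_neg_one_pow_card (x := Uᶜ))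
  push_cast at h2
  rw [h2]
  by_cases hU : U = univ
  · subst hU; simp
  · simp [hU, Finset.compl_eq_empty_iff]

theorem polarize {F R X ι : Type*} [Field F] [Ring R] [Algebra F R] [Fintype ι] [DecidableEq X]
    {D : ℕ} (c : ι → Fin D → X) (α : ι → F) (κ : Fin D → X)
    (h : ∀ z : X → R, ∑ τ, α τ • (List.ofFn (fun i => z (c τ i))).prod = 0) (x : Fin D → R) :
    ∑ φ : Equiv.Perm (Fin D), (∑ τ, if (fun i => κ (φ i)) = c τ then α τ else 0) •
      (List.ofFn (fun i => x (φ i))).prod = 0 := by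
  classical
  have key : ∀ T : Finset (Fin D), ∑ τ, α τ • ∑ φ : Fin D → Fin D,
      ((if univ.image φ ⊆ T then (1:F) else 0) * (if (fun i => κ (φ i)) = c τ then 1 else 0)) •
        (List.ofFn (fun i => x (φ i))).prod = 0 := by
    intro T
    rw [← h (fun v => ∑ j, ((if j ∈ T then (1:F) else 0) * (if κ j = v then 1 else 0)) • x j)]
    refine Finset.sum_congr rfl fun τ _ => ?_
    congr 1
    rw [← MultilinearMap.mkPiAlgebraFin_apply (R := F), MultilinearMap.map_sum]
    refine Finset.sum_congr rfl fun φ _ => ?_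
    rw [MultilinearMap.map_smul_univ, MultilinearMap.mkPiAlgebraFin_apply]
    congr 1
    rw [Finset.prod_mul_distrib, Finset.prod_boole, Finset.prod_boole]
    congr 2
    · simp [subset_iff]
    · simp [funext_iff]
  have key2 : ∑ T : Finset (Fin D), (-1 : F) ^ #T • ∑ τ, α τ • ∑ φ : Fin D → Fin D,
      ((if univ.image φ ⊆ T then (1:F) else 0) * (if (fun i => κ (φ i)) = c τ then 1 else 0)) •
        (List.ofFn (fun i => x (φ i))).prod = 0 := by
    simp only [key, smul_zero, Finset.sum_const_zero]
  have key3 : ∑ φ : Fin D → Fin D, ((if univ.image φ = univ then (-1 : F) ^ D else 0) *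
      (∑ τ, if (fun i => κ (φ i)) = c τ then α τ else 0)) •
        (List.ofFn (fun i => x (φ i))).prod = 0 := by
    rw [← key2]
    simp only [← sign_sum, Finset.smul_sum, Finset.sum_smul, Finset.sum_mul, Finset.mul_sum]
    rw [Finset.sum_comm, Finset.sum_congr rfl fun τ _ => Finset.sum_comm, Finset.sum_comm]
    refine Finset.sum_congr rfl fun T _ => ?_
    refine Finset.sum_congr rfl fun τ _ => ?_
    refine Finset.sum_congr rfl fun φ _ => ?_
    simp only [smul_smul]
    congr 1
    split_ifs <;> ring
  have key4 : (-1 : F) ^ D • ∑ φ : Equiv.Perm (Fin D),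
      (∑ τ, if (fun i => κ (φ i)) = c τ then α τ else 0) •
      (List.ofFn (fun i => x (φ i))).prod = 0 := by
    rw [← key3, Finset.smul_sum]
    refine Finset.sum_of_injOn (fun φ => ⇑φ) ?_ ?_ ?_ ?_
    · intro φ _ ψ _ h; exact DFunLike.coe_injective h
    · intro φ _; simp
    · intro φ _ hφ
      rw [if_neg, zero_mul, zero_smul]
      intro hs
      apply hφ
      have hsurj : Function.Surjective φ := by
        intro y
        have : y ∈ univ.image φ := by rw [hs]; simp
        simpa using this
      exact ⟨Equiv.ofBijective φ (Finite.surjective_iff_bijective.1 hsurj), by simp, rfl⟩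
    · intro φ _
      rw [if_pos (Finset.image_univ_of_surjective φ.surjective), smul_smul]
  rcases smul_eq_zero.1 key4 with h0 | h0
  · exact absurd h0 (pow_ne_zero _ (by simp))
  · exact h0

/-- the word `x^k₀ y x^k₁ y …` -/
def wd (l : List ℕ) : List Bool := (l.map (fun k => List.replicate k false ++ [true])).flatten

theorem rep_inj : ∀ (i j : ℕ) (s t : List Bool),
    List.replicate i false ++ true :: s = List.replicate j false ++ true :: t → i = j ∧ s = t
  | 0, 0, s, t, h => by simpa using h
  | 0, j + 1, s, t, h => by simp [List.replicate_succ] at h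
  | i + 1, 0, s, t, h => by simp [List.replicate_succ] at h
  | i + 1, j + 1, s, t, h => by
    have := rep_inj i j s t (by simpa [List.replicate_succ] using h)
    exact ⟨by omega, this.2⟩

theorem wd_inj : ∀ (l m : List ℕ), wd l = wd m → l = m
  | [], [], _ => rfl
  | [], k :: m, h => by simp [wd] at h
  | k :: l, [], h => by simp [wd] at h
  | k :: l, j :: m, h => by
    simp only [wd, List.map_cons, List.flatten_cons, List.append_assoc, List.singleton_append] at h
    obtain ⟨h1, h2⟩ := rep_inj _ _ _ _ h
    rw [h1, wd_inj l m h2]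

theorem wd_length (l : List ℕ) : (wd l).length = l.sum + l.length := by
  induction l with
  | nil => rfl
  | cons k l ih =>
    simp only [wd, List.map_cons, List.flatten_cons, List.length_append, List.length_replicate,
      List.sum_cons, List.length_cons, List.length_nil] at ih ⊢
    omega

theorem wd_prod {R : Type*} [Ring R] (z : Bool → R) (l : List ℕ) :
    ((wd l).map z).prod = (l.map (fun k => z false ^ k * z true)).prod := by
  induction l with
  | nil => rfl
  | cons k l ih =>
    simp only [wd, List.map_cons, List.flatten_cons, List.map_append, List.prod_append,
      List.prod_cons] at ih ⊢
    rw [ih]; simp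

theorem capelli {F R : Type*} [Field F] [Ring R] [Algebra F R] (n : ℕ)
    (halg : ∀ r : R, ∃ p : Polynomial F, p ≠ 0 ∧ p.natDegree ≤ n ∧ Polynomial.aeval r p = 0)
    (r y : R) : ∑ τ : Equiv.Perm (Fin (n + 1)), ((Equiv.Perm.sign τ : ℤ) : F) •
      (List.ofFn (fun i => r ^ (τ i : ℕ) * y)).prod = 0 := by
  have hdep : ¬ LinearIndependent F (fun i : Fin (n + 1) => r ^ (i : ℕ)) := by
    obtain ⟨p, hp0, hpn, hp⟩ := halg r
    rw [Fintype.not_linearIndependent_iff]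
    refine ⟨fun i => p.coeff i, ?_, ⟨p.natDegree, by omega⟩, by simpa using hp0⟩
    rw [Polynomial.aeval_eq_sum_range' (n := n + 1) (by omega)] at hp
    rw [← hp, Finset.sum_range]
  have := AlternatingMap.map_linearDependent (MultilinearMap.alternatization
    ((MultilinearMap.mkPiAlgebraFin F (n + 1) R).compLinearMap
      (fun _ => LinearMap.mulRight F y))) _ hdep
  rw [MultilinearMap.alternatization_apply] at this
  rw [← this]
  refine Finset.sum_congr rfl fun τ _ => ?_
  simp only [MultilinearMap.domDomCongr_apply, MultilinearMap.compLinearMap_apply,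
    MultilinearMap.mkPiAlgebraFin_apply, LinearMap.mulRight_apply]
  rcases Int.units_eq_one_or (Equiv.Perm.sign τ) with h | h <;> simp [h]

theorem exists_pi {F R : Type*} [Field F] [Ring R] [Algebra F R] (n : ℕ)
    (halg : ∀ r : R, ∃ p : Polynomial F, p ≠ 0 ∧ p.natDegree ≤ n ∧ Polynomial.aeval r p = 0) :
    ∃ (D : ℕ) (β : Equiv.Perm (Fin D) → F), β 1 ≠ 0 ∧ ∀ x : Fin D → R,
      ∑ φ, β φ • (List.ofFn (fun i => x (φ i))).prod = 0 := by
  classical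
  let W : Equiv.Perm (Fin (n + 1)) → List Bool := fun τ => wd (List.ofFn fun i => (τ i : ℕ))
  let D := (W 1).length
  have hW : ∀ τ, (W τ).length = D := by
    intro τ
    simp only [D, W, wd_length, List.length_ofFn, List.sum_ofFn]
    congr 1
    exact Equiv.sum_comp τ (fun i => (i : ℕ))
  have hWinj : Function.Injective W := by
    intro σ τ h
    have := List.ofFn_injective (wd_inj _ _ h)
    ext i
    exact congrFun this i
  let c : Equiv.Perm (Fin (n + 1)) → Fin D → Bool := fun τ i => (W τ).get (i.cast (hW τ).symm)
  have hc : ∀ τ, List.ofFn (c τ) = W τ := by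
    intro τ
    apply List.ext_get
    · simp [hW]
    · intro i h1 h2
      simp [c]
  refine ⟨D, fun φ => ∑ τ, if (fun i => c 1 (φ i)) = c τ then ((Equiv.Perm.sign τ : ℤ) : F) else 0,
    ?_, polarize c (fun τ => ((Equiv.Perm.sign τ : ℤ) : F)) (c 1) ?_⟩
  · have : ∀ τ, ((fun i => c 1 ((1 : Equiv.Perm (Fin D)) i)) = c τ) ↔ 1 = τ := by
      intro τ
      constructor
      · intro h
        apply hWinj
        rw [← hc, ← hc, ← h]
        rfl
      · rintro rfl; rfl
    simp only [this]
    simp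
  · intro z
    rw [← capelli n halg (z false) (z true)]
    refine Finset.sum_congr rfl fun τ _ => ?_
    congr 1
    have : List.ofFn (fun i => z (c τ i)) = (W τ).map z := by
      rw [← hc, List.map_ofFn]; rfl
    rw [this, wd_prod, List.map_ofFn]
    rfl

end Kurosh

namespace Kurosh

theorem pow_reduce {F R : Type*} [Field F] [Ring R] [Algebra F R] (n : ℕ) (r : R)
    (h : ∃ p : Polynomial F, p ≠ 0 ∧ p.natDegree ≤ n ∧ Polynomial.aeval r p = 0) :
    ∃ c : ℕ → F, r ^ n = ∑ i ∈ Finset.range n, c i • r ^ i := by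
  obtain ⟨p, hp0, hpn, hp⟩ := h
  let q := Polynomial.X ^ (n - p.natDegree) * (p * Polynomial.C p.leadingCoeff⁻¹)
  have hm : (p * Polynomial.C p.leadingCoeff⁻¹).Monic := Polynomial.monic_mul_leadingCoeff_inv hp0
  have hq : q.Monic := (Polynomial.monic_X_pow _).mul hm
  have hqn : q.natDegree = n := by
    rw [Polynomial.Monic.natDegree_mul (Polynomial.monic_X_pow _) hm,
      Polynomial.natDegree_mul_leadingCoeff_inv _ hp0, Polynomial.natDegree_X_pow]
    omega
  have hq0 : Polynomial.aeval r q = 0 := by simp [q, hp]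
  refine ⟨fun i => - q.coeff i, ?_⟩
  rw [Polynomial.aeval_eq_sum_range, hqn, Finset.sum_range_succ] at hq0
  have hl : q.coeff n = 1 := by rw [← hqn]; exact hq
  rw [hl, one_smul] at hq0
  simp only [neg_smul, Finset.sum_neg_distrib]
  exact eq_neg_of_add_eq_zero_right hq0

theorem shortlex_mid {α : Type*} [LinearOrder α] (p q X Y : List α) (hl : X.length = Y.length)
    (h : X < Y) : List.Shortlex (· < ·) (p ++ X ++ q) (p ++ Y ++ q) := by
  refine List.Shortlex.of_lex (by simp [hl]) ?_
  rw [List.append_assoc, List.append_assoc]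
  refine List.Lex.append_left _ ?_ p
  have : ∀ (X Y : List α), X.length = Y.length → X < Y → X ++ q < Y ++ q := by
    intro X
    induction X with
    | nil => intro Y h1 h2; cases Y <;> simp_all
    | cons x X ih =>
      intro Y h1 h2
      cases Y with
      | nil => simp at h1
      | cons y Y =>
        rw [List.cons_lt_cons_iff] at h2
        rw [List.cons_append, List.cons_append, List.cons_lt_cons_iff]
        rcases h2 with h2 | ⟨h2, h3⟩
        · exact Or.inl h2
        · exact Or.inr ⟨h2, ih Y (by simpa using h1) h3⟩
  exact this X Y hl h

theorem words_span {F R : Type*} [Field F] [Ring R] [Algebra F R] (n k : ℕ) (g : Fin k → R)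
    (halg : ∀ r : R, ∃ p : Polynomial F, p ≠ 0 ∧ p.natDegree ≤ n ∧ Polynomial.aeval r p = 0) :
    ∃ N : ℕ, ∀ w : List (Fin k), (w.map g).prod ∈
      Submodule.span F ((fun w : List (Fin k) => (w.map g).prod) '' {w | w.length < N}) := by
  classical
  obtain ⟨D, β, hβ, hid⟩ := exists_pi n halg
  obtain ⟨N, hN⟩ := shirshov n D (Fin k) Finset.univ
  refine ⟨N, fun w => ?_⟩
  have wf : WellFounded (List.Shortlex (α := Fin k) (· < ·)) :=
    List.Shortlex.wf wellFounded_lt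
  induction w using wf.induction with
  | h w ih =>
  by_cases hw : w.length < N
  · exact Submodule.subset_span ⟨w, hw, rfl⟩
  rcases hN w (by simp) (by omega) with ⟨v, hv, s, t, rfl⟩ | ⟨l, hl, ⟨hnd, -, hdiv⟩, s, t, rfl⟩
  · obtain ⟨c, hc⟩ := pow_reduce n (v.map g).prod (halg _)
    have hrep : ∀ i, (((s ++ (List.replicate i v).flatten ++ t).map g).prod) =
        (s.map g).prod * (v.map g).prod ^ i * (t.map g).prod := by
      intro i
      simp [List.map_flatten, List.prod_flatten, mul_assoc]
    rw [hrep, hc, Finset.mul_sum, Finset.sum_mul]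
    refine Submodule.sum_mem _ fun i hi => ?_
    rw [mul_smul_comm, smul_mul_assoc, ← hrep]
    refine Submodule.smul_mem _ _ (ih _ ?_)
    refine List.Shortlex.of_length_lt ?_
    have hv' : 0 < v.length := List.length_pos_iff.2 hv
    have := Nat.mul_lt_mul_of_pos_right (Finset.mem_range.1 hi) hv'
    simp
    omega
  · subst hl
    have hperm : ∀ φ : Equiv.Perm (Fin l.length),
        (List.ofFn (fun i => l.get (φ i))).Perm l := by
      intro φ
      have := Equiv.Perm.ofFn_comp_perm φ l.get
      rw [List.ofFn_get] at this
      exact this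
    have hval : ∀ φ : Equiv.Perm (Fin l.length),
        (((s ++ (List.ofFn (fun i => l.get (φ i))).flatten ++ t).map g).prod) =
        (s.map g).prod * (List.ofFn (fun i => ((l.get (φ i)).map g).prod)).prod
          * (t.map g).prod := by
      intro φ
      simp only [List.map_append, List.prod_append, List.map_flatten, List.prod_flatten,
        List.map_ofFn]
      rfl
    have h1 := hid (fun i => ((l.get i).map g).prod)
    have h2 : ∑ φ, β φ •
        (((s ++ (List.ofFn (fun i => l.get (φ i))).flatten ++ t).map g).prod) = 0 := by
      simp only [hval]
      have := congrArg (fun z => (s.map g).prod * z * (t.map g).prod) h1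
      simpa only [Finset.mul_sum, Finset.sum_mul, mul_smul_comm, smul_mul_assoc, mul_zero,
        zero_mul] using this
    rw [← Finset.add_sum_erase _ _ (Finset.mem_univ 1)] at h2
    have h3 : (List.ofFn (fun i => l.get ((1 : Equiv.Perm (Fin l.length)) i))) = l := by
      simp
    rw [h3] at h2
    rw [← Submodule.smul_mem_iff _ hβ, eq_neg_of_add_eq_zero_left h2]
    refine Submodule.neg_mem _ (Submodule.sum_mem _ fun φ hφ => Submodule.smul_mem _ _ (ih _ ?_))
    refine shortlex_mid _ _ _ _ (hperm φ).flatten.length_eq (hdiv _ (hperm φ) ?_)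
    intro heq
    apply (Finset.mem_erase.1 hφ).1
    have : (fun i => l.get (φ i)) = l.get := by
      apply List.ofFn_injective
      rw [heq, List.ofFn_get]
    ext i
    have h5 := (List.nodup_iff_injective_get.1 hnd) (congrFun this i)
    rw [h5]; rfl

end Kurosh

/-- **Solution of the bounded Kurosh problem (Jacobson–Kaplansky–Levitzki).**
A finitely generated associative unital algebra `R` over a field `F` in which every element
is algebraic of degree at most `n` over `F` is finite dimensional over `F`. -/
theorem bounded_kurosh (F : Type*) [Field F] (R : Type*) [Ring R] [Algebra F R]
    (hfg : Algebra.FiniteType F R) (n : ℕ)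
    (halg : ∀ r : R, ∃ p : Polynomial F, p ≠ 0 ∧ p.natDegree ≤ n ∧ Polynomial.aeval r p = 0) :
    FiniteDimensional F R := by
  obtain ⟨S, hS⟩ := hfg.out
  let g : Fin S.card → R := fun i => (S.equivFin.symm i : R)
  obtain ⟨N, hN⟩ := Kurosh.words_span n S.card g halg
  have hfin : {w : List (Fin S.card) | w.length < N}.Finite := List.finite_length_lt _ N
  refine ⟨?_⟩
  have htop : (⊤ : Submodule F R) = Submodule.span F
      ((fun w : List (Fin S.card) => (w.map g).prod) '' {w | w.length < N}) := by
    symm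
    rw [eq_top_iff, ← Algebra.top_toSubmodule, ← hS, Algebra.adjoin_eq_span, Submodule.span_le]
    intro r hr
    obtain ⟨l, hl, rfl⟩ := Submonoid.exists_list_of_mem_closure hr
    have : ∃ w : List (Fin S.card), w.map g = l := by
      refine ⟨l.attach.map (fun x => S.equivFin ⟨x.1, hl x.1 x.2⟩), ?_⟩
      simp [g, Function.comp_def]
    obtain ⟨w, rfl⟩ := this
    exact hN w
  rw [htop]
  exact Submodule.fg_span (hfin.image _)
end

section
/- Let F be a field and let A and B be F-algebras each of which satisfies a nonzero polynomial identity. Then the tensor product A ⊗_F B also satisfies a nonzero polynomial identity. (Regev's theorem.) -/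
open scoped TensorProduct

/-- An `F`-algebra `R` satisfies the nonzero polynomial identity `f` (an element of the free
associative algebra on countably many noncommuting variables) if every substitution of the
variables by elements of `R` annihilates `f`. -/
def SatisfiesNonzeroPI (F : Type*) [Field F] (R : Type*) [Ring R] [Algebra F R] : Prop :=
  ∃ f : FreeAlgebra F ℕ, f ≠ 0 ∧ ∀ a : ℕ → R, (FreeAlgebra.lift F a) f = 0

namespace Regev

lemma pi_iff (F : Type*) [Field F] (R : Type*) [Ring R] [Algebra F R] :
    SatisfiesNonzeroPI F R ↔ ∃ c : List ℕ →₀ F, c ≠ 0 ∧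
      ∀ a : ℕ → R, (c.sum fun u r => r • (u.map a).prod) = 0 := by
  have key : ∀ (a : ℕ → R) (f : FreeAlgebra F ℕ), FreeAlgebra.lift F a f =
      MonoidAlgebra.lift F R (FreeMonoid ℕ) (FreeMonoid.lift a)
        (FreeAlgebra.equivMonoidAlgebraFreeMonoid f) := by
    intro a f
    have : FreeAlgebra.lift F a = (MonoidAlgebra.lift F R (FreeMonoid ℕ) (FreeMonoid.lift a)).comp
        (FreeAlgebra.equivMonoidAlgebraFreeMonoid (R := F) (X := ℕ)).toAlgHom := by
      ext x
      simp [FreeAlgebra.equivMonoidAlgebraFreeMonoid]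
    rw [this]; rfl
  have hl : ∀ (a : ℕ → R) (u : FreeMonoid ℕ), FreeMonoid.lift a u = (List.map a u).prod :=
    fun a u => FreeMonoid.lift_apply a u
  constructor
  · rintro ⟨f, hf, h⟩
    refine ⟨(FreeAlgebra.equivMonoidAlgebraFreeMonoid f).coeff, ?_, fun a => ?_⟩
    · intro h0
      apply hf
      apply (FreeAlgebra.equivMonoidAlgebraFreeMonoid (R := F) (X := ℕ)).injective
      rw [map_zero]
      exact MonoidAlgebra.coeff_injective h0
    · have := h a
      rw [key, MonoidAlgebra.lift_apply] at this
      simp only [hl] at this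
      exact this
  · rintro ⟨c, hc, h⟩
    refine ⟨FreeAlgebra.equivMonoidAlgebraFreeMonoid.symm (MonoidAlgebra.ofCoeff c), ?_, fun a => ?_⟩
    · intro h0
      rw [map_eq_zero_iff _ (AlgEquiv.injective _)] at h0
      apply hc
      exact congrArg MonoidAlgebra.coeff h0
    · rw [key, AlgEquiv.apply_symm_apply, MonoidAlgebra.lift_apply]
      simp only [hl]
      exact h a

lemma sublist_blocks {s l : List ℕ} (h : s.Sublist l) :
    ∃ (p : List ℕ) (bs : List (ℕ × List ℕ)), bs.map Prod.fst = s ∧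
      l = p ++ (bs.map fun b => b.1 :: b.2).flatten := by
  induction h with
  | slnil => exact ⟨[], [], rfl, rfl⟩
  | cons x h ih =>
    obtain ⟨p, bs, h1, h2⟩ := ih
    exact ⟨x :: p, bs, h1, by simp [h2]⟩
  | cons_cons x h ih =>
    obtain ⟨p, bs, h1, h2⟩ := ih
    exact ⟨[], (x, p) :: bs, by simp [h1], by simp [h2]⟩

lemma flatten_lt : ∀ (bs bs' : List (ℕ × List ℕ)), (bs.map Prod.fst).Pairwise (· > ·) →
    bs'.Perm bs → bs' ≠ bs →
    (bs'.map fun b => b.1 :: b.2).flatten < (bs.map fun b => b.1 :: b.2).flatten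
  | [], bs', _, hp, hne => by
    exact absurd hp.eq_nil hne
  | b :: t, [], _, hp, _ => by
    have := hp.length_eq
    simp at this
  | b :: t, b' :: t', hs, hp, hne => by
    simp only [List.map_cons, List.pairwise_cons] at hs
    by_cases hb : b' = b
    · subst hb
      have ht := flatten_lt t t' hs.2 ((List.perm_cons b').1 hp) (by simpa using hne)
      simp only [List.map_cons, List.flatten_cons]
      exact List.append_left_lt ht
    · have : b' ∈ b :: t := hp.subset (by simp)
      have hm : b' ∈ t := by simpa [hb] using this
      have hlt : b'.1 < b.1 := hs.1 b'.1 (List.mem_map_of_mem hm)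
      simp only [List.map_cons, List.flatten_cons, List.cons_append]
      exact List.cons_lt_cons_iff.2 (Or.inl hlt)

lemma exists_col : ∀ (l : List ℕ), l.Nodup → ∃ col : ℕ → ℕ,
    (∀ x ∈ l, ∃ s : List ℕ, (x :: s).Sublist l ∧ (x :: s).Pairwise (· > ·) ∧ s.length = col x) ∧
    l.Pairwise (fun x y => y < x → col y < col x)
  | [], _ => ⟨0, by simp, by simp⟩
  | x :: l, hn => by
    obtain ⟨hx, hl⟩ := List.nodup_cons.1 hn
    obtain ⟨col, h1, h2⟩ := exists_col l hl
    have hne : ∀ y ∈ l, y ≠ x := fun y hy h => hx (h ▸ hy)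
    let T : Finset ℕ := l.toFinset.filter (· < x)
    refine ⟨Function.update col x (T.sup fun y => col y + 1), ?_, ?_⟩
    · intro y hy
      by_cases hyx : y = x
      · subst hyx
        rcases T.eq_empty_or_nonempty with hT | hT
        · exact ⟨[], by simp, by simp, by simp [hT]⟩
        · obtain ⟨z, hz, hz'⟩ := Finset.exists_mem_eq_sup T hT (fun y => col y + 1)
          simp only [T, Finset.mem_filter, List.mem_toFinset] at hz
          obtain ⟨s, hs1, hs2, hs3⟩ := h1 z hz.1
          refine ⟨z :: s, hs1.cons_cons _, ?_, by simp [hz', hs3]⟩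
          refine List.pairwise_cons.2 ⟨?_, hs2⟩
          intro v hv
          rcases List.mem_cons.1 hv with rfl | hv
          · exact hz.2
          · exact lt_trans ((List.pairwise_cons.1 hs2).1 v hv) hz.2
      · have hy' : y ∈ l := by simpa [hyx] using hy
        obtain ⟨s, hs1, hs2, hs3⟩ := h1 y hy'
        exact ⟨s, hs1.cons _, hs2, by simp [hyx, hs3]⟩
    · refine List.pairwise_cons.2 ⟨?_, ?_⟩
      · intro y hy hyx
        rw [Function.update_self, Function.update_of_ne (hne y hy)]
        exact Nat.lt_of_succ_le (Finset.le_sup (f := fun y => col y + 1)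
          (show y ∈ T by simp [T, hy, hyx]))
      · refine h2.imp_of_mem ?_
        intro a b ha hb hab
        rwa [Function.update_of_ne (hne a ha), Function.update_of_ne (hne b hb)]

lemma col_inj (col : ℕ → ℕ) : ∀ (l l' : List ℕ), l.Perm l' → l.map col = l'.map col →
    l.Pairwise (fun x y => col x = col y → x < y) →
    l'.Pairwise (fun x y => col x = col y → x < y) → l = l'
  | [], l', hp, _, _, _ => by simpa using hp.symm.eq_nil.symm
  | x :: t, [], hp, _, _, _ => by simpa using hp.length_eq
  | x :: t, x' :: t', hp, hc, h1, h2 => by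
    simp only [List.map_cons, List.cons.injEq] at hc
    rw [List.pairwise_cons] at h1 h2
    have hxx : x = x' := by
      by_contra hne
      have m1 : x ∈ x' :: t' := hp.subset (by simp)
      have m2 : x' ∈ x :: t := hp.symm.subset (by simp)
      have m1' : x ∈ t' := by simpa [hne] using m1
      have m2' : x' ∈ t := by simpa [Ne.symm hne] using m2
      exact absurd (h1.1 _ m2' hc.1) (not_lt.2 (h2.1 _ m1' hc.1.symm).le)
    subst hxx
    rw [col_inj col t t' ((List.perm_cons x).1 hp) hc.2 h1.2 h2.2]

open Classical in
/-- words of `0, …, n-1` without decreasing subwords of length `d` -/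
noncomputable def good (n d : ℕ) : Finset (List ℕ) :=
  (List.range n).permutations.toFinset.filter
    fun l => ¬ ∃ s : List ℕ, s.Sublist l ∧ s.Pairwise (· > ·) ∧ s.length = d

lemma card_good (n d : ℕ) : (good n d).card ≤ (d ^ 2) ^ n := by
  classical
  have hex : ∀ l ∈ good n d, ∃ col : ℕ → ℕ, (∀ x < n, col x < d) ∧
      l.Pairwise (fun x y => col x = col y → x < y) := by
    intro l hl
    simp only [good, Finset.mem_filter, List.mem_toFinset, List.mem_permutations] at hl
    obtain ⟨hp, hg⟩ := hl
    have hnd : l.Nodup := hp.nodup_iff.2 List.nodup_range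
    obtain ⟨col, h1, h2⟩ := exists_col l hnd
    refine ⟨col, ?_, ?_⟩
    · intro x hx
      have hx' : x ∈ l := hp.mem_iff.2 (List.mem_range.2 hx)
      obtain ⟨s, hs1, hs2, hs3⟩ := h1 x hx'
      by_contra hlt
      apply hg
      refine ⟨(x :: s).take d, (List.take_sublist _ _).trans hs1,
        hs2.sublist (List.take_sublist _ _), ?_⟩
      rw [List.length_take, List.length_cons]
      omega
    · refine (hnd.and h2).imp ?_
      rintro a b ⟨hne, h⟩ he
      rcases lt_trichotomy a b with h' | h' | h'
      · exact h'
      · exact absurd h' hne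
      · have := h h'
        omega
  choose! col hc1 hc2 using hex
  have hcard : ((Fintype.piFinset fun _ : Fin n => Finset.range d) ×ˢ
      (Fintype.piFinset fun _ : Fin n => Finset.range d)).card = (d ^ 2) ^ n := by
    simp; ring
  rw [← hcard]
  have hperm : ∀ l ∈ good n d, l.Perm (List.range n) := fun l hl => by
    simp only [good, Finset.mem_filter, List.mem_toFinset, List.mem_permutations] at hl
    exact hl.1
  refine Finset.card_le_card_of_injOn
    (fun l => (fun i : Fin n => col l (l.getD i 0), fun i : Fin n => col l i)) ?_ ?_
  · intro l hl
    have hlen : l.length = n := by simpa using (hperm l hl).length_eq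
    simp only [Finset.coe_product, Set.mem_prod, Finset.mem_coe, Fintype.mem_piFinset,
      Finset.mem_range]
    refine ⟨fun i => hc1 l hl _ ?_, fun i => hc1 l hl _ i.2⟩
    rw [List.getD_eq_getElem _ _ (by rw [hlen]; exact i.2)]
    exact List.mem_range.1 ((hperm l hl).subset (List.getElem_mem _))
  · intro l hl l' hl' h
    simp only [Prod.mk.injEq] at h
    have hlen : l.length = n := by simpa using (hperm l hl).length_eq
    have hlen' : l'.length = n := by simpa using (hperm l' hl').length_eq
    have hcc : ∀ x < n, col l x = col l' x := fun x hx => congrFun h.2 ⟨x, hx⟩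
    have hm : ∀ x ∈ l', x < n := fun x hx => List.mem_range.1 ((hperm l' hl').subset hx)
    refine col_inj (col l) l l' ((hperm l hl).trans (hperm l' hl').symm) ?_ (hc2 l hl) ?_
    · apply List.ext_getElem (by simp [hlen, hlen'])
      intro i h1 h2
      simp only [List.length_map] at h1 h2
      have := congrFun h.1 ⟨i, by omega⟩
      simp only [List.getD_eq_getElem _ _ h1, List.getD_eq_getElem _ _ h2] at this
      simp only [List.getElem_map]
      rw [this, hcc _ (hm _ (List.getElem_mem _))]
    · refine (hc2 l' hl').imp_of_mem ?_
      intro a b ha hb hab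
      rwa [hcc a (hm a ha), hcc b (hm b hb)]

open Equiv

lemma prod_ofFn_ite {A : Type*} [Ring A] : ∀ {m : ℕ} (p : Fin m → Prop) [DecidablePred p]
    [Decidable (∀ k, p k)] (x : Fin m → A),
    (List.ofFn fun k => if p k then x k else 0).prod = if ∀ k, p k then (List.ofFn x).prod else 0 := by
  intro m p _ _ x
  split_ifs with h
  · simp [h]
  · push Not at h
    obtain ⟨k, hk⟩ := h
    apply List.prod_eq_zero
    rw [List.mem_ofFn]
    exact ⟨k, by simp [hk]⟩

open Classical in
lemma polar_aux {A : Type*} [Ring A] {d m : ℕ} (w : Fin d → ℕ) (v : Fin m → ℕ) (P : A)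
    (g : Fin m → Fin d) :
    ∑ S : Finset (Fin d), (-1 : A) ^ S.card * (if ∀ k, w (g k) = v k ∧ g k ∈ S then P else 0) =
      if Function.Surjective g ∧ w ∘ g = v then (-1) ^ d * P else 0 := by
  by_cases hs : Function.Surjective g
  · rw [Finset.sum_eq_single Finset.univ]
    · simp [hs, funext_iff]
    · intro S _ hS
      rw [if_neg, mul_zero]
      intro h
      apply hS
      ext j
      obtain ⟨k, rfl⟩ := hs j
      simp [(h k).2]
    · simp
  · rw [if_neg (fun h => hs h.1)]
    simp only [Function.Surjective, not_forall, not_exists] at hs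
    obtain ⟨j, hj⟩ := hs
    have hiff : ∀ S : Finset (Fin d), ∀ k, (g k ∈ symmDiff S {j} ↔ g k ∈ S) := by
      intro S k
      simp [Finset.mem_symmDiff, hj k]
    refine Finset.sum_involution (fun S _ => symmDiff S {j}) ?_ ?_ ?_ ?_
    · intro S _
      simp only [hiff]
      have : (-1 : A) ^ (symmDiff S {j}).card = - (-1 : A) ^ S.card := by
        by_cases h : j ∈ S
        · have e : symmDiff S {j} = S.erase j := by
            ext x; simp only [Finset.mem_symmDiff, Finset.mem_singleton, Finset.mem_erase]
            by_cases hx : x = j <;> simp [hx, h]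
          rw [e, ← Finset.card_erase_add_one h, pow_succ]; simp
        · have e : symmDiff S {j} = insert j S := by
            ext x; simp only [Finset.mem_symmDiff, Finset.mem_singleton, Finset.mem_insert]
            by_cases hx : x = j <;> simp [hx, h]
          rw [e, Finset.card_insert_of_notMem h, pow_succ]; simp
      rw [this, neg_mul, add_neg_cancel]
    · intro S _ _ h
      have : symmDiff S {j} = S := h
      simp at this
    · intros; simp
    · intros; simp

open Classical in
lemma polar (F : Type*) [Field F] {A : Type*} [Ring A] [Algebra F A] {d : ℕ} (w : Fin d → ℕ)
    (u : List ℕ) (hu : u.length ≤ d) (a : Fin d → A) :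
    ∑ S : Finset (Fin d), (-1 : A) ^ S.card *
      (u.map fun i => ∑ j, if w j = i ∧ j ∈ S then a j else 0).prod =
    (-1) ^ d * ∑ σ : Perm (Fin d), if u = List.ofFn (w ∘ σ) then (List.ofFn (a ∘ σ)).prod else 0 := by
  obtain ⟨m, v, rfl⟩ : ∃ (m : ℕ) (v : Fin m → ℕ), u = List.ofFn v :=
    ⟨u.length, u.get, (List.ofFn_get u).symm⟩
  rw [List.length_ofFn] at hu
  have expand : ∀ S : Finset (Fin d),
      ((List.ofFn v).map fun i => ∑ j, if w j = i ∧ j ∈ S then a j else 0).prod =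
      ∑ g : Fin m → Fin d, if ∀ k, w (g k) = v k ∧ g k ∈ S then (List.ofFn (a ∘ g)).prod else 0 := by
    intro S
    rw [List.map_ofFn]
    have := (MultilinearMap.mkPiAlgebraFin F m A).map_sum
      (g := fun k (j : Fin d) => if w j = v k ∧ j ∈ S then a j else 0)
    simp only [MultilinearMap.mkPiAlgebraFin_apply] at this
    refine Eq.trans this ?_
    refine Finset.sum_congr rfl fun g _ => ?_
    exact prod_ofFn_ite _ _
  simp only [expand, Finset.mul_sum]
  rw [Finset.sum_comm]
  have : ∀ g : Fin m → Fin d, ∑ S : Finset (Fin d), (-1 : A) ^ S.card *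
      (if ∀ k, w (g k) = v k ∧ g k ∈ S then (List.ofFn (a ∘ g)).prod else 0) = _ :=
    fun g => polar_aux w v _ g
  simp only [this]
  rcases hu.lt_or_eq with hlt | rfl
  · rw [Finset.sum_eq_zero, Finset.sum_eq_zero]
    · intro σ _
      rw [if_neg, mul_zero]
      intro h
      have := congrArg List.length h
      simp at this
      omega
    · intro g _
      rw [if_neg]
      rintro ⟨h, -⟩
      have := Fintype.card_le_of_surjective g h
      simp at this
      omega
  · symm
    refine Finset.sum_of_injOn (fun σ : Perm (Fin m) => (σ : Fin m → Fin m)) ?_ ?_ ?_ ?_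
    · intro σ _ τ _ h
      exact Equiv.coe_fn_injective h
    · intro σ _; simp
    · intro g _ hg
      rw [if_neg]
      rintro ⟨h, -⟩
      apply hg
      exact ⟨Equiv.ofBijective g (Finite.surjective_iff_bijective.1 h), by simp, rfl⟩
    · intro σ _
      have hσ : Function.Surjective σ := σ.surjective
      simp only [hσ, true_and, List.ofFn_inj, mul_ite, mul_zero]
      exact if_congr eq_comm rfl rfl

lemma multilin (F : Type*) [Field F] (A : Type*) [Ring A] [Algebra F A] (c : List ℕ →₀ F)
    (hc : c ≠ 0) (h : ∀ a : ℕ → A, (c.sum fun u r => r • (u.map a).prod) = 0) :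
    ∃ (d : ℕ) (γ : Perm (Fin d) → F), γ 1 ≠ 0 ∧
      ∀ a : Fin d → A, ∑ σ, γ σ • (List.ofFn (a ∘ σ)).prod = 0 := by
  classical
  obtain ⟨w, hw, hmax⟩ := Finset.exists_max_image c.support List.length
    (Finsupp.support_nonempty_iff.2 hc)
  refine ⟨w.length, fun σ => c (List.ofFn (w.get ∘ σ)), ?_, fun a => ?_⟩
  · have : List.ofFn (w.get ∘ (1 : Perm (Fin w.length))) = w := by
      rw [Perm.coe_one, Function.comp_id, List.ofFn_get]
    simp only [this]
    exact Finsupp.mem_support_iff.1 hw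
  · have h0 : ∑ S : Finset (Fin w.length), (-1 : A) ^ S.card * (c.sum fun u r => r •
        (u.map fun i => ∑ j, if w.get j = i ∧ j ∈ S then a j else 0).prod) = 0 := by
      refine Finset.sum_eq_zero fun S _ => ?_
      rw [h, mul_zero]
    simp only [Finsupp.sum, Finset.mul_sum, mul_smul_comm] at h0
    rw [Finset.sum_comm] at h0
    simp only [← Finset.smul_sum] at h0
    rw [Finset.sum_congr rfl fun u hu => by rw [polar F w.get u (hmax u hu) a]] at h0
    simp only [← mul_smul_comm, ← Finset.mul_sum] at h0
    have hunit : IsUnit ((-1 : A) ^ w.length) := (isUnit_one.neg).pow _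
    rw [hunit.mul_right_eq_zero] at h0
    rw [← h0]
    simp only [Finset.smul_sum]
    rw [Finset.sum_comm]
    refine Finset.sum_congr rfl fun σ _ => ?_
    simp only [smul_ite, smul_zero]
    rw [Finset.sum_ite_eq']
    split_ifs with hm
    · rfl
    · rw [Finsupp.notMem_support_iff.1 hm, zero_smul]

lemma span_good {F : Type*} [Field F] {A : Type*} [Ring A] [Algebra F A] {d : ℕ}
    (γ : Perm (Fin d) → F) (h1 : γ 1 ≠ 0)
    (h : ∀ a : Fin d → A, ∑ σ, γ σ • (List.ofFn (a ∘ σ)).prod = 0) (n : ℕ) (l : List ℕ)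
    (hl : l.Perm (List.range n)) :
    (fun x : ℕ → A => (l.map x).prod) ∈ Submodule.span F
      ((fun (l : List ℕ) (x : ℕ → A) => (l.map x).prod) '' (good n d : Set (List ℕ))) := by
  classical
  have hfin : (((List.range n).permutations.toFinset : Finset (List ℕ)) : Set (List ℕ)).WellFoundedOn
      (· < ·) := (Finset.finite_toSet _).wellFoundedOn
  have hmem : l ∈ (((List.range n).permutations.toFinset : Finset (List ℕ)) : Set (List ℕ)) := by
    simpa using hl
  revert hl
  apply hfin.induction hmem
  intro l hl' ih hl
  by_cases hg : ∃ s : List ℕ, s.Sublist l ∧ s.Pairwise (· > ·) ∧ s.length = d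
  · obtain ⟨s, hs1, hs2, rfl⟩ := hg
    obtain ⟨p, bs, hbs, hlp⟩ := sublist_blocks hs1
    subst hbs
    have hnd : bs.Nodup := List.Nodup.of_map Prod.fst (hs2.imp (fun h => ne_of_gt h))
    have hlen : (bs.map Prod.fst).length = bs.length := List.length_map _
    obtain ⟨d, B, rfl⟩ : ∃ (d : ℕ) (B : Fin d → ℕ × List ℕ), bs = List.ofFn B :=
      ⟨bs.length, bs.get, (List.ofFn_get bs).symm⟩
    have hd : ((List.ofFn B).map Prod.fst).length = d := by simp
    generalize ((List.ofFn B).map Prod.fst).length = d' at *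
    subst hd
    have hB : Function.Injective B := List.nodup_ofFn.1 hnd
    let L : Perm (Fin d') → List ℕ := fun σ =>
      p ++ ((List.ofFn (B ∘ σ)).map fun b => b.1 :: b.2).flatten
    have hL1 : L 1 = l := by simp [L, hlp]
    have hperm : ∀ σ, (L σ).Perm l := by
      intro σ
      rw [hlp]
      exact List.Perm.append_left _ ((List.Perm.map _ (σ.ofFn_comp_perm B)).flatten)
    have hlt : ∀ σ, σ ≠ 1 → L σ < l := by
      intro σ hσ
      rw [hlp]
      refine List.append_left_lt (flatten_lt _ _ hs2 (σ.ofFn_comp_perm B) ?_)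
      intro he
      apply hσ
      ext i
      have := congrFun (List.ofFn_injective he) i
      exact congrArg Fin.val (hB this)
    have hid : ∑ σ, γ σ • (fun x : ℕ → A => ((L σ).map x).prod) = 0 := by
      funext x
      have hh := h (fun j => (((B j).1 :: (B j).2).map x).prod)
      have h2 : (p.map x).prod * ∑ σ : Perm (Fin d'), γ σ •
          (List.ofFn ((fun j => (((B j).1 :: (B j).2).map x).prod) ∘ σ)).prod = 0 := by
        rw [hh, mul_zero]
      rw [Finset.mul_sum] at h2
      rw [Finset.sum_apply, Pi.zero_apply, ← h2]
      refine Finset.sum_congr rfl fun σ _ => ?_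
      rw [Pi.smul_apply, mul_smul_comm]
      congr 1
      simp only [L, List.map_append, List.prod_append, List.map_flatten, List.prod_flatten,
        List.map_map, List.map_ofFn]
      rfl
    rw [← Finset.add_sum_erase _ _ (Finset.mem_univ (1 : Perm (Fin d'))), hL1] at hid
    rw [← Submodule.smul_mem_iff _ h1, eq_neg_of_add_eq_zero_left hid]
    refine Submodule.neg_mem _ (Submodule.sum_mem _ fun σ hσ => Submodule.smul_mem _ _ ?_)
    have hp' := (hperm σ).trans hl
    exact ih (L σ) (by simpa using hp') (hlt σ (Finset.ne_of_mem_erase hσ)) hp'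
  · refine Submodule.subset_span ⟨l, ?_, rfl⟩
    simpa [good, hl] using hg

/-- Codimension bound, packaged. -/
lemma codim {F : Type*} [Field F] {A : Type*} [Ring A] [Algebra F A]
    (hA : SatisfiesNonzeroPI F A) : ∃ K : ℕ, ∀ n : ℕ, ∃ V : Submodule F ((ℕ → A) → A),
      FiniteDimensional F V ∧ Module.finrank F V ≤ K ^ n ∧
      ∀ l : List ℕ, l.Perm (List.range n) → (fun x : ℕ → A => (l.map x).prod) ∈ V := by
  classical
  obtain ⟨c, hc, h⟩ := (pi_iff F A).1 hA
  obtain ⟨d, γ, h1, hγ⟩ := multilin F A c hc h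
  refine ⟨d ^ 2, fun n => ⟨_, ?_, ?_, span_good γ h1 hγ n⟩⟩
  · exact FiniteDimensional.span_of_finite F ((Finset.finite_toSet _).image _)
  · rw [← Finset.coe_image]
    exact ((finrank_span_finset_le_card _).trans Finset.card_image_le).trans (card_good n d)

lemma prod_update {R : Type*} [Ring R] (l : List ℕ) (hl : l.Nodup) (k : ℕ) (hk : k ∈ l)
    (x : ℕ → R) : ∃ u v : R, ∀ y, (l.map (Function.update x k y)).prod = u * y * v := by
  obtain ⟨s, t, rfl⟩ := List.append_of_mem hk
  have hn := List.nodup_middle.1 hl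
  rw [List.nodup_cons, List.mem_append, not_or] at hn
  have e : ∀ (q : List ℕ) (y : R), k ∉ q → q.map (Function.update x k y) = q.map x := by
    intro q y hq
    refine List.map_congr_left fun z hz => Function.update_of_ne ?_ _ _
    rintro rfl; exact hq hz
  refine ⟨(s.map x).prod, (t.map x).prod, fun y => ?_⟩
  simp [e s y hn.1.1, e t y hn.1.2, mul_assoc]

lemma extend_pure {F : Type*} [Field F] {A : Type*} [Ring A] [Algebra F A] {B : Type*} [Ring B]
    [Algebra F B] (n : ℕ) (P : Finset (List ℕ)) (hP : ∀ l ∈ P, l.Perm (List.range n))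
    (α : List ℕ → F)
    (h : ∀ (a : ℕ → A) (b : ℕ → B),
      ∑ l ∈ P, α l • (l.map fun i => a i ⊗ₜ[F] b i).prod = 0) (x : ℕ → A ⊗[F] B) :
    ∑ l ∈ P, α l • (l.map x).prod = 0 := by
  have key : ∀ k ≤ n, ∀ x : ℕ → A ⊗[F] B, (∀ i, k ≤ i → ∃ a b, x i = a ⊗ₜ[F] b) →
      ∑ l ∈ P, α l • (l.map x).prod = 0 := by
    intro k
    induction k with
    | zero =>
      intro _ x hx
      choose a b hab using fun i => hx i (Nat.zero_le i)
      have : x = fun i => a i ⊗ₜ[F] b i := funext hab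
      rw [this]; exact h a b
    | succ k ih =>
      intro hk x hx
      have hex : ∀ l ∈ P, ∃ u v : A ⊗[F] B, ∀ y,
          (l.map (Function.update x k y)).prod = u * y * v := fun l hl =>
        prod_update l ((hP l hl).nodup_iff.2 List.nodup_range) k
          ((hP l hl).mem_iff.2 (List.mem_range.2 hk)) x
      choose! u v huv using hex
      have main : ∀ y : A ⊗[F] B, ∑ l ∈ P, α l • (l.map (Function.update x k y)).prod = 0 := by
        intro y
        induction y using TensorProduct.induction_on with
        | zero =>
          refine Finset.sum_eq_zero fun l hl => ?_
          rw [huv l hl]; simp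
        | tmul a b =>
          refine ih (by omega) _ fun i hi => ?_
          by_cases hik : i = k
          · subst hik; exact ⟨a, b, by simp⟩
          · rw [Function.update_of_ne hik]; exact hx i (by omega)
        | add y z hy hz =>
          rw [← add_zero (0 : A ⊗[F] B)]
          nth_rewrite 1 [← hy]
          rw [← hz, ← Finset.sum_add_distrib]
          refine Finset.sum_congr rfl fun l hl => ?_
          rw [huv l hl, huv l hl, huv l hl, ← smul_add, mul_add, add_mul]
      have := main (x k)
      rwa [Function.update_eq_self] at this
  -- values beyond `n` do not matter
  have h2 := key n le_rfl (fun i => if i < n then x i else 0) fun i hi =>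
    ⟨0, 0, by simp [not_lt.2 hi]⟩
  rw [← h2]
  refine Finset.sum_congr rfl fun l hl => ?_
  congr 2
  refine List.map_congr_left fun i hi => ?_
  rw [if_pos (List.mem_range.1 ((hP l hl).subset hi))]

lemma prod_tmul {F : Type*} [Field F] {A : Type*} [Ring A] [Algebra F A] {B : Type*} [Ring B]
    [Algebra F B] (a : ℕ → A) (b : ℕ → B) (l : List ℕ) :
    (l.map fun i => a i ⊗ₜ[F] b i).prod = (l.map a).prod ⊗ₜ[F] (l.map b).prod := by
  induction l with
  | nil => simp [Algebra.TensorProduct.one_def]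
  | cons x l ih => simp [ih]

end Regev

/-- **Regev's theorem.** If the `F`-algebras `A` and `B` each satisfy a nonzero polynomial
identity, then so does their tensor product `A ⊗[F] B`. -/
theorem regev_tensor_product (F : Type*) [Field F]
    (A : Type*) [Ring A] [Algebra F A] (B : Type*) [Ring B] [Algebra F B]
    (hA : SatisfiesNonzeroPI F A) (hB : SatisfiesNonzeroPI F B) :
    SatisfiesNonzeroPI F (A ⊗[F] B) := by
  classical
  obtain ⟨K, hK⟩ := Regev.codim hA
  obtain ⟨M, hM⟩ := Regev.codim hB
  obtain ⟨n, hn⟩ := (Nat.eventually_pow_lt_factorial_sub (K * M) 0).exists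
  rw [Nat.sub_zero] at hn
  obtain ⟨V, hV1, hV2, hV3⟩ := hK n
  obtain ⟨W, hW1, hW2, hW3⟩ := hM n
  let P : Finset (List ℕ) := (List.range n).permutations.toFinset
  have hP : ∀ l ∈ P, l.Perm (List.range n) := fun l hl => by simpa [P] using hl
  have hPc : P.card = n.factorial := by
    rw [List.toFinset_card_of_nodup (List.nodup_permutations _ List.nodup_range),
      List.length_permutations, List.length_range]
  let m : P → V ⊗[F] W := fun l =>
    (⟨_, hV3 l.1 (hP l.1 l.2)⟩ : V) ⊗ₜ[F] (⟨_, hW3 l.1 (hP l.1 l.2)⟩ : W)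
  let Φ : (P → F) →ₗ[F] V ⊗[F] W := Fintype.linearCombination F m
  have hlt : Module.finrank F (V ⊗[F] W) < Module.finrank F (P → F) := by
    rw [Module.finrank_tensorProduct, Module.finrank_fintype_fun_eq_card, Fintype.card_coe, hPc]
    calc _ ≤ K ^ n * M ^ n := Nat.mul_le_mul hV2 hW2
      _ = (K * M) ^ n := (mul_pow _ _ _).symm
      _ < _ := hn
  obtain ⟨α, hα, hα0⟩ := (Submodule.ne_bot_iff _).1 
    (LinearMap.ker_ne_bot_of_finrank_lt (K := F) (V := P → F) (V₂ := V ⊗[F] W) (f := Φ) hlt)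
  rw [LinearMap.mem_ker] at hα
  let c : List ℕ →₀ F := Finsupp.onFinset P (fun l => if h : l ∈ P then α ⟨l, h⟩ else 0)
    (fun l hl => by by_contra h; exact hl (dif_neg h))
  refine (Regev.pi_iff F _).2 ⟨c, ?_, fun x => ?_⟩
  · intro h0
    apply hα0
    funext l
    have := DFunLike.congr_fun h0 l.1
    simpa [c] using this
  · rw [Finsupp.sum_of_support_subset c (s := P) Finsupp.support_onFinset_subset _ (by simp)]
    refine Regev.extend_pure n P hP c (fun a b => ?_) x
    simp only [Regev.prod_tmul]
    let evV : V →ₗ[F] A := (LinearMap.proj a).comp V.subtype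
    let evW : W →ₗ[F] B := (LinearMap.proj b).comp W.subtype
    have := congrArg (TensorProduct.map evV evW) hα
    rw [map_zero] at this
    rw [← this, ← Finset.sum_coe_sort P]
    simp only [Φ, Fintype.linearCombination_apply, map_sum, map_smul]
    refine Finset.sum_congr rfl fun l _ => ?_
    simp only [m, TensorProduct.map_tmul]
    congr 1
    simp [c]
end

section
/- Let F be a field of characteristic 0 and let R be a finitely generated F-algebra satisfying a nonzero polynomial identity. Then there exists an integer m ≥ 1 such that R satisfies the Capelli identity C_m: for all elements y_0, y_1, …, y_m and x_1, …, x_m of R, Σ_{σ ∈ S_m} sgn(σ) · y_0 x_{σ(1)} y_1 x_{σ(2)} y_2 ⋯ y_{m−1} x_{σ(m)} y_m = 0. (Kemer: every finitely generated PI algebra satisfies a Capelli identity.) -/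
theorem kc_incl_excl {k : ℕ} (T : Finset (Fin k)) :
    (∑ S : Finset (Fin k), if T ⊆ S then ((-1 : ℤ)) ^ S.card else 0)
      = if T = Finset.univ then (-1) ^ k else 0 := by
  classical
  have h := Finset.prod_add (fun _ : Fin k => (-1 : ℤ)) (fun i => if i ∈ T then 0 else 1)
    Finset.univ
  have h2 : ∀ S : Finset (Fin k), (∏ i ∈ S, (-1 : ℤ)) *
      (∏ i ∈ Finset.univ \ S, if i ∈ T then (0 : ℤ) else 1)
      = if T ⊆ S then ((-1 : ℤ)) ^ S.card else 0 := by
    intro S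
    rw [Finset.prod_const]
    split_ifs with hT
    · rw [Finset.prod_eq_one, mul_one]
      intro i hi
      rw [if_neg]
      intro h'
      simp at hi
      exact hi (hT h')
    · obtain ⟨i, hi, hiS⟩ := Finset.not_subset.mp hT
      rw [Finset.prod_eq_zero (i := i), mul_zero]
      · simpa using hiS
      · simp [hi]
  rw [Finset.powerset_univ] at h
  rw [← Finset.sum_congr rfl (fun S _ => h2 S), ← h]
  split_ifs with hT
  · subst hT; simp
  · obtain ⟨i, hi⟩ : ∃ i, i ∉ T := by
      by_contra hcon; push Not at hcon
      exact hT (Finset.eq_univ_iff_forall.mpr hcon)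
    exact Finset.prod_eq_zero (Finset.mem_univ i) (by simp [hi])

theorem kc_list_eval {F R : Type} [Field F] [Ring R] [Algebra F R] {k : ℕ} (w : Fin k → ℕ)
    (x : Fin k → R) (q : ℕ) (u : Fin q → ℕ) :
    (∑ S : Finset (Fin k), ((-1 : ℤ) ^ S.card) •
      (List.ofFn fun p => ∑ i ∈ S, if w i = u p then x i else 0).prod)
    = ∑ r : Fin q → Fin k, (if Function.Surjective r then (-1 : ℤ) ^ k else 0) •
        (List.ofFn fun p => if w (r p) = u p then x (r p) else 0).prod := by
  classical
  have h1 : ∀ S : Finset (Fin k),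
      (List.ofFn fun p => ∑ i ∈ S, if w i = u p then x i else 0).prod
      = ∑ r : Fin q → Fin k, if Finset.image r Finset.univ ⊆ S then
        (List.ofFn fun p => if w (r p) = u p then x (r p) else 0).prod else 0 := by
    intro S
    have := MultilinearMap.map_sum_finset (MultilinearMap.mkPiAlgebraFin F q R)
      (fun p i => if w i = u p then x i else 0) (fun _ => S)
    simp only [MultilinearMap.mkPiAlgebraFin_apply] at this
    rw [this, ← Finset.sum_filter]
    apply Finset.sum_congr _ (fun _ _ => rfl)
    ext r
    simp [Fintype.mem_piFinset, Finset.image_subset_iff]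
  simp only [h1, Finset.smul_sum]
  rw [Finset.sum_comm]
  apply Finset.sum_congr rfl
  intro r _
  have h2 := kc_incl_excl (Finset.image r Finset.univ)
  have h3 : Finset.image r Finset.univ = Finset.univ ↔ Function.Surjective r := by
    rw [Finset.eq_univ_iff_forall]; simp [Function.Surjective]
  simp only [h3] at h2
  rw [← h2, Finset.sum_smul]
  apply Finset.sum_congr rfl
  intro S _
  split_ifs <;> simp

theorem kc_list_eval2 {F R : Type} [Field F] [Ring R] [Algebra F R] {k : ℕ} (w : Fin k → ℕ)
    (x : Fin k → R) (u : List ℕ) (hu : u.length ≤ k) :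
    (∑ S : Finset (Fin k), ((-1 : ℤ) ^ S.card) •
      (u.map fun j => ∑ i ∈ S, if w i = j then x i else 0).prod)
    = (-1 : ℤ) ^ k • ∑ σ : Equiv.Perm (Fin k), if u = List.ofFn (fun i => w (σ i)) then
        (List.ofFn fun p => x (σ p)).prod else 0 := by
  classical
  obtain ⟨q, u, rfl⟩ : ∃ q, ∃ u' : Fin q → ℕ, u = List.ofFn u' :=
    ⟨u.length, u.get, (List.ofFn_get u).symm⟩
  simp only [List.map_ofFn, Function.comp_def]
  rw [kc_list_eval (F := F)]
  rw [List.length_ofFn] at hu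
  rcases hu.lt_or_eq with hlt | rfl
  · rw [Finset.sum_eq_zero, Finset.sum_eq_zero, smul_zero]
    · intro σ _
      rw [if_neg]
      intro h
      have := congrArg List.length h
      simp at this; omega
    · intro r _
      rw [if_neg, zero_smul]
      intro h
      have := Fintype.card_le_of_surjective r h
      simp at this; omega
  · rw [Finset.smul_sum]
    symm
    rw [← Finset.sum_filter_add_sum_filter_not (Finset.univ : Finset (Fin q → Fin q))
      (fun r => Function.Surjective r)]
    rw [Finset.sum_eq_zero (s := Finset.filter (fun r => ¬ Function.Surjective r) _), add_zero]
    · refine Finset.sum_bij (fun σ _ => (σ : Fin q → Fin q)) ?_ ?_ ?_ ?_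
      · intro σ _; simp [σ.surjective]
      · intro σ _ τ _ h; exact DFunLike.coe_injective h
      · intro r hr
        simp at hr
        exact ⟨Equiv.ofBijective r (Finite.injective_iff_bijective.mp
          (Finite.injective_iff_surjective.mpr hr)), by simp, rfl⟩
      · intro σ _
        rw [if_pos σ.surjective]
        congr 1
        split_ifs with h
        · have h' := List.ofFn_injective h
          subst h'
          simp
        · obtain ⟨p, hp⟩ : ∃ p, u p ≠ w (σ p) := by
            by_contra hcon; push Not at hcon
            exact h (congrArg _ (funext hcon))
          symm
          apply List.prod_eq_zero
          rw [List.mem_ofFn]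
          exact ⟨p, by simp [hp.symm]⟩
    · intro r hr
      simp only [Finset.mem_filter] at hr
      rw [if_neg hr.2, zero_smul]

theorem kc_multilinear {F R : Type} [Field F] [Ring R] [Algebra F R]
    (hPI : ∃ f : FreeAlgebra F ℕ, f ≠ 0 ∧ ∀ a : ℕ → R, (FreeAlgebra.lift F a) f = 0) :
    ∃ (k : ℕ) (α : Equiv.Perm (Fin k) → F), α 1 ≠ 0 ∧ ∀ x : Fin k → R,
      ∑ σ, α σ • (List.ofFn fun i => x (σ i)).prod = 0 := by
  classical
  obtain ⟨f, hf0, hf⟩ := hPI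
  set g := FreeAlgebra.equivMonoidAlgebraFreeMonoid f with hg
  have hg0 : g ≠ 0 := by simpa [hg] using hf0
  have hgc : g.coeff ≠ 0 := by
    intro h; apply hg0; ext a; simp [h]
  have hev : ∀ a : ℕ → R, ∑ u ∈ g.coeff.support, g.coeff u • (u.toList.map a).prod = 0 := by
    intro a
    have h1 : (FreeAlgebra.lift F a) = ((MonoidAlgebra.lift F R (FreeMonoid ℕ))
      (FreeMonoid.lift a)).comp
        (FreeAlgebra.equivMonoidAlgebraFreeMonoid (R := F) (X := ℕ)).toAlgHom := by
      ext i
      simp [FreeAlgebra.equivMonoidAlgebraFreeMonoid]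
    have h2 := hf a
    rw [h1] at h2
    change (MonoidAlgebra.lift F R (FreeMonoid ℕ)) (FreeMonoid.lift a) g = 0 at h2
    rw [MonoidAlgebra.lift_apply] at h2
    simpa [Finsupp.sum, FreeMonoid.lift_apply] using h2
  obtain ⟨w, hw, hmax⟩ := Finset.exists_max_image g.coeff.support (fun u => u.toList.length)
    (Finsupp.support_nonempty_iff.mpr hgc)
  refine ⟨w.toList.length, fun σ => g.coeff (FreeMonoid.ofList
    (List.ofFn fun i => w.toList.get (σ i))), ?_, ?_⟩
  · have : List.ofFn (fun i => w.toList.get ((1 : Equiv.Perm (Fin w.toList.length)) i)) = w.toList :=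
      List.ofFn_get _
    beta_reduce
    rw [this]
    simpa using hw
  · intro x
    have key : ∑ S : Finset (Fin w.toList.length), ((-1 : ℤ) ^ S.card) •
      ∑ u ∈ g.coeff.support, g.coeff u • (u.toList.map
        fun j => ∑ i ∈ S, if w.toList.get i = j then x i else 0).prod = 0 := by
      apply Finset.sum_eq_zero
      intro S _
      rw [hev, smul_zero]
    simp only [Finset.smul_sum] at key
    rw [Finset.sum_comm] at key
    have key2 : ∀ u ∈ g.coeff.support, (∑ S : Finset (Fin w.toList.length), ((-1 : ℤ) ^ S.card) •
        g.coeff u • (u.toList.map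
        fun j => ∑ i ∈ S, if w.toList.get i = j then x i else 0).prod)
        = (-1 : ℤ) ^ w.toList.length • ∑ σ : Equiv.Perm (Fin w.toList.length),
          if u = FreeMonoid.ofList (List.ofFn fun i => w.toList.get (σ i)) then
          g.coeff u • (List.ofFn fun p => x (σ p)).prod else 0 := by
      intro u hu
      have := kc_list_eval2 (F := F) w.toList.get x u.toList (hmax u hu)
      simp only [smul_comm _ (g.coeff u)]
      rw [← Finset.smul_sum, this, smul_comm, Finset.smul_sum]
      congr 1
      apply Finset.sum_congr rfl
      intro σ _
      rw [smul_ite, smul_zero]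
      exact if_congr Iff.rfl rfl rfl
    rw [Finset.sum_congr rfl key2, ← Finset.smul_sum, Finset.sum_comm] at key
    have key3 : ((-1 : ℤ) ^ w.toList.length) * ((-1 : ℤ) ^ w.toList.length) = 1 := by
      rw [← mul_pow]; simp
    have key4 := congrArg (fun z => ((-1 : ℤ) ^ w.toList.length) • z) key
    simp only [smul_smul, key3, one_smul, smul_zero] at key4
    rw [← key4]
    apply Finset.sum_congr rfl
    intro σ _
    rw [Finset.sum_ite_eq']
    split_ifs with h
    · rfl
    · beta_reduce
      rw [Finsupp.notMem_support_iff.mp h, zero_smul]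

/-- flatten a list of headed blocks -/
def kcFlat {ι : Type} (bl : List (ι × List ι)) : List ι := bl.flatMap fun p => p.1 :: p.2

theorem kc_blocks {ι : Type} {s l : List ι} (h : s.Sublist l) :
    ∃ (l0 : List ι) (bl : List (ι × List ι)), bl.map Prod.fst = s ∧ l = l0 ++ kcFlat bl := by
  induction h with
  | slnil => exact ⟨[], [], rfl, rfl⟩
  | cons a _ ih =>
    obtain ⟨l0, bl, h1, h2⟩ := ih
    exact ⟨a :: l0, bl, h1, by simp [h2]⟩
  | cons_cons a _ ih =>
    obtain ⟨l0, bl, h1, h2⟩ := ih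
    exact ⟨[], (a, l0) :: bl, by simp [h1], by simp [h2, kcFlat]⟩

theorem kc_lex {ι : Type} [LinearOrder ι] (bl : List (ι × List ι)) :
    ∀ bl' : List (ι × List ι), (bl.map Prod.fst).Pairwise (· > ·) → bl'.Perm bl → bl' ≠ bl →
      List.Lex (· < ·) (kcFlat bl') (kcFlat bl) := by
  induction bl with
  | nil => intro bl' _ hp hne; exact absurd hp.eq_nil hne
  | cons a bl ih =>
    intro bl' hs hp hne
    cases bl' with
    | nil => exact absurd hp.symm.eq_nil (by simp)
    | cons b bl' =>
      have hb : b ∈ a :: bl := hp.subset (by simp)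
      rw [List.map_cons, List.pairwise_cons] at hs
      rcases List.mem_cons.mp hb with rfl | hb
      · have hp' := (List.perm_cons b).mp hp
        have hne' : bl' ≠ bl := by rintro rfl; exact hne rfl
        have := ih bl' hs.2 hp' hne'
        simp only [kcFlat, List.flatMap_cons] at this ⊢
        exact List.Lex.append_left _ this _
      · have : b.1 < a.1 := hs.1 _ (List.mem_map_of_mem hb)
        simp only [kcFlat, List.flatMap_cons, List.cons_append]
        exact List.Lex.rel this

/-- no strictly decreasing sublist of length `k` -/
def kcGood {ι : Type} [LinearOrder ι] (k : ℕ) (l : List ι) : Prop :=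
  ∀ s : List ι, s.Sublist l → s.Pairwise (· > ·) → s.length ≠ k

theorem kc_flat_prod {ι B : Type} [Ring B] (X : ι → B) (bl : List (ι × List ι)) :
    ((kcFlat bl).map X).prod = (bl.map fun p => X p.1 * (p.2.map X).prod).prod := by
  induction bl with
  | nil => rfl
  | cons a bl ih =>
    simp only [kcFlat, List.flatMap_cons] at ih ⊢
    simp [ih, mul_assoc]

theorem kc_flat_perm {ι : Type} {bl bl' : List (ι × List ι)} (h : bl.Perm bl') :
    (kcFlat bl).Perm (kcFlat bl') := h.flatMap_right _

theorem kc_span {F B ι : Type} [Field F] [Ring B] [Algebra F B] [LinearOrder ι] [Finite ι]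
    (k : ℕ) (α : Equiv.Perm (Fin k) → F) (hα : α 1 ≠ 0)
    (hid : ∀ x : Fin k → B, ∑ σ, α σ • (List.ofFn fun i => x (σ i)).prod = 0)
    (X : ι → B) (l : List ι) :
    (l.map X).prod ∈ Submodule.span F
      {b | ∃ l' : List ι, l'.Perm l ∧ kcGood k l' ∧ b = (l'.map X).prod} := by
  classical
  have wf : WellFounded (List.Shortlex (fun a b : ι => a < b)) :=
    List.Shortlex.wf wellFounded_lt
  induction l using wf.induction with
  | _ l ih =>
  by_cases hg : kcGood k l
  · exact Submodule.subset_span ⟨l, List.Perm.refl _, hg, rfl⟩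
  · unfold kcGood at hg
    push Not at hg
    obtain ⟨s, hsl, hs, rfl⟩ := hg
    obtain ⟨l0, bl, rfl, rfl⟩ := kc_blocks hsl
    have hlen : (bl.map Prod.fst).length = bl.length := by simp
    generalize hk : (bl.map Prod.fst).length = k at *
    obtain ⟨b, rfl⟩ : ∃ b : Fin k → ι × List ι, bl = List.ofFn b := by
      subst hlen; exact ⟨bl.get, (List.ofFn_get bl).symm⟩
    have hbinj : Function.Injective b := by
      have h1 := hs.imp (fun h => ne_of_gt h)
      have h2 : (List.map Prod.fst (List.ofFn b)).Nodup := h1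
      have h3 := List.Nodup.of_map _ h2
      exact List.nodup_ofFn.mp h3
    let L : Equiv.Perm (Fin k) → List ι := fun σ => l0 ++ kcFlat (List.ofFn (b ∘ σ))
    have hprod : ∀ σ, ((L σ).map X).prod = (l0.map X).prod *
        (List.ofFn fun i => (fun j => X (b j).1 * ((b j).2.map X).prod) (σ i)).prod := by
      intro σ
      simp only [L, List.map_append, List.prod_append, kc_flat_prod, List.map_ofFn]
      rfl
    have hperm : ∀ σ, (L σ).Perm (l0 ++ kcFlat (List.ofFn b)) := fun σ =>
      (kc_flat_perm (Equiv.Perm.ofFn_comp_perm σ b)).append_left l0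
    have hmem : ∀ σ, σ ≠ 1 → ((L σ).map X).prod ∈ Submodule.span F
      {c | ∃ l' : List ι, l'.Perm (l0 ++ kcFlat (List.ofFn b)) ∧ kcGood k l' ∧
        c = (l'.map X).prod} := by
      intro σ hσ
      have hne : List.ofFn (b ∘ σ) ≠ List.ofFn b := by
        intro h
        apply hσ
        ext i
        have := congrFun (List.ofFn_injective h) i
        exact congrArg Fin.val (hbinj this)
      have hlt : List.Shortlex (fun a b : ι => a < b) (L σ) (l0 ++ kcFlat (List.ofFn b)) := by
        apply List.Shortlex.of_lex
        · exact (hperm σ).length_eq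
        · exact List.Lex.append_left _
            (kc_lex _ _ hs (Equiv.Perm.ofFn_comp_perm σ b) hne) _
      have := ih _ hlt
      refine Submodule.span_mono ?_ this
      rintro c ⟨l', h1, h2, h3⟩
      exact ⟨l', h1.trans (hperm σ), h2, h3⟩
    have h0 : ∑ σ, α σ • ((L σ).map X).prod = 0 := by
      simp only [hprod, ← mul_smul_comm]
      rw [← Finset.mul_sum, hid (fun j => X (b j).1 * ((b j).2.map X).prod), mul_zero]
    rw [← Finset.add_sum_erase _ _ (Finset.mem_univ (1 : Equiv.Perm (Fin k)))] at h0
    have h1 : ((L 1).map X).prod = (α 1)⁻¹ •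
        (- ∑ σ ∈ Finset.univ.erase 1, α σ • ((L σ).map X).prod) := by
      rw [← eq_neg_of_add_eq_zero_left h0, smul_smul, inv_mul_cancel₀ hα, one_smul]
    have h2 : L 1 = l0 ++ kcFlat (List.ofFn b) := rfl
    rw [← h2, h1]
    apply Submodule.smul_mem
    apply Submodule.neg_mem
    apply Submodule.sum_mem
    intro σ hσ
    apply Submodule.smul_mem
    exact hmem σ (Finset.ne_of_mem_erase hσ)

theorem kc_color {ι : Type} [LinearOrder ι] (l : List ι) (hl : l.Nodup) :
    ∃ c : ι → ℕ, (∀ a ∈ l, ∃ s : List ι, (a :: s).Sublist l ∧ (a :: s).Pairwise (· > ·) ∧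
      s.length = c a) ∧ l.Pairwise (fun a b => b < a → c b < c a) := by
  induction l with
  | nil => exact ⟨fun _ => 0, by simp, by simp⟩
  | cons a l ih =>
    rw [List.nodup_cons] at hl
    obtain ⟨c, h1, h2⟩ := ih hl.2
    let n : ℕ := (l.toFinset.filter (· < a)).sup (fun b => c b + 1)
    have hn : ∃ s : List ι, (a :: s).Sublist (a :: l) ∧ (a :: s).Pairwise (· > ·) ∧
      s.length = n := by
      rcases (l.toFinset.filter (· < a)).eq_empty_or_nonempty with he | hne
      · exact ⟨[], by simp, by simp, by simp [n, he]⟩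
      · obtain ⟨b, hb, hbn⟩ := Finset.exists_mem_eq_sup _ hne (fun b => c b + 1)
        simp only [Finset.mem_filter, List.mem_toFinset] at hb
        obtain ⟨s, hs1, hs2, hs3⟩ := h1 b hb.1
        refine ⟨b :: s, hs1.cons_cons a, ?_, ?_⟩
        · rw [List.pairwise_cons]
          refine ⟨?_, hs2⟩
          intro x hx
          rcases List.mem_cons.mp hx with rfl | hx
          · exact hb.2
          · exact lt_trans ((List.pairwise_cons.mp hs2).1 x hx) hb.2
        · simp only [n, hbn, List.length_cons, hs3]
    refine ⟨Function.update c a n, ?_, ?_⟩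
    · intro x hx
      rcases List.mem_cons.mp hx with rfl | hx'
      · simpa using hn
      · have hxa : x ≠ a := by rintro rfl; exact hl.1 hx'
        obtain ⟨s, hs1, hs2, hs3⟩ := h1 x hx'
        exact ⟨s, hs1.cons a, hs2, by simp [hxa, hs3]⟩
    · rw [List.pairwise_cons]
      constructor
      · intro b hb hba
        have hbne : b ≠ a := hba.ne
        simp only [Function.update_self, Function.update_of_ne hbne]
        have : c b + 1 ≤ n := Finset.le_sup (f := fun b => c b + 1)
          (by simp [hb, hba])
        omega
      · refine h2.imp_of_mem ?_
        intro x y hx hy hxy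
        have hxa : x ≠ a := by rintro rfl; exact hl.1 hx
        have hya : y ≠ a := by rintro rfl; exact hl.1 hy
        simpa [hxa, hya] using hxy

theorem kc_color' {ι : Type} [LinearOrder ι] (k : ℕ) (l : List ι) (hl : l.Nodup)
    (hc : ∀ a, a ∈ l) (hg : kcGood k l) :
    ∃ c : ι → Fin k, l.Pairwise (fun a b => c a = c b → a < b) := by
  obtain ⟨c, h1, h2⟩ := kc_color l hl
  have hlt : ∀ a, c a < k := by
    intro a
    obtain ⟨s, hs1, hs2, hs3⟩ := h1 a (hc a)
    by_contra hcon
    push Not at hcon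
    have := hg ((a :: s).take k) ((List.take_sublist _ _).trans hs1)
      (hs2.sublist (List.take_sublist _ _))
    apply this
    simp; omega
  refine ⟨fun a => ⟨c a, hlt a⟩, ?_⟩
  have := List.pairwise_and_iff.mpr ⟨h2, hl⟩
  refine this.imp ?_
  rintro a b ⟨hab, hne⟩ heq
  have heq' : c a = c b := congrArg Fin.val heq
  by_contra hcon
  have := hab (lt_of_le_of_ne (not_lt.mp hcon) (Ne.symm hne))
  omega

theorem kc_recon {ι κ : Type} [DecidableEq κ] (c : ι → κ) (l : List ι) :
    ∀ l' : List ι, l.map c = l'.map c →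
      (∀ j, l.filter (fun a => c a = j) = l'.filter (fun a => c a = j)) → l = l' := by
  induction l with
  | nil => intro l' h _; simpa using h.symm
  | cons a l ih =>
    intro l' h hf
    cases l' with
    | nil => simp at h
    | cons b l' =>
      simp only [List.map_cons, List.cons.injEq] at h
      have h1 := hf (c a)
      simp only [List.filter_cons, h.1, decide_true, if_true, List.cons.injEq] at h1
      obtain ⟨rfl, -⟩ := h1
      congr 1
      apply ih l' h.2
      intro j
      have h2 := hf j
      simp only [List.filter_cons] at h2
      split_ifs at h2 with h3
      · exact (List.cons.inj h2).2
      · exact h2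

theorem kc_finrank_aux {F B ι : Type} [Field F] [Ring B] [Algebra F B] [LinearOrder ι] [Fintype ι]
    (k : ℕ) (α : Equiv.Perm (Fin k) → F) (hα : α 1 ≠ 0)
    (hid : ∀ x : Fin k → B, ∑ σ, α σ • (List.ofFn fun i => x (σ i)).prod = 0)
    (X : ι → B) : ∃ (T : Type) (_ : Fintype T) (g : T → B),
      Fintype.card T ≤ k ^ Fintype.card ι * k ^ Fintype.card ι ∧
      ∀ l : List ι, l.Nodup → (∀ a, a ∈ l) →
        (l.map X).prod ∈ Submodule.span F (Set.range g) := by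
  classical
  let G := {l : List ι // l.Nodup ∧ (∀ a, a ∈ l) ∧ kcGood k l}
  have hcol : ∀ l : G, ∃ c : ι → Fin k, l.1.Pairwise (fun a b => c a = c b → a < b) :=
    fun l => kc_color' k l.1 l.2.1 l.2.2.1 l.2.2.2
  choose c hc using hcol
  have hlen : ∀ l : G, l.1.length = Fintype.card ι := by
    intro l
    rw [← List.toFinset_card_of_nodup l.2.1]
    rw [show l.1.toFinset = Finset.univ from Finset.eq_univ_iff_forall.mpr
      (fun a => List.mem_toFinset.mpr (l.2.2.1 a))]
    rfl
  let φ : G → (ι → Fin k) × List.Vector (Fin k) (Fintype.card ι) := fun l =>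
    (c l, ⟨l.1.map (c l), by rw [List.length_map, hlen]⟩)
  have hφ : Function.Injective φ := by
    intro l l' h
    have h1 : c l = c l' := congrArg Prod.fst h
    have h2 : l.1.map (c l) = l'.1.map (c l') := congrArg (fun p => p.2.1) h
    apply Subtype.ext
    apply kc_recon (c l) l.1 l'.1 (by rw [h2, h1])
    intro j
    apply List.Pairwise.eq_of_mem_iff (r := fun a b : ι => a < b)
    · rw [List.pairwise_filter]
      refine (hc l).imp ?_
      intro a b hab ha hb
      simp at ha hb
      exact hab (by rw [ha, hb])
    · rw [List.pairwise_filter]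
      refine (hc l').imp ?_
      intro a b hab ha hb
      simp at ha hb
      exact hab (by rw [← h1, ha, hb])
    · intro a
      simp [l.2.2.1 a, l'.2.2.1 a]
  have : Fintype G := Fintype.ofInjective φ hφ
  refine ⟨G, inferInstance, fun l => (l.1.map X).prod, ?_, ?_⟩
  · refine (Fintype.card_le_of_injective φ hφ).trans ?_
    rw [Fintype.card_prod, card_vector, Fintype.card_fun, Fintype.card_fin]
  · intro l hl hcl
    refine Submodule.span_mono ?_ (kc_span k α hα hid X l)
    rintro b ⟨l', h1, h2, rfl⟩
    exact ⟨⟨l', h1.nodup_iff.mpr hl, fun a => h1.mem_iff.mpr (hcl a), h2⟩, rfl⟩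

theorem kc_factorial (c : ℕ) : ∃ d : ℕ, 1 ≤ d ∧ c ^ d < d.factorial := by
  have h := FloorSemiring.tendsto_pow_div_factorial_atTop (c : ℝ)
  have h1 := (h.eventually (gt_mem_nhds (show (0:ℝ) < 1 by norm_num))).and
    (Filter.eventually_ge_atTop 1)
  obtain ⟨d, hd, hd1⟩ := h1.exists
  refine ⟨d, hd1, ?_⟩
  rw [div_lt_one (by positivity)] at hd
  exact_mod_cast hd

theorem kc_pi_prod {A R : Type} [Ring R] (l : List (A → R)) (z : A) :
    l.prod z = (l.map fun f => f z).prod :=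
  map_list_prod (Pi.evalRingHom (fun _ : A => R) z) l

theorem kc_exchange0 {F R : Type} [Field F] [Ring R] [Algebra F R]
    (k : ℕ) (α : Equiv.Perm (Fin k) → F) (hα : α 1 ≠ 0)
    (hid : ∀ x : Fin k → R, ∑ σ, α σ • (List.ofFn fun i => x (σ i)).prod = 0) :
    ∃ (d : ℕ) (c : Equiv.Perm (Fin d) → F), (∃ ρ, c ρ ≠ 0) ∧ ∀ h t W : Fin d → R,
      ∑ ρ, c ρ • ∑ τ : Equiv.Perm (Fin d), ((Equiv.Perm.sign τ : ℤˣ) : ℤ) •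
        (List.ofFn fun j => h (τ j) * t (ρ (τ j)) * W j).prod = 0 := by
  classical
  obtain ⟨d, hd1, hd⟩ := kc_factorial (k ^ 6)
  let X : Fin d × Fin 3 → ((Fin d × Fin 3 → R) → R) := fun i z => z i
  let _ : LinearOrder (Fin d × Fin 3) := LinearOrder.lift' (Fintype.equivFin (Fin d × Fin 3))
    (Fintype.equivFin (Fin d × Fin 3)).injective
  have hB : ∀ x : Fin k → ((Fin d × Fin 3 → R) → R), ∑ σ, α σ • (List.ofFn fun i => x (σ i)).prod = 0 := by
    intro x
    funext z
    have := hid (fun i => x i z)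
    simp only [Finset.sum_apply, Pi.smul_apply, Pi.zero_apply]
    rw [← this]
    apply Finset.sum_congr rfl
    intro σ _
    congr 1
    rw [kc_pi_prod, List.map_ofFn]
    rfl
  obtain ⟨T, hT, g, hcard, hspan⟩ := kc_finrank_aux (ι := Fin d × Fin 3) k α hα hB X
  let L : Equiv.Perm (Fin d) → Equiv.Perm (Fin d) → List (Fin d × Fin 3) := fun ρ τ =>
    (List.finRange d).flatMap fun j => [(τ j, 0), (ρ (τ j), 1), (j, 2)]
  have hLc : ∀ ρ τ, ∀ a, a ∈ L ρ τ := by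
    rintro ρ τ ⟨i, s⟩
    simp only [L, List.mem_flatMap, List.mem_finRange, true_and]
    fin_cases s
    · exact ⟨τ.symm i, by simp⟩
    · exact ⟨τ.symm (ρ.symm i), by simp⟩
    · exact ⟨i, by simp⟩
  have hLn : ∀ ρ τ, (L ρ τ).Nodup := by
    intro ρ τ
    rw [← Multiset.coe_nodup]
    have h1 : (L ρ τ).toFinset = Finset.univ := Finset.eq_univ_iff_forall.mpr
      (fun a => List.mem_toFinset.mpr (hLc ρ τ a))
    have h2 : (L ρ τ).toFinset.card = (L ρ τ).length := by
      rw [h1, Finset.card_univ]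
      simp [L, List.length_flatMap]
    exact Multiset.toFinset_card_eq_card_iff_nodup.mp h2
  have hLp : ∀ ρ τ (z : Fin d × Fin 3 → R), (((L ρ τ).map X).prod : (Fin d × Fin 3 → R) → R) z =
      (List.ofFn fun j => z (τ j, 0) * z (ρ (τ j), 1) * z (j, 2)).prod := by
    intro ρ τ z
    rw [kc_pi_prod]
    simp only [L, List.ofFn_eq_map]
    generalize List.finRange d = l
    induction l with
    | nil => rfl
    | cons a l ih =>
      simp only [List.flatMap_cons, List.map_append, List.prod_append, List.map_cons,
        List.prod_cons, ih]
      simp [X, mul_assoc]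
  let M : Equiv.Perm (Fin d) → ((Fin d × Fin 3 → R) → R) := fun ρ =>
    ∑ τ : Equiv.Perm (Fin d), ((Equiv.Perm.sign τ : ℤˣ) : ℤ) • ((L ρ τ).map X).prod
  have hM : ∀ ρ, M ρ ∈ Submodule.span F (Set.range g) := by
    intro ρ
    apply Submodule.sum_mem
    intro τ _
    apply zsmul_mem
    exact hspan _ (hLn ρ τ) (hLc ρ τ)
  have hnot : ¬ LinearIndependent F M := by
    intro hli
    have h1 : LinearIndependent F (fun ρ => (⟨M ρ, hM ρ⟩ : Submodule.span F (Set.range g))) :=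
      LinearIndependent.of_comp (Submodule.span F (Set.range g)).subtype hli
    have : Module.Finite F (Submodule.span F (Set.range g)) :=
      Module.Finite.span_of_finite F (Set.finite_range g)
    have h2 := h1.fintype_card_le_finrank
    have h3 := finrank_range_le_card (R := F) g
    rw [Set.finrank] at h3
    rw [Fintype.card_perm, Fintype.card_fin] at h2
    have h4 : Fintype.card (Fin d × Fin 3) = d * 3 := by simp
    rw [h4] at hcard
    have h5 : k ^ (d * 3) * k ^ (d * 3) = (k ^ 6) ^ d := by
      rw [← pow_add, ← pow_mul]; congr 1; ring
    omega
  obtain ⟨c, hc0, hc1⟩ := Fintype.not_linearIndependent_iff.mp hnot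
  refine ⟨d, c, hc1, ?_⟩
  intro h t W
  have h1 := congrFun hc0 (fun p => if p.2 = 0 then h p.1 else if p.2 = 1 then t p.1 else W p.1)
  simp only [Finset.sum_apply, Pi.smul_apply, Pi.zero_apply, M, hLp] at h1
  simpa using h1

theorem kc_exchange {F R : Type} [Field F] [Ring R] [Algebra F R]
    (hPI : ∃ f : FreeAlgebra F ℕ, f ≠ 0 ∧ ∀ a : ℕ → R, (FreeAlgebra.lift F a) f = 0) :
    ∃ (d : ℕ) (c : Equiv.Perm (Fin d) → F), c 1 ≠ 0 ∧ ∀ h t W : Fin d → R,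
      ∑ ρ, c ρ • ∑ τ : Equiv.Perm (Fin d), ((Equiv.Perm.sign τ : ℤˣ) : ℤ) •
        (List.ofFn fun j => h (τ j) * t (ρ (τ j)) * W j).prod = 0 := by
  obtain ⟨k, α, hα, hid⟩ := kc_multilinear hPI
  obtain ⟨d, c, ⟨ρ0, hρ0⟩, hc⟩ := kc_exchange0 k α hα hid
  refine ⟨d, fun ρ => c (ρ0 * ρ), by simpa using hρ0, ?_⟩
  intro h t W
  have h1 := hc h (fun i => t (ρ0⁻¹ i)) W
  rw [← Equiv.sum_comp (Equiv.mulLeft ρ0)] at h1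
  simpa using h1

/-- The Capelli polynomial as an alternating map in `x`. -/
noncomputable def kcCap (F : Type) {R : Type} [Field F] [Ring R] [Algebra F R] {m : ℕ}
    (y : Fin (m + 1) → R) : R [⋀^Fin m]→ₗ[F] R :=
  MultilinearMap.alternatization
    ((LinearMap.mulLeft F (y 0)).compMultilinearMap
      ((MultilinearMap.mkPiAlgebraFin F m R).compLinearMap
        (fun i => LinearMap.mulRight F (y i.succ))))

theorem kcCap_apply (F : Type) {R : Type} [Field F] [Ring R] [Algebra F R] {m : ℕ}
    (y : Fin (m + 1) → R) (x : Fin m → R) :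
    kcCap F y x = ∑ σ : Equiv.Perm (Fin m), ((Equiv.Perm.sign σ : ℤˣ) : ℤ) •
          (y 0 * (List.ofFn fun i : Fin m => x (σ i) * y i.succ).prod) := by
  rw [kcCap, MultilinearMap.alternatization_apply]
  rfl

theorem kc_split {R : Type} [Ring R] {d : ℕ} (L : List ((R ⊕ Fin d) × R)) :
    ∃ (W0 : R) (P : List (Fin d × R)), P.map Prod.fst = L.filterMap (fun p => p.1.getRight?) ∧
      ∀ u : Fin d → R, (L.map fun p => Sum.elim id u p.1 * p.2).prod =
        W0 * (P.map fun p => u p.1 * p.2).prod := by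
  induction L with
  | nil => exact ⟨1, [], rfl, by simp⟩
  | cons a L ih =>
    obtain ⟨W0, P, h1, h2⟩ := ih
    obtain ⟨a | j, b⟩ := a
    · exact ⟨a * b * W0, P, by rw [h1]; rfl, fun u => by simp [h2, mul_assoc]⟩
    · exact ⟨1, (j, b * W0) :: P, by rw [List.map_cons, h1]; rfl, fun u => by simp [h2, mul_assoc]⟩

theorem kc_split' {R : Type} [Ring R] {d : ℕ} (L : List ((R ⊕ Fin d) × R))
    (hn : (L.filterMap (fun p => p.1.getRight?)).Nodup)
    (hc : ∀ j, j ∈ L.filterMap (fun p => p.1.getRight?)) :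
    ∃ (W0 : R) (s : Equiv.Perm (Fin d)) (W : Fin d → R),
      ∀ u : Fin d → R, (L.map fun p => Sum.elim id u p.1 * p.2).prod =
        W0 * (List.ofFn fun j => u (s j) * W j).prod := by
  obtain ⟨W0, P, h1, h2⟩ := kc_split L
  rw [← h1] at hn hc
  have hlen : P.length = d := by
    have h3 : (P.map Prod.fst).toFinset = Finset.univ := Finset.eq_univ_iff_forall.mpr
      (fun a => List.mem_toFinset.mpr (hc a))
    have h4 := List.toFinset_card_of_nodup hn
    rw [h3, Finset.card_univ, Fintype.card_fin, List.length_map] at h4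
    exact h4.symm
  obtain ⟨p, rfl⟩ : ∃ p : Fin d → Fin d × R, P = List.ofFn p := by
    refine ⟨fun i => P.get (Fin.cast hlen.symm i), ?_⟩
    apply List.ext_get
    · simp [hlen]
    · intro n h h'
      simp
  rw [List.map_ofFn, List.nodup_ofFn] at hn
  refine ⟨W0, Equiv.ofBijective _ (Finite.injective_iff_bijective.mp hn), fun j => (p j).2, ?_⟩
  intro u
  rw [h2, List.map_ofFn]
  rfl

theorem kc_cap_exchange {F R : Type} [Field F] [CharZero F] [Ring R] [Algebra F R]
    {d : ℕ} {c : Equiv.Perm (Fin d) → F}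
    (hc : ∀ h t W : Fin d → R,
      ∑ ρ, c ρ • ∑ τ : Equiv.Perm (Fin d), ((Equiv.Perm.sign τ : ℤˣ) : ℤ) •
        (List.ofFn fun j => h (τ j) * t (ρ (τ j)) * W j).prod = 0)
    {m : ℕ} (y : Fin (m + 1) → R) (e : Fin d ↪ Fin m) (v : Fin m → R) (h t : Fin d → R) :
    ∑ ρ : Equiv.Perm (Fin d), c ρ •
      kcCap F y (Function.extend e (fun i => h i * t (ρ i)) v) = 0 := by
  classical
  let V : Equiv.Perm (Fin d) → Fin m → R := fun ρ =>
    Function.extend e (fun i => h i * t (ρ i)) v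
  let mon : (Fin m → R) → R := fun x => y 0 * (List.ofFn fun i : Fin m => x i * y i.succ).prod
  -- the inner bracket vanishes
  have hbr : ∀ σ : Equiv.Perm (Fin m), ∑ ρ : Equiv.Perm (Fin d), c ρ •
      ∑ τ : Equiv.Perm (Fin d), ((Equiv.Perm.sign τ : ℤˣ) : ℤ) •
        mon (fun i => V ρ (τ.viaFintypeEmbedding e (σ i))) = 0 := by
    intro σ
    let lab : Fin m → R ⊕ Fin d := fun i =>
      if hi : ∃ j, e j = i then Sum.inr hi.choose else Sum.inl (v i)
    have hlab1 : ∀ j, lab (e j) = Sum.inr j := by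
      intro j
      have hi : ∃ j', e j' = e j := ⟨j, rfl⟩
      simp only [lab, dif_pos hi]
      congr 1
      exact e.injective hi.choose_spec
    have hlab2 : ∀ i j, lab i = Sum.inr j → e j = i := by
      intro i j hij
      by_cases hi : ∃ j', e j' = i
      · obtain ⟨j', rfl⟩ := hi
        rw [hlab1] at hij
        rw [Sum.inr.inj hij]
      · simp [lab, dif_neg hi] at hij
    have hV : ∀ (ρ τ : Equiv.Perm (Fin d)) (i : Fin m), V ρ (τ.viaFintypeEmbedding e i) =
        Sum.elim id (fun j => h (τ j) * t (ρ (τ j))) (lab i) := by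
      intro ρ τ i
      by_cases hi : ∃ j, e j = i
      · obtain ⟨j, rfl⟩ := hi
        rw [Equiv.Perm.viaFintypeEmbedding_apply_image, hlab1]
        simp only [V, e.injective.extend_apply, Sum.elim_inr]
      · rw [Equiv.Perm.viaFintypeEmbedding_apply_notMem_range _ _ (by simpa using hi)]
        simp only [V, Function.extend_apply' _ _ _ hi, lab, dif_neg hi]
        rfl
    obtain ⟨W0, s, W, hW⟩ := kc_split' (List.ofFn fun i => (lab (σ i), y i.succ))
      (by
        rw [List.ofFn_eq_map, List.filterMap_map]
        apply List.Nodup.filterMap _ (List.nodup_finRange m)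
        intro a a' b hb hb'
        simp only [Function.comp, Option.mem_def, Sum.getRight?_eq_some_iff] at hb hb'
        apply σ.injective
        rw [← hlab2 _ _ hb, ← hlab2 _ _ hb'])
      (by
        intro j
        rw [List.mem_filterMap]
        refine ⟨(lab (e j), y (σ.symm (e j)).succ), ?_, by simp [hlab1]⟩
        rw [List.mem_ofFn]
        exact ⟨σ.symm (e j), by simp⟩)
    have hmon : ∀ ρ τ : Equiv.Perm (Fin d), mon (fun i => V ρ (τ.viaFintypeEmbedding e (σ i))) =
        y 0 * (W0 * (List.ofFn fun j => h (τ (s j)) * t (ρ (τ (s j))) * W j).prod) := by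
      intro ρ τ
      have := hW (fun j => h (τ j) * t (ρ (τ j)))
      rw [← this]
      simp only [mon, hV, List.map_ofFn]
      rfl
    have h1 := hc h t W
    have h2 : ∀ ρ : Equiv.Perm (Fin d), (∑ τ : Equiv.Perm (Fin d),
        ((Equiv.Perm.sign τ : ℤˣ) : ℤ) • mon (fun i => V ρ (τ.viaFintypeEmbedding e (σ i))))
        = y 0 * (W0 * (((Equiv.Perm.sign s : ℤˣ) : ℤ) • ∑ τ : Equiv.Perm (Fin d),
          ((Equiv.Perm.sign τ : ℤˣ) : ℤ) •
        (List.ofFn fun j => h (τ j) * t (ρ (τ j)) * W j).prod)) := by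
      intro ρ
      conv_rhs => rw [← Equiv.sum_comp (Equiv.mulRight s)]
      simp only [hmon, Finset.smul_sum, Finset.mul_sum]
      apply Finset.sum_congr rfl
      intro τ _
      simp only [Equiv.coe_mulRight, Equiv.Perm.sign_mul, Equiv.Perm.mul_apply]
      rw [smul_smul, mul_smul_comm, mul_smul_comm]
      congr 1
      rw [Units.val_mul]
      rcases Int.units_eq_one_or (Equiv.Perm.sign s) with h | h <;> simp [h]
    simp only [h2, ← mul_smul_comm]
    rw [← Finset.mul_sum, ← Finset.mul_sum]
    simp only [smul_comm (c _) (((Equiv.Perm.sign s : ℤˣ) : ℤ))]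
    rw [← Finset.smul_sum, h1]
    simp
  have hcap : ∀ ρ, kcCap F y (V ρ) = ∑ σ : Equiv.Perm (Fin m),
      ((Equiv.Perm.sign σ : ℤˣ) : ℤ) • mon (fun i => V ρ (σ i)) := fun ρ => kcCap_apply F y _
  have hcap2 : ∀ ρ (τ : Equiv.Perm (Fin d)), kcCap F y (V ρ) = ∑ σ : Equiv.Perm (Fin m),
      (((Equiv.Perm.sign σ : ℤˣ) : ℤ) * ((Equiv.Perm.sign τ : ℤˣ) : ℤ)) •
        mon (fun i => V ρ (τ.viaFintypeEmbedding e (σ i))) := by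
    intro ρ τ
    rw [hcap, ← Equiv.sum_comp (Equiv.mulLeft (τ.viaFintypeEmbedding e))]
    apply Finset.sum_congr rfl
    intro σ _
    simp [Equiv.Perm.sign_mul, Equiv.Perm.viaFintypeEmbedding_sign, mul_comm]
  have htot : ((d.factorial : ℕ) : F) • ∑ ρ : Equiv.Perm (Fin d), c ρ • kcCap F y (V ρ) = 0 := by
    have h1 : ((d.factorial : ℕ) : F) • ∑ ρ : Equiv.Perm (Fin d), c ρ • kcCap F y (V ρ)
        = ∑ τ : Equiv.Perm (Fin d), ∑ ρ : Equiv.Perm (Fin d), c ρ • kcCap F y (V ρ) := by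
      rw [Finset.sum_const, Finset.card_univ, Fintype.card_perm, Fintype.card_fin,
        Nat.cast_smul_eq_nsmul]
    rw [h1, Finset.sum_comm]
    have h2 : ∀ ρ : Equiv.Perm (Fin d), ∑ τ : Equiv.Perm (Fin d), c ρ • kcCap F y (V ρ)
        = ∑ σ : Equiv.Perm (Fin m), ((Equiv.Perm.sign σ : ℤˣ) : ℤ) • (c ρ •
      ∑ τ : Equiv.Perm (Fin d), ((Equiv.Perm.sign τ : ℤˣ) : ℤ) •
        mon (fun i => V ρ (τ.viaFintypeEmbedding e (σ i)))) := by
      intro ρ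
      rw [Finset.sum_congr rfl (fun τ _ => congrArg (fun z => c ρ • z) (hcap2 ρ τ))]
      simp only [Finset.smul_sum]
      rw [Finset.sum_comm]
      apply Finset.sum_congr rfl
      intro σ _
      apply Finset.sum_congr rfl
      intro τ _
      rw [mul_smul, smul_comm (c ρ)]
    rw [Finset.sum_congr rfl (fun ρ _ => h2 ρ), Finset.sum_comm]
    apply Finset.sum_eq_zero
    intro σ _
    rw [← Finset.smul_sum, hbr, smul_zero]
  have hfac : ((d.factorial : ℕ) : F) ≠ 0 := by exact_mod_cast d.factorial_ne_zero
  exact (smul_eq_zero.mp htot).resolve_left hfac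

theorem kc_rearr {d : ℕ} (a b : Fin d → ℕ) (ha : StrictMono a) (hb : StrictAnti b)
    (ρ : Equiv.Perm (Fin d)) (hρ : ρ ≠ 1) :
    ∑ i, (a i + b i) ^ 2 < ∑ i, (a i + b (ρ i)) ^ 2 := by
  have hav : Antivary a b := by
    intro i j hij
    exact ha.monotone (hb.lt_iff_gt.mp hij).le
  have h1 : ¬ Antivary a (b ∘ ρ) := by
    intro h
    apply hρ
    have hmono : StrictMono ρ := by
      intro i j hij
      by_contra hcon
      have hlt : ρ j < ρ i := lt_of_le_of_ne (not_lt.mp hcon)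
        (fun he => hij.ne' (ρ.injective he))
      have := h (i := i) (j := j) (hb hlt)
      exact absurd (ha hij) (not_lt.mpr this)
    have h2 : (ρ : Fin d → Fin d) = id := by
      apply (StrictMono.range_inj hmono strictMono_id).mp
      simp [ρ.surjective.range_eq]
    ext i
    simp [h2]
  have h3 := hav.sum_mul_lt_sum_mul_comp_perm_iff.mpr h1
  simp only [smul_eq_mul] at h3
  have h4 : ∑ i, b (ρ i) ^ 2 = ∑ i, b i ^ 2 := Equiv.sum_comp ρ (fun i => b i ^ 2)
  simp only [add_sq, Finset.sum_add_distrib, mul_assoc, ← Finset.mul_sum]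
  omega

theorem kc_sum_emb {d m : ℕ} (e : Fin d ↪ Fin m) (g : Fin m → ℕ) :
    ∑ i, g i = ∑ j, g (e j) + ∑ i ∈ Finset.univ \ Finset.univ.map e, g i := by
  rw [← Finset.sum_map Finset.univ e g, add_comm]
  exact (Finset.sum_sdiff (Finset.subset_univ _)).symm

theorem kc_words {F R S : Type} [Field F] [CharZero F] [Ring R] [Algebra F R] [Finite S]
    (val : S → R) {d : ℕ} {c : Equiv.Perm (Fin d) → F} (hc1 : c 1 ≠ 0)
    (hc : ∀ h t W : Fin d → R,
      ∑ ρ, c ρ • ∑ τ : Equiv.Perm (Fin d), ((Equiv.Perm.sign τ : ℤˣ) : ℤ) •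
        (List.ofFn fun j => h (τ j) * t (ρ (τ j)) * W j).prod = 0)
    {m : ℕ} (hm : (List.finite_length_lt S d).toFinset.card + d ≤ m) (y : Fin (m + 1) → R) :
    ∀ (n : ℕ) (w : Fin m → List S),
      (∑ i, (w i).length) ^ 2 - ∑ i, (w i).length ^ 2 = n →
      kcCap F y (fun i => ((w i).map val).prod) = 0 := by
  classical
  intro n
  induction n using Nat.strong_induction_on with
  | _ n ih =>
  intro w hw
  by_cases hlong : d ≤ (Finset.univ.filter (fun i => d ≤ (w i).length)).card
  · let e0 := Finset.orderEmbOfCardLe _ hlong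
    have he0 : ∀ j, d ≤ (w (e0 j)).length := by
      intro j
      have := Finset.orderEmbOfCardLe_mem _ hlong j
      simpa using this
    let π := Tuple.sort (fun j => (w (e0 j)).length)
    let e : Fin d ↪ Fin m := π.toEmbedding.trans e0.toEmbedding
    have hmono : Monotone (fun j => (w (e j)).length) :=
      Tuple.monotone_sort (fun j => (w (e0 j)).length)
    have he : ∀ j, d ≤ (w (e j)).length := fun j => he0 (π j)
    let b : Fin d → ℕ := fun i => d - 1 - i.val
    let a : Fin d → ℕ := fun i => (w (e i)).length - b i
    have hab : ∀ i, a i + b i = (w (e i)).length := by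
      intro i
      have := he i
      simp only [a, b]; omega
    have hb : StrictAnti b := by
      intro i j hij
      simp only [b]
      have := Fin.lt_def.mp hij
      omega
    have ha : StrictMono a := by
      intro i j hij
      have h1 : (w (e i)).length ≤ (w (e j)).length := hmono hij.le
      have h2 := hb hij
      have h3 := hab i
      have h4 := hab j
      omega
    let h : Fin d → List S := fun i => (w (e i)).take (a i)
    let t : Fin d → List S := fun i => (w (e i)).drop (a i)
    have hh : ∀ i, (h i).length = a i := by
      intro i
      have := hab i
      simp only [h, List.length_take]; omega
    have ht : ∀ i, (t i).length = b i := by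
      intro i
      have := hab i
      simp only [t, List.length_drop]; omega
    let w' : Equiv.Perm (Fin d) → Fin m → List S := fun ρ =>
      Function.extend e (fun i => h i ++ t (ρ i)) w
    have hw'e : ∀ ρ j, w' ρ (e j) = h j ++ t (ρ j) := fun ρ j => e.injective.extend_apply _ _ _
    have hw'n : ∀ ρ i, i ∈ Finset.univ \ Finset.univ.map e → w' ρ i = w i := by
      intro ρ i hi
      apply Function.extend_apply'
      simpa using hi
    have hw'1 : w' 1 = w := by
      funext i
      by_cases hi : ∃ j, e j = i
      · obtain ⟨j, rfl⟩ := hi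
        rw [hw'e]
        simp [h, t]
      · exact Function.extend_apply' _ _ _ hi
    have hval : ∀ ρ, (fun i => ((w' ρ i).map val).prod) =
        Function.extend e (fun i => ((h i).map val).prod * ((t (ρ i)).map val).prod)
          (fun i => ((w i).map val).prod) := by
      intro ρ
      funext i
      by_cases hi : ∃ j, e j = i
      · obtain ⟨j, rfl⟩ := hi
        rw [hw'e, e.injective.extend_apply]
        simp
      · rw [Function.extend_apply' _ _ _ hi]
        simp only [w']
        rw [Function.extend_apply' _ _ _ hi]
    have hex := kc_cap_exchange hc y e (fun i => ((w i).map val).prod)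
      (fun i => ((h i).map val).prod) (fun i => ((t i).map val).prod)
    simp only [← hval] at hex
    have hz : ∀ ρ, ρ ≠ 1 → kcCap F y (fun i => ((w' ρ i).map val).prod) = 0 := by
      intro ρ hρ
      refine ih _ ?_ (w' ρ) rfl
      have hs1 : ∑ i, (w' ρ i).length = ∑ i, (w i).length := by
        rw [kc_sum_emb e, kc_sum_emb e (fun i => (w i).length)]
        congr 1
        · simp only [hw'e, List.length_append, hh, ht, ← hab, Finset.sum_add_distrib]
          congr 1
          exact Equiv.sum_comp ρ b
        · exact Finset.sum_congr rfl (fun i hi => by rw [hw'n ρ i hi])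
      have hs2 : ∑ i, (w i).length ^ 2 < ∑ i, (w' ρ i).length ^ 2 := by
        rw [kc_sum_emb e, kc_sum_emb e (fun i => (w' ρ i).length ^ 2)]
        apply add_lt_add_of_lt_of_le
        · simp only [hw'e, List.length_append, hh, ht, ← hab]
          exact kc_rearr a b ha hb ρ hρ
        · exact (Finset.sum_congr rfl (fun i hi => by rw [hw'n ρ i hi])).le
      have hs3 : ∑ i, (w' ρ i).length ^ 2 ≤ (∑ i, (w' ρ i).length) ^ 2 :=
        Finset.sum_sq_le_sq_sum_of_nonneg (fun _ _ => Nat.zero_le _)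
      rw [hs1] at hs3 ⊢
      omega
    rw [Finset.sum_eq_single 1 (fun ρ _ hρ => by rw [hz ρ hρ, smul_zero]) (by simp), hw'1] at hex
    exact (smul_eq_zero.mp hex).resolve_left hc1
  · push Not at hlong
    have hcard := Finset.card_filter_add_card_filter_not (s := (Finset.univ : Finset (Fin m)))
      (fun i => d ≤ (w i).length)
    rw [Finset.card_univ, Fintype.card_fin] at hcard
    have hlt : (List.finite_length_lt S d).toFinset.card <
        (Finset.univ.filter (fun i => ¬ d ≤ (w i).length)).card := by omega
    obtain ⟨i, -, j, -, hij, hwij⟩ := Finset.exists_ne_map_eq_of_card_lt_of_maps_to hlt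
      (f := w) (by
        intro i hi
        simpa using hi)
    exact (kcCap F y).map_eq_zero_of_eq _ (by simp only [hwij]) hij

/-- **Kemer: every finitely generated PI algebra satisfies a Capelli identity.**
If `F` has characteristic `0` and `R` is a finitely generated `F`-algebra satisfying a
nonzero polynomial identity, then there is `m ≥ 1` such that `R` satisfies the Capelli
identity `C_m`: for all `y₀, …, y_m, x₁, …, x_m ∈ R`,
`∑ σ ∈ S_m, sgn σ • y₀ x_{σ(1)} y₁ x_{σ(2)} ⋯ y_{m-1} x_{σ(m)} y_m = 0`. -/
theorem kemer_capelli (F : Type) [Field F] [CharZero F]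
    (R : Type) [Ring R] [Algebra F R] (hfg : Algebra.FiniteType F R)
    (hPI : ∃ f : FreeAlgebra F ℕ, f ≠ 0 ∧ ∀ a : ℕ → R, (FreeAlgebra.lift F a) f = 0) :
    ∃ m : ℕ, 1 ≤ m ∧ ∀ (y : Fin (m + 1) → R) (x : Fin m → R),
      ∑ σ : Equiv.Perm (Fin m),
        ((Equiv.Perm.sign σ : ℤˣ) : ℤ) •
          (y 0 * (List.ofFn fun i : Fin m => x (σ i) * y i.succ).prod) = 0 := by
  classical
  obtain ⟨d, c, hc1, hc⟩ := kc_exchange hPI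
  obtain ⟨s, hs⟩ := hfg.out
  refine ⟨(List.finite_length_lt s d).toFinset.card + d + 1, by omega, ?_⟩
  intro y x
  rw [← kcCap_apply F y x]
  let g : List s → R := fun l => (l.map Subtype.val).prod
  have hspan : ∀ r : R, r ∈ LinearMap.range (Finsupp.linearCombination F g) := by
    intro r
    rw [Finsupp.range_linearCombination]
    have h1 : r ∈ Subalgebra.toSubmodule (Algebra.adjoin F (s : Set R)) := by
      rw [hs]; trivial
    rw [Algebra.adjoin_eq_span] at h1
    refine Submodule.span_mono ?_ h1
    intro z hz
    obtain ⟨l, hl, rfl⟩ := Submonoid.exists_list_of_mem_closure hz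
    refine ⟨l.attach.map (fun p => ⟨p.1, hl p.1 p.2⟩), ?_⟩
    simp only [g, List.map_map]
    exact congrArg List.prod (List.attach_map_subtype_val l)
  have hzero : (kcCap F y).toMultilinearMap.compLinearMap
      (fun _ => Finsupp.linearCombination F g) = 0 := by
    apply Module.Basis.ext_multilinear (fun _ => Finsupp.basisSingleOne)
    intro w
    have := kc_words (fun z : s => (z : R)) hc1 hc (Nat.le_succ _) y _ w rfl
    simpa [g] using this
  choose p hp using hspan
  have h2 := congrArg (fun M => M (fun i => p (x i))) hzero
  simpa [hp] using h2
end
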